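/- Let n be a natural number and p a prime with p ≥ n, and let λ_1 ≥ ⋯ ≥ λ_t be a partition of n. Let 𝓚 be a transversal for the isomorphism classes of nilpotent n-dimensional Lie algebras over ℤ/pℤ. For K ∈ 𝓚 let C(K,λ) be the set of (ℤ/pℤ)-linear endomorphisms σ of K such that σ^n = 0, the image of σ is contained in the center Z(K), σ(⁅x,y⁆) = ⁅σ(x), y⁆ for all x,y ∈ K, and the Jordan block sizes of σ are given by λ, i.e. dim ker(σ^i) = ∑_{j=1}^t min(λ_j, i) for all i ≥ 0. The group Aut_{Lie}(K) of Lie algebra automorphisms of K acts on C(K,λ) by conjugation. Then the number of isomorphism classes of groups P of order p^n of type (λ_1,…,λ_t) — meaning |{x ∈ P : x^{p^i}=1}| = p^{∑_j min(λ_j,i)} for all i — in which ⁅x,y⁆^p = 1 for all x,y ∈ P, equals the rational number ∑_{K ∈ 𝓚} ∑_{σ ∈ C(K,λ)} 1/|σ^{Aut_{Lie}(K)}|. -/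

import Mathlib

set_option synthInstance.maxHeartbeats 1000000

open scoped commutatorElement in
/-- Bundled groups `P` of order `p ^ n`, of type `(λ₁, …, λ_t)` (i.e. with
`|{x : x ^ (p ^ i) = 1}| = p ^ ∑ⱼ min (λⱼ) i` for all `i`), in which `⁅x, y⁆ ^ p = 1`. -/
def TypedGroup (p n t : ℕ) (lam : Fin t → ℕ) : Type 1 :=
  { q : Σ G : Type, Group G //
      letI := q.2
      Nat.card q.1 = p ^ n ∧
        (∀ i : ℕ, Nat.card {x : q.1 // x ^ p ^ i = 1} = p ^ (∑ j, min (lam j) i)) ∧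
        ∀ x y : q.1, ⁅x, y⁆ ^ p = 1 }

/-- Group isomorphism between two bundled groups. -/
def typedGroupIsoRel (p n t : ℕ) (lam : Fin t → ℕ)
    (q₁ q₂ : TypedGroup p n t lam) : Prop :=
  letI := q₁.1.2; letI := q₂.1.2
  Nonempty (q₁.1.1 ≃* q₂.1.1)

/-- For an `n`-dimensional Lie algebra `K` over `ℤ/pℤ` and a partition `λ` of `n`, the set
`C(K, λ)` of linear endomorphisms `σ` with `σ ^ n = 0`, image contained in the centre `Z(K)`,
`σ⁅x, y⁆ = ⁅σ x, y⁆`, and Jordan block sizes given by `λ`. -/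
def CSet (p n t : ℕ) (lam : Fin t → ℕ) (K : Type) [LieRing K] [LieAlgebra (ZMod p) K] :
    Set (Module.End (ZMod p) K) :=
  {σ | σ ^ n = 0 ∧ (∀ x y : K, ⁅σ x, y⁆ = 0) ∧ (∀ x y : K, σ ⁅x, y⁆ = ⁅σ x, y⁆) ∧
    ∀ i : ℕ, Module.finrank (ZMod p) (LinearMap.ker (σ ^ i)) = ∑ j, min (lam j) i}

/-- The orbit `σ^{Aut_Lie(K)}` of `σ` under conjugation by Lie algebra automorphisms of `K`. -/
def lieAutOrbit (p : ℕ) (K : Type) [LieRing K] [LieAlgebra (ZMod p) K]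
    (σ : Module.End (ZMod p) K) : Set (Module.End (ZMod p) K) :=
  {τ | ∃ α : K ≃ₗ⁅ZMod p⁆ K, ∀ x : K, τ x = α (σ (α.symm x))}



namespace Laz
open Finset

/-- inverse factorial modulo `p ^ N`, as a natural number -/
def e (p N k : ℕ) : ℕ := (((k.factorial : ZMod (p ^ N)))⁻¹).val

/-- natural number inverse of `k` mod `p ^ N`. -/
def iv (p N k : ℕ) : ℕ := (((k : ZMod (p ^ N)))⁻¹).val

lemma iv_mul {p N k : ℕ} (hp : p.Prime) (hk0 : k ≠ 0) (hk : k < p) : iv p N k * k ≡ 1 [MOD p ^ N] := by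
  have : NeZero (p ^ N) := ⟨pow_ne_zero _ hp.ne_zero⟩
  rw [← ZMod.natCast_eq_natCast_iff, iv]
  push_cast
  rw [ZMod.natCast_zmod_val, mul_comm, ZMod.coe_mul_inv_eq_one]
  apply Nat.Coprime.pow_right
  exact (Nat.Coprime.symm ((Nat.Prime.coprime_iff_not_dvd hp).2 (fun h => absurd (Nat.le_of_dvd (Nat.pos_of_ne_zero hk0) h) (by omega))))

lemma e_cast {p N k : ℕ} (hp : p.Prime) : ((e p N k : ℕ) : ZMod (p ^ N)) = ((k.factorial : ZMod (p ^ N)))⁻¹ := by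
  have : NeZero (p ^ N) := ⟨pow_ne_zero _ hp.ne_zero⟩
  rw [e, ZMod.natCast_zmod_val]

lemma fact_mul_e {p N k : ℕ} (hp : p.Prime) (hk : k < p) :
    (k.factorial : ZMod (p ^ N)) * (e p N k : ZMod (p ^ N)) = 1 := by
  rw [e_cast hp, ZMod.coe_mul_inv_eq_one]
  apply Nat.Coprime.pow_right
  exact ((Nat.Prime.coprime_iff_not_dvd hp).2 (fun h => by rw [hp.dvd_factorial] at h; omega)).symm

lemma e_add {p N i j : ℕ} (hp : p.Prime) (h : i + j < p) :
    e p N (i + j) * (i + j).choose i ≡ e p N i * e p N j [MOD p ^ N] := by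
  rw [← ZMod.natCast_eq_natCast_iff]
  push_cast
  have h1 := fact_mul_e (N := N) hp h
  have h2 := fact_mul_e (N := N) hp (show i < p by omega)
  have h3 := fact_mul_e (N := N) hp (show j < p by omega)
  have h4 : ((i + j).choose i : ZMod (p ^ N)) * i.factorial * j.factorial = (i + j).factorial := by
    have := Nat.add_choose_mul_factorial_mul_factorial i j
    rw [← Nat.choose_symm_add] at this
    exact_mod_cast congrArg (Nat.cast : ℕ → ZMod (p ^ N)) this
  set E := (e p N (i + j) : ZMod (p ^ N))
  set a := (e p N i : ZMod (p ^ N))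
  set b := (e p N j : ZMod (p ^ N))
  set C := ((i + j).choose i : ZMod (p ^ N))
  calc E * C = E * C * (i.factorial * a) * (j.factorial * b) := by rw [h2, h3]; ring
    _ = (C * i.factorial * j.factorial) * E * a * b := by ring
    _ = ((i + j).factorial * E) * a * b := by rw [h4]
    _ = a * b := by rw [h1]; ring

lemma e_zero {p N : ℕ} (hp : p.Prime) : e p N 0 ≡ 1 [MOD p ^ N] := by
  have := fact_mul_e (N := N) hp hp.pos
  rw [← ZMod.natCast_eq_natCast_iff]
  simpa using this

lemma e_one {p N : ℕ} (hp : p.Prime) : e p N 1 ≡ 1 [MOD p ^ N] := by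
  have := fact_mul_e (N := N) hp hp.one_lt
  rw [← ZMod.natCast_eq_natCast_iff]
  simpa using this

lemma nsmul_congr {A : Type*} [AddCommGroup A] {m a b : ℕ} (x : A) (hx : m • x = 0)
    (h : a ≡ b [MOD m]) : a • x = b • x := by
  rw [← Nat.mod_add_div a m, ← Nat.mod_add_div b m, h, add_smul, add_smul, mul_comm m, mul_comm m,
    mul_smul, mul_smul, hx, smul_zero, smul_zero]

/-- truncated exponential -/
def pexp (p N : ℕ) {A : Type*} [Ring A] (z : A) : A := ∑ k ∈ range p, e p N k • z ^ k

/-- A filtered ring killed by `p ^ N`, filtration of length `p`. -/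
structure Filt (p N : ℕ) (A : Type*) [Ring A] where
  F : ℕ → AddSubgroup A
  one_mem : (1 : A) ∈ F 0
  mul_mem : ∀ {i j : ℕ} {a b : A}, a ∈ F i → b ∈ F j → a * b ∈ F (i + j)
  anti : ∀ i, F (i + 1) ≤ F i
  top : F p = ⊥
  tors : ∀ a : A, (p ^ N) • a = 0

namespace Filt
variable {p N : ℕ} {A : Type*} [Ring A] (Φ : Filt p N A)

lemma le {i j : ℕ} (h : i ≤ j) : Φ.F j ≤ Φ.F i := antitone_nat_of_succ_le Φ.anti h

lemma pow_mem {z : A} {i : ℕ} (hz : z ∈ Φ.F i) (k : ℕ) : z ^ k ∈ Φ.F (i * k) := by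
  induction k with
  | zero => simpa using Φ.one_mem
  | succ k ih => rw [pow_succ, Nat.mul_succ]; exact Φ.mul_mem ih hz

lemma eq_zero {z : A} {i : ℕ} (h : p ≤ i) (hz : z ∈ Φ.F i) : z = 0 := by
  have := Φ.le h hz
  rwa [Φ.top, AddSubgroup.mem_bot] at this

lemma pow_mem1 {z : A} (hz : z ∈ Φ.F 1) (k : ℕ) : z ^ k ∈ Φ.F k := by
  simpa using Φ.pow_mem hz k

lemma pow_sub {u v : A} {k : ℕ} (hu : u ∈ Φ.F 1) (hv : v ∈ Φ.F 1) (h : u - v ∈ Φ.F k) (j : ℕ) :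
    u ^ (j + 1) - v ^ (j + 1) ∈ Φ.F (k + j) := by
  induction j with
  | zero => simpa using h
  | succ j ih =>
    have : u ^ (j + 1 + 1) - v ^ (j + 1 + 1) = u ^ (j + 1) * (u - v) + (u ^ (j + 1) - v ^ (j + 1)) * v := by
      rw [pow_succ u (j + 1), pow_succ v (j + 1)]; noncomm_ring
    rw [this]
    refine add_mem ?_ (by rw [← add_assoc]; exact Φ.mul_mem ih hv)
    rw [add_comm k]
    exact Φ.mul_mem (Φ.pow_mem1 hu _) h

lemma exp_sub (hp : p.Prime) {u v : A} {k : ℕ} (hu : u ∈ Φ.F 1) (hv : v ∈ Φ.F 1) (h : u - v ∈ Φ.F k) :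
    pexp p N u - pexp p N v - (u - v) ∈ Φ.F (k + 1) := by
  obtain ⟨m, rfl⟩ : ∃ m, p = m + 2 := ⟨p - 2, by have := hp.two_le; omega⟩
  rw [pexp, pexp, ← Finset.sum_sub_distrib, sum_range_succ', sum_range_succ']
  have h1 : e (m + 2) N (0 + 1) • u ^ (0 + 1) - e (m + 2) N (0 + 1) • v ^ (0 + 1) = u - v := by
    rw [← smul_sub, nsmul_congr _ (Φ.tors _) (e_one hp)]; simp
  have h0 : e (m + 2) N 0 • u ^ 0 - e (m + 2) N 0 • v ^ 0 = 0 := by simp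
  rw [h0, h1, add_zero, add_sub_cancel_right]
  refine sum_mem fun j _ => ?_
  rw [← smul_sub]
  refine nsmul_mem ?_ _
  exact Φ.le (by omega) (Φ.pow_sub hu hv h (j + 1))

lemma exp_inj (hp : p.Prime) {u v : A} (hu : u ∈ Φ.F 1) (hv : v ∈ Φ.F 1)
    (h : pexp p N u = pexp p N v) : u = v := by
  have : ∀ k, u - v ∈ Φ.F (k + 1) := by
    intro k
    induction k with
    | zero => exact sub_mem hu hv
    | succ k ih =>
      have := Φ.exp_sub hp hu hv ih
      rwa [h, sub_self, zero_sub, neg_mem_iff] at this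
  exact sub_eq_zero.1 (Φ.eq_zero (by omega : p ≤ p + 1) (this p))

lemma exp_zero (Φ : Filt p N A) (hp : p.Prime) : pexp p N (0 : A) = 1 := by
  obtain ⟨m, rfl⟩ : ∃ m, p = m + 1 := ⟨p - 1, by have := hp.two_le; omega⟩
  rw [pexp, sum_range_succ', nsmul_congr _ (Φ.tors _) (e_zero hp)]
  simp

lemma exp_sub_one (hp : p.Prime) {u : A} (hu : u ∈ Φ.F 1) : pexp p N u - 1 ∈ Φ.F 1 := by
  have := Φ.exp_sub hp hu (zero_mem _) (k := 1) (by simpa using hu)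
  rw [Φ.exp_zero hp, sub_zero] at this
  simpa using add_mem (Φ.anti 1 this) hu

lemma exp_mem (hp : p.Prime) {u : A} (hu : u ∈ Φ.F 1) : pexp p N u ∈ Φ.F 0 := by
  simpa using add_mem (Φ.anti 0 (Φ.exp_sub_one hp hu)) Φ.one_mem

end Filt

lemma sum_antidiag {M : Type*} [AddCommMonoid M] (p : ℕ) (f : ℕ → ℕ → M) (hf : ∀ i j, p ≤ i + j → f i j = 0) :
    ∑ k ∈ range p, ∑ x ∈ antidiagonal k, f x.1 x.2 = ∑ i ∈ range p, ∑ j ∈ range p, f i j := by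
  rw [← Finset.sum_product', Finset.sum_sigma']
  symm
  rw [← Finset.sum_filter_add_sum_filter_not (range p ×ˢ range p) (fun x => x.1 + x.2 < p)]
  rw [Finset.sum_eq_zero (s := filter (fun x : ℕ × ℕ => ¬ (x.1 + x.2 < p)) _), add_zero]
  · refine Finset.sum_bij (fun x _ => (⟨x.1 + x.2, x⟩ : Σ _ : ℕ, ℕ × ℕ)) ?_ ?_ ?_ ?_
    · intro a ha; simp at ha ⊢; omega
    · intro a _ b _ h; simp at h; exact h.2
    · rintro ⟨k, a⟩ hb
      simp at hb
      refine ⟨a, by simp; omega, ?_⟩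
      obtain ⟨h1, rfl⟩ := hb
      rfl
    · intros; rfl
  · intro x hx
    simp at hx
    exact hf _ _ hx.2

lemma pexp_add_of_comm {p N : ℕ} (hp : p.Prime) {A : Type*} [Ring A] (htors : ∀ a : A, (p ^ N) • a = 0) {a b : A} (hab : Commute a b)
    (h0 : ∀ i j, p ≤ i + j → a ^ i * b ^ j = 0) :
    pexp p N (a + b) = pexp p N a * pexp p N b := by
  rw [pexp, pexp, pexp, Finset.sum_mul_sum]
  rw [← sum_antidiag p (fun i j => (e p N i • a ^ i) * (e p N j • b ^ j))]
  · refine Finset.sum_congr rfl fun k hk => ?_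
    rw [hab.add_pow', Finset.smul_sum]
    refine Finset.sum_congr rfl fun x hx => ?_
    rw [HasAntidiagonal.mem_antidiagonal] at hx
    rw [mem_range] at hk
    subst hx
    rw [smul_smul, smul_mul_smul_comm]
    exact nsmul_congr _ (htors _) (e_add hp hk)
  · intro i j hij
    rw [smul_mul_smul_comm, h0 i j hij, smul_zero]

namespace Filt
variable {p N : ℕ} {A : Type*} [Ring A] (Φ : Filt p N A)

lemma exp_add (hp : p.Prime) {a b : A} (ha : a ∈ Φ.F 1) (hb : b ∈ Φ.F 1) (hab : Commute a b) :
    pexp p N (a + b) = pexp p N a * pexp p N b := by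
  refine pexp_add_of_comm hp Φ.tors hab fun i j hij => ?_
  exact Φ.eq_zero hij (Φ.mul_mem (Φ.pow_mem1 ha i) (Φ.pow_mem1 hb j))

lemma exp_neg_mul (hp : p.Prime) {a : A} (ha : a ∈ Φ.F 1) : pexp p N (-a) * pexp p N a = 1 := by
  rw [← Φ.exp_add hp (neg_mem ha) ha (Commute.neg_left (Commute.refl a)), neg_add_cancel, Φ.exp_zero hp]

lemma exp_mul_neg (hp : p.Prime) {a : A} (ha : a ∈ Φ.F 1) : pexp p N a * pexp p N (-a) = 1 := by
  rw [← Φ.exp_add hp ha (neg_mem ha) (Commute.neg_right (Commute.refl a)), add_neg_cancel, Φ.exp_zero hp]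

lemma exp_nsmul (hp : p.Prime) {a : A} (ha : a ∈ Φ.F 1) (k : ℕ) : pexp p N (k • a) = pexp p N a ^ k := by
  induction k with
  | zero => rw [zero_smul, Φ.exp_zero hp, pow_zero]
  | succ k ih =>
    rw [add_smul, one_smul, Φ.exp_add hp (nsmul_mem ha k) ha, ih, pow_succ]
    exact (Commute.refl a).smul_left k

end Filt

attribute [local instance] LieRing.ofAssociativeRing

/-- `exp (ad z) a` in a Lie ring -/
def Ead (p N : ℕ) {L : Type*} [LieRing L] (z a : L) : L :=
  ∑ k ∈ range p, e p N k • ((fun x => ⁅z, x⁆)^[k] a)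

lemma Ead_map (p N : ℕ) {L L' : Type*} [LieRing L] [LieRing L'] (f : L →+ L')
    (hf : ∀ x y, f ⁅x, y⁆ = ⁅f x, f y⁆) (z a : L) :
    f (Ead p N z a) = Ead p N (f z) (f a) := by
  rw [Ead, Ead, map_sum]
  refine sum_congr rfl fun k _ => ?_
  rw [map_nsmul]
  congr 1
  clear * -hf
  induction k with
  | zero => rfl
  | succ k ih => rw [Function.iterate_succ_apply', Function.iterate_succ_apply', hf, ih]

namespace Filt
variable {p N : ℕ} {A : Type*} [Ring A] (Φ : Filt p N A)

lemma exp_conj (hp : p.Prime) {z : A} (hz : z ∈ Φ.F 1) {a : A} (ha : a ∈ Φ.F 0) :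
    pexp p N z * a * pexp p N (-z) = Ead p N z a := by
  have hz' : -z ∈ Φ.F 1 := neg_mem hz
  have key : ∀ k : ℕ, (fun x => ⁅z, x⁆)^[k] a =
      ∑ x ∈ antidiagonal k, k.choose x.1 • (z ^ x.1 * a * (-z) ^ x.2) := by
    intro k
    have hcomm : Commute (LinearMap.mulLeft ℤ z) (LinearMap.mulRight ℤ (-z)) := LinearMap.commute_mulLeft_right _ _
    have h1 : (fun x => ⁅z, x⁆)^[k] a = ((LinearMap.mulLeft ℤ z + LinearMap.mulRight ℤ (-z)) ^ k) a := by
      rw [Module.End.pow_apply]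
      congr 2
      funext x
      simp [Ring.lie_def, sub_eq_add_neg]
    rw [h1, hcomm.add_pow', LinearMap.sum_apply]
    refine sum_congr rfl fun x hx => ?_
    rw [LinearMap.smul_apply, Module.End.mul_apply, LinearMap.pow_mulLeft, LinearMap.pow_mulRight]
    simp [mul_assoc]
  rw [Ead, pexp, pexp, Finset.sum_mul, Finset.sum_mul_sum]
  rw [← sum_antidiag p (fun i j => ((e p N i • z ^ i) * a) * (e p N j • (-z) ^ j))]
  · refine Finset.sum_congr rfl fun k hk => ?_
    rw [key, Finset.smul_sum]
    refine Finset.sum_congr rfl fun x hx => ?_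
    rw [HasAntidiagonal.mem_antidiagonal] at hx
    rw [mem_range] at hk
    subst hx
    rw [smul_smul, smul_mul_assoc, smul_mul_smul_comm]
    exact (nsmul_congr _ (Φ.tors _) (e_add hp hk)).symm
  · intro i j hij
    rw [smul_mul_assoc, smul_mul_smul_comm]
    rw [Φ.eq_zero (z := z ^ i * a * (-z) ^ j) (i := i + 0 + j) hij, smul_zero]
    exact Φ.mul_mem (Φ.mul_mem (Φ.pow_mem1 hz i) ha) (Φ.pow_mem1 hz' j)

end Filt
end Laz


namespace Laz
open Finset
attribute [local instance] LieRing.ofAssociativeRing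

lemma Ead_sub_mem {p N : ℕ} (hp : p.Prime) {L : Type*} [LieRing L] (z a : L) (S : AddSubgroup L)
    (ha : (p ^ N) • a = 0) (h1 : ⁅z, a⁆ ∈ S) (h2 : ∀ x ∈ S, ⁅z, x⁆ ∈ S) : Ead p N z a - a ∈ S := by
  obtain ⟨m, rfl⟩ : ∃ m, p = m + 1 := ⟨p - 1, by have := hp.two_le; omega⟩
  rw [Ead, sum_range_succ', Function.iterate_zero_apply, nsmul_congr _ ha (e_zero hp), one_smul, add_sub_cancel_right]
  refine sum_mem fun k _ => nsmul_mem ?_ _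
  rw [Function.iterate_succ_apply]
  induction k with
  | zero => simpa using h1
  | succ k ih => rw [Function.iterate_succ_apply']; exact h2 _ (ih (by simp_all; omega))

lemma lie_iter_add {L : Type*} [LieRing L] (z a b : L) (k : ℕ) :
    (fun x => ⁅z, x⁆)^[k] (a + b) = (fun x => ⁅z, x⁆)^[k] a + (fun x => ⁅z, x⁆)^[k] b := by
  induction k with
  | zero => rfl
  | succ k ih => simp only [Function.iterate_succ_apply', ih, lie_add]

lemma Ead_add {p N : ℕ} {L : Type*} [LieRing L] (z a b : L) : Ead p N z (a + b) = Ead p N z a + Ead p N z b := by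
  simp only [Ead, lie_iter_add, smul_add, sum_add_distrib]

lemma Ead_mem {p N : ℕ} {L : Type*} [LieRing L] (z a : L) (S : AddSubgroup L)
    (ha : a ∈ S) (h2 : ∀ x ∈ S, ⁅z, x⁆ ∈ S) : Ead p N z a ∈ S := by
  refine sum_mem fun k _ => nsmul_mem ?_ _
  clear * - ha h2
  induction k with
  | zero => simpa using ha
  | succ k ih => rw [Function.iterate_succ_apply']; exact h2 _ ih

namespace Filt
variable {p N : ℕ} {A : Type*} [Ring A] (Φ : Filt p N A)

lemma mul_mem_0l {a b : A} {k : ℕ} (ha : a ∈ Φ.F 0) (hb : b ∈ Φ.F k) : a * b ∈ Φ.F k := by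
  simpa using Φ.mul_mem ha hb

lemma mul_mem_0r {a b : A} {k : ℕ} (ha : a ∈ Φ.F k) (hb : b ∈ Φ.F 0) : a * b ∈ Φ.F k := by
  simpa using Φ.mul_mem ha hb

theorem bch_closed (hp : p.Prime) (ε : A) (hε0 : ε ∈ Φ.F 0)
    (hε : ∀ (k : ℕ) (a : A), a ∈ Φ.F k → ⁅ε, a⁆ - k • a ∈ Φ.F (k + 1))
    (𝔫 : AddSubgroup A) (h1 : 𝔫 ≤ Φ.F 1) (hlie : ∀ a ∈ 𝔫, ∀ b ∈ 𝔫, ⁅a, b⁆ ∈ 𝔫) (hεn : ∀ a ∈ 𝔫, ⁅ε, a⁆ ∈ 𝔫)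
    (x y : A) (hx : x ∈ 𝔫) (hy : y ∈ 𝔫) : ∃ z ∈ 𝔫, pexp p N x * pexp p N y = pexp p N z := by
  have hE : ∀ z ∈ 𝔫, Ead p N z ε - ε ∈ 𝔫 := fun z hz => by
    refine Ead_sub_mem hp z ε 𝔫 (Φ.tors _) ?_ (hlie z hz)
    rw [← lie_skew, neg_mem_iff]
    exact hεn z hz
  set g := pexp p N x * pexp p N y with hg
  set g' := pexp p N (-y) * pexp p N (-x) with hg'
  have hx1 := h1 hx
  have hy1 := h1 hy
  have hgg' : g' * g = 1 := by
    rw [hg, hg', mul_assoc, ← mul_assoc (pexp p N (-x)), Φ.exp_neg_mul hp hx1, one_mul, Φ.exp_neg_mul hp hy1]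
  have hgg : g * g' = 1 := by
    rw [hg, hg', mul_assoc, ← mul_assoc (pexp p N y), Φ.exp_mul_neg hp hy1, one_mul, Φ.exp_mul_neg hp hx1]
  have hgε : g * ε * g' - ε ∈ 𝔫 := by
    have : g * ε * g' = pexp p N x * (pexp p N y * ε * pexp p N (-y)) * pexp p N (-x) := by
      rw [hg, hg']; noncomm_ring
    rw [this, Φ.exp_conj hp hy1 hε0, Φ.exp_conj hp hx1]
    · have h3 := hE y hy
      have h4 : Ead p N y ε = ε + (Ead p N y ε - ε) := by abel
      rw [h4, Ead_add, add_sub_right_comm]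
      exact add_mem (hE x hx) (Ead_mem _ _ _ h3 (hlie x hx))
    · have := add_mem (Φ.anti 0 (h1 (hE y hy))) hε0
      simpa using this
  have hg0 : g ∈ Φ.F 0 := Φ.mul_mem_0l (Φ.exp_mem hp hx1) (Φ.exp_mem hp hy1)
  have hg'0 : g' ∈ Φ.F 0 := Φ.mul_mem_0l (Φ.exp_mem hp (neg_mem hy1)) (Φ.exp_mem hp (neg_mem hx1))
  have hg1 : g - 1 ∈ Φ.F 1 := by
    have : g - 1 = (pexp p N x - 1) * pexp p N y + (pexp p N y - 1) := by rw [hg]; noncomm_ring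
    rw [this]
    exact add_mem (Φ.mul_mem_0r (Φ.exp_sub_one hp hx1) (Φ.exp_mem hp hy1)) (Φ.exp_sub_one hp hy1)
  have claim : ∀ k : ℕ, k < p → ∃ z ∈ 𝔫, g - pexp p N z ∈ Φ.F (k + 1) := by
    intro k
    induction k with
    | zero => 
      intro _
      refine ⟨0, zero_mem _, ?_⟩
      rw [Φ.exp_zero hp]; simpa using hg1
    | succ k ih =>
      intro hk
      obtain ⟨z, hz, hr⟩ := ih (by omega)
      have hz1 := h1 hz
      set r := g - pexp p N z with hrdef
      set n := g * ε * g' - pexp p N z * ε * pexp p N (-z) with hn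
      set n' := Ead p N z ε - ε with hn'
      have hn'm : n' ∈ 𝔫 := hE z hz
      have hconj : pexp p N z * ε * pexp p N (-z) = ε + n' := by rw [Φ.exp_conj hp hz1 hε0, hn']; abel
      have hnm : n ∈ 𝔫 := by
        have : n = (g * ε * g' - ε) - n' := by rw [hn, hconj]; abel
        rw [this]; exact sub_mem hgε hn'm
      have hng : n * g = - ⁅ε, r⁆ - n' * r := by
        have e1 : n * g = g * ε * (g' * g) - (ε + n') * g := by rw [hn, hconj]; noncomm_ring
        have e2 : pexp p N z * ε = (ε + n') * pexp p N z := by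
          rw [← hconj, mul_assoc _ (pexp p N (-z)), Φ.exp_neg_mul hp hz1, mul_one]
        have e3 : g = pexp p N z + r := by rw [hrdef]; abel
        rw [e1, hgg', mul_one, e3, add_mul, e2, Ring.lie_def]; noncomm_ring
      have hεr := hε (k + 1) r hr
      have hn'r : n' * r ∈ Φ.F (k + 1 + 1) := by rw [add_comm (k+1)]; exact Φ.mul_mem (h1 hn'm) hr
      have hng2 : n * g + (k + 1) • r ∈ Φ.F (k + 1 + 1) := by
        have : n * g + (k + 1) • r = - (⁅ε, r⁆ - (k + 1) • r) - n' * r := by rw [hng]; abel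
        rw [this]; exact sub_mem (neg_mem hεr) hn'r
      have hngk : n * g ∈ Φ.F (k + 1) := by
        have := sub_mem (Φ.anti _ hng2) (nsmul_mem hr (k + 1)); simpa using this
      have hnk : n ∈ Φ.F (k + 1) := by
        have := Φ.mul_mem_0r hngk hg'0
        rwa [mul_assoc, hgg, mul_one] at this
      have hn1 : n + (k + 1) • r ∈ Φ.F (k + 1 + 1) := by
        have : n + (k + 1) • r = (n * g + (k + 1) • r) - n * (g - 1) := by rw [mul_sub]; simp; abel
        rw [this]; exact sub_mem hng2 (Φ.mul_mem hnk hg1)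
      refine ⟨z - iv p N (k + 1) • n, sub_mem hz (nsmul_mem hnm _), ?_⟩
      have h5 := Φ.exp_sub hp (u := z - iv p N (k + 1) • n) (v := z) (k := k + 1)
        (h1 (sub_mem hz (nsmul_mem hnm _))) hz1 (by simpa using nsmul_mem hnk _)
      have h6 : r = iv p N (k + 1) • (k + 1) • r := by
        rw [smul_smul, nsmul_congr _ (Φ.tors _) (iv_mul hp (by omega) hk), one_smul]
      have h7 := nsmul_mem hn1 (iv p N (k + 1))
      rw [smul_add, ← h6] at h7
      have h8 := sub_mem h7 h5
      convert h8 using 1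
      rw [hrdef]; abel
  have := hp.two_le
  obtain ⟨z, hz, hr⟩ := claim (p - 1) (by omega)
  exact ⟨z, hz, sub_eq_zero.1 (Φ.eq_zero (by omega) hr)⟩

end Filt
end Laz


namespace Laz
open Finset
attribute [local instance] LieRing.ofAssociativeRing

abbrev FL := FreeLieAlgebra ℤ (Fin 2)

lemma FL_induction (P : FL → Prop) (h0 : P 0) (hadd : ∀ x y, P x → P y → P (x + y))
    (hsmul : ∀ (k : ℤ) x, P x → P (k • x)) (hlie : ∀ x y, P x → P y → P ⁅x, y⁆)
    (hof : ∀ i, P (FreeLieAlgebra.of ℤ i)) (x : FL) : P x := by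
  let S : LieSubalgebra ℤ FL :=
    { carrier := {x | P x}
      add_mem' := fun {a b} ha hb => hadd a b ha hb
      zero_mem' := h0
      smul_mem' := fun c x hx => hsmul c x hx
      lie_mem' := fun {a b} ha hb => hlie a b ha hb }
  let f : FL →ₗ⁅ℤ⁆ S := FreeLieAlgebra.lift ℤ (fun i => ⟨FreeLieAlgebra.of ℤ i, hof i⟩)
  have : S.incl.comp f = (LieHom.id : FL →ₗ⁅ℤ⁆ FL) := by
    apply FreeLieAlgebra.hom_ext
    intro i
    show ((f (FreeLieAlgebra.of ℤ i) : S) : FL) = _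
    rw [show f (FreeLieAlgebra.of ℤ i) = _ from FreeLieAlgebra.lift_of_apply _ i]
    rfl
  have h := LieHom.congr_fun this x
  have h2 : ((f x : S) : FL) = x := h
  rw [← h2]
  exact (f x).2

/-- evaluation of free Lie polynomial at a pair of elements of a Lie ring -/
noncomputable def evl {L : Type*} [LieRing L] (c : Fin 2 → L) : FL →ₗ⁅ℤ⁆ L := FreeLieAlgebra.lift ℤ c

lemma evl_of {L : Type*} [LieRing L] (c : Fin 2 → L) (i : Fin 2) : evl c (FreeLieAlgebra.of ℤ i) = c i := by
  rw [evl]; exact FreeLieAlgebra.lift_of_apply c i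

lemma evl_map {L L' : Type*} [LieRing L] [LieRing L'] (f : L →+ L')
    (hf : ∀ x y, f ⁅x, y⁆ = ⁅f x, f y⁆) (c : Fin 2 → L) (h : FL) : f (evl c h) = evl (fun i => f (c i)) h := by
  refine FL_induction (fun h => f (evl c h) = evl (fun i => f (c i)) h) (by simp) ?_ ?_ ?_ ?_ h
  · intro x y hx hy; simp only [map_add, map_add, hx, hy]
  · intro k x hx; simp only [map_zsmul, map_zsmul, hx]
  · intro x y hx hy; simp only [LieHom.map_lie, hf, hx, hy]
  · intro i; simp [evl_of]

lemma evl_mem {L : Type*} [LieRing L] (S : AddSubgroup L) (hS : ∀ x ∈ S, ∀ y ∈ S, ⁅x, y⁆ ∈ S)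
    (c : Fin 2 → L) (hc : ∀ i, c i ∈ S) (h : FL) : evl c h ∈ S := by
  refine FL_induction (fun h => evl c h ∈ S) (by simp) ?_ ?_ ?_ ?_ h
  · intro x y hx hy; simp only [map_add]; exact add_mem hx hy
  · intro k x hx; simp only [map_zsmul]; exact zsmul_mem hx k
  · intro x y hx hy; simp only [LieHom.map_lie]; exact hS _ hx _ hy
  · intro i; simp [evl_of, hc]

section words
variable (p N : ℕ)
abbrev W := {w : List (Fin 2) // w.length < p}
abbrev V := W p →₀ ZMod (p ^ N)

noncomputable def vs (w : List (Fin 2)) (r : ZMod (p ^ N)) : V p N :=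
  if h : w.length < p then Finsupp.single ⟨w, h⟩ r else 0

variable {p N}
lemma vs_add (w) (r r' : ZMod (p ^ N)) : vs p N w (r + r') = vs p N w r + vs p N w r' := by
  unfold vs; split_ifs <;> simp

lemma vs_zero (w) (r : ZMod (p ^ N)) (h : p ≤ w.length) : vs p N w r = 0 := by
  unfold vs; rw [dif_neg (by omega)]

noncomputable def vlift {M : Type*} [AddCommGroup M] (φ : List (Fin 2) → ZMod (p ^ N) →+ M) :
    V p N →ₗ[ℤ] M := (Finsupp.liftAddHom (fun w : W p => φ w.1)).toIntLinearMap

lemma vlift_vs {M : Type*} [AddCommGroup M] (φ : List (Fin 2) → ZMod (p ^ N) →+ M)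
    (hφ : ∀ w r, p ≤ w.length → φ w r = 0) (w r) : vlift φ (vs p N w r) = φ w r := by
  unfold vs; split_ifs with h
  · simp [vlift]
  · rw [map_zero, hφ _ _ (by omega)]

noncomputable def vsHom (w : List (Fin 2)) : ZMod (p ^ N) →+ V p N := AddMonoidHom.mk' (vs p N w) (vs_add w)

noncomputable def op (s : Fin 2) : Module.End ℤ (V p N) := vlift (fun w => vsHom (s :: w))

noncomputable def eps : Module.End ℤ (V p N) := vlift (fun w => w.length • vsHom w)

lemma op_vs (s w) (r : ZMod (p ^ N)) : op s (vs p N w r) = vs p N (s :: w) r := by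
  rw [op, vlift_vs]
  · rfl
  · intro w r h; exact vs_zero _ _ (by simp; omega)

lemma eps_vs (w) (r : ZMod (p ^ N)) : eps (vs p N w r) = w.length • vs p N w r := by
  rw [eps, vlift_vs]
  · rfl
  · intro w r h; show w.length • vs p N w r = 0; rw [vs_zero _ _ h, smul_zero]

lemma v_induction (P : V p N → Prop) (h0 : P 0) (hadd : ∀ f g, P f → P g → P (f + g)) (hs : ∀ w r, P (vs p N w r)) (f) : P f := by
  refine Finsupp.induction_linear f h0 hadd fun w r => ?_
  have := hs w.1 r
  rwa [vs, dif_pos w.2] at this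

variable (p N) in
noncomputable def VF (i : ℕ) : AddSubgroup (V p N) := AddSubgroup.closure {v | ∃ w r, i ≤ w.length ∧ v = vs p N w r}

lemma vs_mem (w) (r : ZMod (p ^ N)) : vs p N w r ∈ VF p N w.length := AddSubgroup.subset_closure ⟨w, r, le_rfl, rfl⟩

lemma VF_anti {i j : ℕ} (h : i ≤ j) : VF p N j ≤ VF p N i := by
  apply AddSubgroup.closure_mono
  rintro _ ⟨w, r, h', rfl⟩
  exact ⟨w, r, by omega, rfl⟩

lemma VF_top : VF p N p = ⊥ := by
  rw [eq_bot_iff, VF, AddSubgroup.closure_le]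
  rintro _ ⟨w, r, h', rfl⟩
  simp [vs_zero _ _ h']

lemma VF_zero (f) : f ∈ VF p N 0 := by
  refine v_induction (fun f => f ∈ VF p N 0) (zero_mem _) (fun f g => add_mem) (fun w r => VF_anti (Nat.zero_le _) (vs_mem w r)) f

variable (p N) in
/-- The filtration on endomorphisms of a filtered module. -/
noncomputable def endFilt {M : Type*} [AddCommGroup M] (D : ℕ → AddSubgroup M) (hD : ∀ i, D (i + 1) ≤ D i) (h0 : D 0 = ⊤)
    (hpD : D p = ⊥) (htors : ∀ m : M, (p ^ N) • m = 0) : Filt p N (Module.End ℤ M) where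
  F k := 
    { carrier := {a | ∀ i, ∀ m ∈ D i, a m ∈ D (i + k)}
      add_mem' := fun {a b} ha hb i m hm => add_mem (ha i m hm) (hb i m hm)
      zero_mem' := fun i m _ => zero_mem _
      neg_mem' := fun {a} ha i m hm => neg_mem (ha i m hm) }
  one_mem := fun i m hm => hm
  mul_mem := fun {i j a b} ha hb k m hm => by
    have := ha _ _ (hb k m hm)
    rwa [add_assoc, add_comm j] at this
  anti k a ha i m hm := hD _ (ha i m hm)
  top := by
    rw [eq_bot_iff]
    intro a ha
    rw [AddSubgroup.mem_bot]
    ext m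
    have := ha 0 m (by rw [h0]; trivial)
    rwa [zero_add, hpD, AddSubgroup.mem_bot] at this
  tors a := by ext m; exact htors (a m)

variable (p N) in
noncomputable def VFilt : Filt p N (Module.End ℤ (V p N)) :=
  endFilt p N (VF p N) (fun i => VF_anti (by omega)) (by rw [eq_top_iff]; intro f _; exact VF_zero f) VF_top
    (fun m => by ext w; simp [nsmul_eq_mul])

lemma VFilt_mem {a : Module.End ℤ (V p N)} {k : ℕ} (h : ∀ w r, a (vs p N w r) ∈ VF p N (w.length + k)) : a ∈ (VFilt p N).F k := by
  intro i m hm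
  induction hm using AddSubgroup.closure_induction with
  | mem x hx => 
    obtain ⟨w, r, h', rfl⟩ := hx
    exact VF_anti (by omega) (h w r)
  | zero => rw [map_zero]; exact zero_mem _
  | add x y _ _ hx hy => rw [map_add]; exact add_mem hx hy
  | neg x _ hx => rw [map_neg]; exact neg_mem hx

lemma eps_sub {i : ℕ} (v) (hv : v ∈ VF p N i) : eps v - i • v ∈ VF p N (i + 1) := by
  induction hv using AddSubgroup.closure_induction with
  | mem x hx => 
    obtain ⟨w, r, h', rfl⟩ := hx
    rw [eps_vs]
    rcases h'.eq_or_lt with rfl | h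
    · rw [sub_self]; exact zero_mem _
    · have := VF_anti (by omega : i + 1 ≤ _) (vs_mem w r)
      exact sub_mem (nsmul_mem this _) (nsmul_mem this _)
  | zero => simp
  | add x y _ _ hx hy => rw [map_add, smul_add, add_sub_add_comm]; exact add_mem hx hy
  | neg x _ hx => rw [map_neg, smul_neg, neg_sub_neg, ← neg_sub]; exact neg_mem hx

theorem exists_bch (hp : p.Prime) : ∃ h : FL, pexp p N (op (p := p) (N := N) 0) * pexp p N (op 1) = pexp p N (evl op h) := by
  let 𝔫 : AddSubgroup (Module.End ℤ (V p N)) := (evl (op (p := p) (N := N))).toLinearMap.toAddMonoidHom.range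
  have hop : ∀ i, op i ∈ (VFilt p N).F 1 := fun i => VFilt_mem fun w r => by
    rw [op_vs]; exact vs_mem (i :: w) r
  have heop : ∀ i, ⁅(eps : Module.End ℤ (V p N)), (op i : Module.End ℤ (V p N))⁆ = op i := by
    intro i
    refine LinearMap.ext fun f => ?_
    refine v_induction (fun f => ⁅(eps : Module.End ℤ (V p N)), (op i : Module.End ℤ (V p N))⁆ f = op i f) (by simp) ?_ ?_ f
    · intro f g hf hg; simp only [map_add, hf, hg]
    · intro w r; rw [Ring.lie_def, LinearMap.sub_apply, Module.End.mul_apply, Module.End.mul_apply, op_vs, eps_vs, eps_vs, map_nsmul, op_vs]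
      rw [List.length_cons, add_smul, one_smul, add_sub_cancel_left]
  obtain ⟨z, ⟨h, hz⟩, hz2⟩ := (VFilt p N).bch_closed hp (eps) (VFilt_mem fun w r => by
      rw [eps_vs]; exact nsmul_mem (vs_mem w r) _) (by
      intro k a ha
      refine VFilt_mem fun w r => ?_
      have h1 := ha _ _ (vs_mem w r)
      have h2 := eps_sub _ h1
      rw [Ring.lie_def, LinearMap.sub_apply, LinearMap.sub_apply, Module.End.mul_apply, Module.End.mul_apply, eps_vs, map_nsmul, LinearMap.smul_apply]
      rw [add_smul] at h2
      rwa [← sub_sub] at h2) 𝔫 (by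
      rintro _ ⟨x, rfl⟩
      refine evl_mem _ ?_ _ hop x
      intro x hx y hy
      rw [Ring.lie_def]
      exact sub_mem ((VFilt p N).anti _ ((VFilt p N).mul_mem hx hy)) ((VFilt p N).anti _ ((VFilt p N).mul_mem hy hx)))
      (by
      rintro _ ⟨x, rfl⟩ _ ⟨y, rfl⟩
      exact ⟨⁅x, y⁆, by simp⟩) (by
      rintro _ ⟨x, rfl⟩
      refine FL_induction (fun x => ⁅eps, evl op x⁆ ∈ 𝔫) (by simp) ?_ ?_ ?_ ?_ x
      · intro x y hx hy; simp only [map_add, lie_add]; exact add_mem hx hy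
      · intro k x hx; simp only [map_zsmul, lie_smul]; exact zsmul_mem hx k
      · intro x y hx hy
        obtain ⟨a, ha⟩ := hx
        obtain ⟨b, hb⟩ := hy
        refine ⟨⁅a, y⁆ + ⁅x, b⁆, ?_⟩
        simp only [LieHom.map_lie]
        rw [leibniz_lie, ← ha, ← hb]
        simp
      · intro i
        rw [evl_of, heop]
        exact ⟨FreeLieAlgebra.of ℤ i, evl_of _ _⟩)
      (op 0) (op 1) ⟨FreeLieAlgebra.of ℤ 0, evl_of _ _⟩ ⟨FreeLieAlgebra.of ℤ 1, evl_of _ _⟩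
  exact ⟨h, by rw [hz2, ← hz]; rfl⟩

end words

/-- A chosen BCH polynomial. -/
noncomputable def bch (p N : ℕ) : FL := if hp : p.Prime then (exists_bch (N := N) hp).choose else 0

lemma bch_spec {p N : ℕ} (hp : p.Prime) :
    pexp p N (op (p := p) (N := N) 0) * pexp p N (op 1) = pexp p N (evl op (bch p N)) := by
  rw [bch, dif_pos hp]
  exact (exists_bch (N := N) hp).choose_spec

section transfer
variable {p N : ℕ} {A : Type*} [Ring A] (Φ : Filt p N A)

theorem Filt.bch_eq (hp : p.Prime) (c : Fin 2 → A) (hc : ∀ i, c i ∈ Φ.F 1) :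
    pexp p N (c 0) * pexp p N (c 1) = pexp p N (evl c (bch p N)) := by
  have hm : ∀ w : List (Fin 2), (w.map c).prod ∈ Φ.F w.length := by
    intro w
    induction w with
    | nil => simpa using Φ.one_mem
    | cons a w ih => 
      rw [List.map_cons, List.prod_cons, List.length_cons, add_comm]; exact Φ.mul_mem (hc a) ih
  let φ : List (Fin 2) → ZMod (p ^ N) →+ A := fun w =>
    ZMod.lift (p ^ N) ⟨(zmultiplesHom A (w.map c).prod), by simp [← Φ.tors (w.map c).prod]⟩
  have hφ : ∀ w r, φ w r = (r.cast : ℤ) • (w.map c).prod := by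
    intro w r
    conv_lhs => rw [← ZMod.intCast_zmod_cast r]
    exact ZMod.lift_coe _ _ _
  let T := vlift φ
  have hT : ∀ w r, T (vs p N w r) = (r.cast : ℤ) • (w.map c).prod := by
    intro w r
    rw [← hφ]
    refine vlift_vs φ (fun w r h => ?_) w r
    rw [hφ, Φ.eq_zero h (hm w), smul_zero]
  have hop : ∀ i f, T (op i f) = c i * T f := by
    intro i f
    refine v_induction (fun f => T (op i f) = c i * T f) (by simp) ?_ ?_ f
    · intro f g hf hg; simp only [map_add, hf, hg, mul_add]
    · intro w r; rw [op_vs, hT, hT, List.map_cons, List.prod_cons, mul_smul_comm]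
  have hev : ∀ h : FL, ∀ f, T (evl op h f) = evl c h * T f := by
    intro h
    refine FL_induction (fun h => ∀ f, T (evl op h f) = evl c h * T f) (by simp) ?_ ?_ ?_ ?_ h
    · intro x y hx hy f; simp only [map_add, LinearMap.add_apply, map_add, hx, hy, add_mul]
    · intro k x hx f; simp only [LinearMap.smul_apply, map_smul, hx, smul_mul_assoc]
    · intro x y hx hy f; simp only [LieHom.map_lie, Ring.lie_def, LinearMap.sub_apply, Module.End.mul_apply, map_sub, hx, hy, sub_mul, mul_assoc]
    · intro i f; simp only [evl_of, hop]
  have hexp : ∀ (a : Module.End ℤ (V p N)) (a' : A), (∀ f, T (a f) = a' * T f) → ∀ f, T (pexp p N a f) = pexp p N a' * T f := by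
    intro a a' h f
    rw [pexp, pexp, LinearMap.sum_apply, map_sum, Finset.sum_mul]
    refine Finset.sum_congr rfl fun k _ => ?_
    rw [LinearMap.smul_apply, map_nsmul, smul_mul_assoc]
    congr 1
    clear * - h
    induction k with
    | zero => simp
    | succ k ih => rw [pow_succ', pow_succ', Module.End.mul_apply, h, ih, mul_assoc]
  have := congrArg (fun a => T (a (vs p N [] 1))) (bch_spec (N := N) hp)
  simp only [Module.End.mul_apply] at this
  rw [hexp _ _ (hop 0), hexp _ _ (hop 1), hexp _ _ (hev _), hT] at this
  have h1 : (((1 : ZMod (p ^ N)).cast : ℤ) • (([] : List (Fin 2)).map c).prod : A) = 1 := by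
    rw [← hφ]
    have : (1 : ZMod (p ^ N)) = ((1 : ℤ) : ZMod (p ^ N)) := by simp
    rw [this, ZMod.lift_coe]; simp
  rwa [h1, mul_one, mul_one] at this

end transfer
end Laz


namespace Laz
open Finset TensorProduct
attribute [local instance] LieRing.ofAssociativeRing

/-- strong filtration of length `p` on a Lie ring killed by `p ^ N` -/
structure LFilt (p N : ℕ) (L : Type) [LieRing L] where
  F : ℕ → AddSubgroup L
  one : F 1 = ⊤
  anti : ∀ i, F (i + 1) ≤ F i
  lie_mem : ∀ {i j : ℕ} {a b : L}, a ∈ F i → b ∈ F j → ⁅a, b⁆ ∈ F (i + j)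
  top : F p = ⊥
  tors : ∀ a : L, (p ^ N) • a = 0

section rees
variable {p N : ℕ} {L : Type} [LieRing L] (Γ : LFilt p N L)

def T (L : Type) [LieRing L] : Type := Polynomial ℤ ⊗[ℤ] L

noncomputable instance : LieRing (T L) := LieAlgebra.ExtendScalars.instLieRing ℤ (Polynomial ℤ) L

noncomputable def tm (s : Polynomial ℤ) (x : L) : T L := (s ⊗ₜ[ℤ] x : Polynomial ℤ ⊗[ℤ] L)

lemma tm_lie (s s' : Polynomial ℤ) (x y : L) : ⁅tm s x, tm s' y⁆ = tm (s * s') ⁅x, y⁆ := 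
  LieAlgebra.ExtendScalars.bracket_tmul ℤ (Polynomial ℤ) L L s s' x y

lemma tm_add (s s' : Polynomial ℤ) (x : L) : tm (s + s') x = tm s x + tm s' x := TensorProduct.add_tmul s s' x

lemma tm_zero (s : Polynomial ℤ) : tm s (0 : L) = 0 := TensorProduct.tmul_zero L s

lemma tm_add_right (s : Polynomial ℤ) (x y : L) : tm s (x + y) = tm s x + tm s y := TensorProduct.tmul_add s x y

lemma tm_nsmul_right (n : ℕ) (s : Polynomial ℤ) (x : L) : tm s (n • x) = n • tm s x :=
  map_nsmul (AddMonoidHom.mk' (fun x : L => tm s x) (tm_add_right s)) n x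

lemma tm_nsmul_left (n : ℕ) (s : Polynomial ℤ) (x : L) : tm (n • s) x = n • tm s x :=
  map_nsmul (AddMonoidHom.mk' (fun s : Polynomial ℤ => tm s x) (fun s s' => tm_add s s' x)) n s

lemma T_ind {P : T L → Prop} (x : T L) (h0 : P 0) (ht : ∀ s x, P (tm s x)) (ha : ∀ x y, P x → P y → P (x + y)) : P x :=
  TensorProduct.induction_on (motive := P) x h0 ht ha

noncomputable def Tmap (φ : Polynomial ℤ →ₗ[ℤ] Polynomial ℤ) : T L →+ T L :=
  (LinearMap.rTensor L φ : Polynomial ℤ ⊗[ℤ] L →ₗ[ℤ] Polynomial ℤ ⊗[ℤ] L).toAddMonoidHom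

lemma Tmap_tm (φ : Polynomial ℤ →ₗ[ℤ] Polynomial ℤ) (s : Polynomial ℤ) (x : L) : Tmap φ (tm s x) = tm (φ s) x :=
  LinearMap.rTensor_tmul L φ x s

noncomputable def evT : T L →+ L := 
  ((TensorProduct.lid ℤ L).toLinearMap.comp (LinearMap.rTensor L (Polynomial.leval (1 : ℤ)))).toAddMonoidHom

lemma evT_tm (s : Polynomial ℤ) (x : L) : evT (tm s x) = s.eval 1 • x := by
  show (TensorProduct.lid ℤ L) (LinearMap.rTensor L (Polynomial.leval (1 : ℤ)) (s ⊗ₜ[ℤ] x)) = _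
  rw [LinearMap.rTensor_tmul, TensorProduct.lid_tmul]; rfl

noncomputable def Edd : Derivation ℤ (Polynomial ℤ) (Polynomial ℤ) := (Polynomial.X : Polynomial ℤ) • (Polynomial.derivative' : Derivation ℤ (Polynomial ℤ) (Polynomial ℤ))

noncomputable def Ed : T L →+ T L := Tmap Edd.toLinearMap

lemma Ed_tm (s : Polynomial ℤ) (x : L) : Ed (tm s x) = tm (Edd s) x := Tmap_tm _ _ _

lemma T_tors (Γ : LFilt p N L) (x : T L) : (p ^ N) • x = 0 := by
  induction x using T_ind with
  | h0 => simp
  | ht s x => rw [← tm_nsmul_right, Γ.tors, tm_zero]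
  | ha x y hx hy => rw [smul_add, hx, hy, add_zero]

lemma Ed_lie (x y : T L) : Ed ⁅x, y⁆ = ⁅Ed x, y⁆ + ⁅x, Ed y⁆ := by
  induction x using T_ind with
  | h0 => simp
  | ha x x' hx hx' => simp only [add_lie, map_add, hx, hx']; abel
  | ht s x => 
    induction y using T_ind with
    | h0 => simp
    | ha y y' hy hy' => simp only [lie_add, map_add, hy, hy']; abel
    | ht s' y =>
      rw [tm_lie, Ed_tm, Ed_tm, Ed_tm, tm_lie, tm_lie, Derivation.leibniz, smul_eq_mul, smul_eq_mul, tm_add, add_comm, mul_comm s']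

noncomputable def ivp (p N : ℕ) : Polynomial ℤ →ₗ[ℤ] Polynomial ℤ :=
  (Polynomial.basisMonomials ℤ).constr ℤ (fun d => iv p N d • (Polynomial.X ^ d))

noncomputable def ivT (p N : ℕ) : T L →+ T L := Tmap (ivp p N)

noncomputable def LS : AddSubgroup (T L) := AddSubgroup.closure {v | ∃ (d : ℕ) (x : L), 1 ≤ d ∧ x ∈ Γ.F d ∧ v = tm (Polynomial.X ^ d : Polynomial ℤ) x}

lemma LFilt.eq_zero {x : L} {d : ℕ} (h : p ≤ d) (hx : x ∈ Γ.F d) : x = 0 := by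
  have := antitone_nat_of_succ_le Γ.anti h hx
  rwa [Γ.top, AddSubgroup.mem_bot] at this

lemma ivT_Ed (hp : p.Prime) (x : T L) (hx : x ∈ LS Γ) : ivT p N (Ed x) = x := by
  induction hx using AddSubgroup.closure_induction with
  | mem x hx => 
    obtain ⟨d, x, hd, hx, rfl⟩ := hx
    by_cases hdp : d < p
    · have h1 : Ed (tm (Polynomial.X ^ d : Polynomial ℤ) x) = d • (tm (Polynomial.X ^ d : Polynomial ℤ) x) := by
        rw [Ed_tm, ← tm_nsmul_left]
        congr 1
        obtain ⟨k, rfl⟩ : ∃ k, d = k + 1 := ⟨d - 1, by omega⟩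
        simp [Edd]
        left; ring
      have h2 : ivp p N (Polynomial.X ^ d) = iv p N d • (Polynomial.X ^ d) := by
        rw [ivp, show (Polynomial.X ^ d : Polynomial ℤ) = Polynomial.basisMonomials ℤ d by simp [Polynomial.monomial_one_right_eq_X_pow], Module.Basis.constr_basis]
        simp [Polynomial.monomial_one_right_eq_X_pow]
      rw [h1, map_nsmul, ivT, Tmap_tm, h2, tm_nsmul_left, smul_smul, mul_comm,
        nsmul_congr _ (T_tors Γ _) (iv_mul hp (by omega) hdp), one_smul]
    · rw [Γ.eq_zero (by omega) hx, tm_zero]; simp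
  | zero => simp
  | add x y _ _ hx hy => rw [map_add, map_add, hx, hy]
  | neg x _ hx => rw [map_neg, map_neg, hx]

lemma LS_lie (x y : T L) (hx : x ∈ LS Γ) (hy : y ∈ LS Γ) : ⁅x, y⁆ ∈ LS Γ := by
  induction hx using AddSubgroup.closure_induction with
  | mem x hx => 
    obtain ⟨d, x, hd, hx, rfl⟩ := hx
    induction hy using AddSubgroup.closure_induction with
    | mem y hy =>
      obtain ⟨d', y, hd', hy, rfl⟩ := hy
      refine AddSubgroup.subset_closure ⟨d + d', ⁅x, y⁆, by omega, Γ.lie_mem hx hy, ?_⟩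
      rw [tm_lie, pow_add]
    | zero => simp
    | add x y _ _ hx hy => rw [lie_add]; exact add_mem hx hy
    | neg x _ hx => rw [lie_neg]; exact neg_mem hx
  | zero => simp
  | add x y _ _ hx hy => rw [add_lie]; exact add_mem hx hy
  | neg x _ hx => rw [neg_lie]; exact neg_mem hx

noncomputable def TF (i : ℕ) : AddSubgroup (T L) := AddSubgroup.closure {v | ∃ (s : Polynomial ℤ) (x : L), x ∈ Γ.F i ∧ v = tm s x}

lemma TF_one (x : T L) : x ∈ TF Γ 1 := by
  induction x using T_ind with
  | h0 => simp
  | ht s x => exact AddSubgroup.subset_closure ⟨s, x, by rw [Γ.one]; trivial, rfl⟩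
  | ha x y hx hy => exact add_mem hx hy

lemma TF_lie (i : ℕ) (x y : T L) (hy : y ∈ TF Γ i) : ⁅x, y⁆ ∈ TF Γ (i + 1) := by
  induction x using T_ind with
  | h0 => simp
  | ha x y hx hy => rw [add_lie]; exact add_mem hx hy
  | ht s x =>
    induction hy using AddSubgroup.closure_induction with
    | mem y hy =>
      obtain ⟨s', y, hy, rfl⟩ := hy
      refine AddSubgroup.subset_closure ⟨s * s', ⁅x, y⁆, ?_, ?_⟩
      · rw [add_comm]; exact Γ.lie_mem (by rw [Γ.one]; trivial) hy
      · rw [tm_lie]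
    | zero => simp
    | add x y _ _ hx hy => rw [lie_add]; exact add_mem hx hy
    | neg x _ hx => rw [lie_neg]; exact neg_mem hx

lemma TF_anti (i : ℕ) : TF Γ (i + 1) ≤ TF Γ i := by
  apply AddSubgroup.closure_mono
  rintro _ ⟨s, x, hx, rfl⟩
  exact ⟨s, x, Γ.anti i hx, rfl⟩

lemma TF_top : TF Γ p = ⊥ := by
  rw [eq_bot_iff, TF, AddSubgroup.closure_le]
  rintro _ ⟨s, x, hx, rfl⟩
  rw [Γ.eq_zero le_rfl hx, tm_zero]; simp

lemma evT_lie (x y : T L) : evT ⁅x, y⁆ = ⁅evT x, evT y⁆ := by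
  induction x using T_ind with
  | h0 => simp
  | ha x x' hx hx' => simp only [add_lie, map_add, hx, hx']
  | ht s x => 
    induction y using T_ind with
    | h0 => simp
    | ha y y' hy hy' => simp only [lie_add, map_add, hy, hy']
    | ht s' y =>
      rw [tm_lie, evT_tm, evT_tm, evT_tm, Polynomial.eval_mul, smul_lie, lie_smul, smul_smul]

/-- A package of a Lie ring with filtered associative envelope covering `L`. -/
theorem rees_main (hp : p.Prime) (Γ : LFilt p N L) : ∃ (T : Type) (_ : LieRing T) (S : AddSubgroup T) (ev : T →+ L) (A : Type) (_ : Ring A)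
    (Φ : Filt p N A) (ρ : T →+ A), (∀ x y, ev ⁅x, y⁆ = ⁅ev x, ev y⁆) ∧ (∀ x y, ρ ⁅x, y⁆ = ⁅ρ x, ρ y⁆) ∧
      (∀ x, ρ x ∈ Φ.F 1) ∧ (∀ x ∈ S, ∀ y ∈ S, ⁅x, y⁆ ∈ S) ∧ (∀ x ∈ S, ∀ y ∈ S, ρ x = ρ y → x = y) ∧
      ∃ sec : L → T, (∀ x, sec x ∈ S) ∧ (∀ x, ev (sec x) = x) ∧ ∀ a b, ⁅a, b⁆ = 0 → ⁅sec a, sec b⁆ = 0 := by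
  let _ : Module (ZMod (p ^ N)) (T L) := AddCommGroup.zmodModule (T_tors Γ)
  let D : ℕ → AddSubgroup (T L × ZMod (p ^ N)) := fun i => if i = 0 then ⊤ else (TF Γ i).prod ⊥
  have hp2 := hp.two_le
  let Φ : Filt p N (Module.End ℤ (T L × ZMod (p ^ N))) := endFilt p N D (by
      intro i
      rcases i with _ | i
      · simp [D]
      · simp only [D, Nat.succ_ne_zero, if_false]
        exact AddSubgroup.prod_mono (TF_anti Γ _) le_rfl) (by simp [D]) (by
      simp only [D, hp.ne_zero, if_false, TF_top]; ext x; simp [Prod.ext_iff]) (by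
      rintro ⟨x, r⟩
      ext
      · exact T_tors Γ x
      · simp [nsmul_eq_mul])
  let ρ0 : T L → Module.End ℤ (T L × ZMod (p ^ N)) := fun f => (AddMonoidHom.mk' (fun v : (T L × ZMod (p ^ N)) => ((⁅f, v.1⁆ + v.2 • Ed f, 0) : (T L × ZMod (p ^ N)))) (by
      rintro ⟨x, r⟩ ⟨y, s⟩; simp [add_smul]; abel)).toIntLinearMap
  have hρ0 : ∀ f v, ρ0 f v = (⁅f, v.1⁆ + v.2 • Ed f, 0) := fun _ _ => rfl
  let ρ : T L →+ Module.End ℤ (T L × ZMod (p ^ N)) := AddMonoidHom.mk' ρ0 (by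
      intro f g
      refine LinearMap.ext fun v => ?_
      rw [LinearMap.add_apply, hρ0, hρ0, hρ0]
      simp [smul_add]; abel)
  refine ⟨T L, inferInstance, LS Γ, evT, Module.End ℤ (T L × ZMod (p ^ N)), inferInstance, Φ, ρ, evT_lie, ?_, ?_, fun x hx y hy => LS_lie Γ x y hx hy, ?_, ?_⟩
  · intro f g
    refine LinearMap.ext fun v => ?_
    rw [Ring.lie_def, LinearMap.sub_apply, Module.End.mul_apply, Module.End.mul_apply]
    show ρ0 _ _ = ρ0 _ (ρ0 _ _) - ρ0 _ (ρ0 _ _)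
    rw [hρ0, hρ0, hρ0, hρ0, hρ0, Ed_lie]
    have hsm : ∀ (r : ZMod (p ^ N)) (x y : T L), ⁅x, r • y⁆ = r • ⁅x, y⁆ := fun r x y => 
      ZMod.map_smul (show T L →+ T L from AddMonoidHom.mk' (fun y => ⁅x, y⁆) (lie_add x)) r y
    ext
    · simp only [lie_add, hsm, zero_smul, add_zero, Prod.fst_sub, smul_add, lie_lie]
      rw [← lie_skew g (Ed f)]
      simp only [smul_neg]
      abel
    · simp
  · intro f i v hv
    show ρ0 f v ∈ D (i + 1)
    rw [hρ0]
    simp only [D, Nat.succ_ne_zero, if_false, AddSubgroup.mem_prod, AddSubgroup.mem_bot, and_true]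
    rcases i with _ | i
    · exact TF_one _ _
    · simp only [D, Nat.succ_ne_zero, if_false, AddSubgroup.mem_prod, AddSubgroup.mem_bot] at hv
      rw [hv.2, zero_smul, add_zero]
      exact TF_lie Γ _ _ _ hv.1
  · intro x hx y hy h
    have h1 := congrArg (fun a => (a (0, 1)).1) h
    have h2 : Ed x = Ed y := by
      have : (ρ0 x (0, 1)).1 = (ρ0 y (0, 1)).1 := h1
      simpa [hρ0] using this
    rw [← ivT_Ed Γ hp x hx, h2, ivT_Ed Γ hp y hy]
  · refine ⟨fun x => tm (Polynomial.X ^ 1) x, fun x => AddSubgroup.subset_closure ⟨1, x, le_rfl, by rw [Γ.one]; trivial, rfl⟩, fun x => ?_, fun a b h => ?_⟩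
    · rw [evT_tm]; simp
    · rw [tm_lie, h, tm_zero]

end rees
end Laz


namespace Laz
open Finset
attribute [local instance] LieRing.ofAssociativeRing

class IsLaz (p N : ℕ) (L : Type) [LieRing L] : Prop where
  out : Nonempty (LFilt p N L)

/-- the BCH product -/
noncomputable def lmul (p N : ℕ) {L : Type} [LieRing L] (a b : L) : L := evl ![a, b] (bch p N)

lemma lmul_map {p N : ℕ} {L L' : Type} [LieRing L] [LieRing L'] (f : L →+ L')
    (hf : ∀ x y, f ⁅x, y⁆ = ⁅f x, f y⁆) (a b : L) : f (lmul p N a b) = lmul p N (f a) (f b) := by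
  rw [lmul, evl_map f hf, lmul]
  congr 2
  funext i; fin_cases i <;> rfl

lemma lmul_mem {p N : ℕ} {L : Type} [LieRing L] (S : AddSubgroup L) (hS : ∀ x ∈ S, ∀ y ∈ S, ⁅x, y⁆ ∈ S)
    {a b : L} (ha : a ∈ S) (hb : b ∈ S) : lmul p N a b ∈ S := by
  refine evl_mem S hS _ ?_ _
  intro i; fin_cases i <;> simpa

section
variable {p N : ℕ} {L : Type} [LieRing L]

lemma tors (p N : ℕ) [h : IsLaz p N L] (a : L) : (p ^ N) • a = 0 := h.out.some.tors a

lemma exp_lmul (hp : p.Prime) {T A : Type} [LieRing T] [Ring A] (Φ : Filt p N A) (ρ : T →+ A) (hρ : ∀ x y, ρ ⁅x, y⁆ = ⁅ρ x, ρ y⁆)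
    (hρ1 : ∀ x, ρ x ∈ Φ.F 1) (a b : T) : pexp p N (ρ (lmul p N a b)) = pexp p N (ρ a) * pexp p N (ρ b) := by
  rw [lmul_map ρ hρ, lmul]
  have := Φ.bch_eq hp ![ρ a, ρ b] (by intro i; fin_cases i <;> exact hρ1 _)
  rw [← this]; rfl

variable [Fact p.Prime] [h : IsLaz p N L]

lemma lmul_assoc (a b c : L) : lmul p N (lmul p N a b) c = lmul p N a (lmul p N b c) := by
  have hp : p.Prime := Fact.out
  obtain ⟨T, _, S, ev, A, _, Φ, ρ, hev, hρ, hρ1, hS, hinj, sec, hsec, hes, hcomm⟩ := rees_main hp h.out.some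
  rw [← hes a, ← hes b, ← hes c, ← lmul_map ev hev, ← lmul_map ev hev, ← lmul_map ev hev, ← lmul_map ev hev]
  congr 1
  refine hinj _ (lmul_mem S hS (lmul_mem S hS (hsec _) (hsec _)) (hsec _)) _ (lmul_mem S hS (hsec _) (lmul_mem S hS (hsec _) (hsec _))) ?_
  refine Φ.exp_inj hp (hρ1 _) (hρ1 _) ?_
  simp only [exp_lmul hp Φ ρ hρ hρ1, mul_assoc]

lemma lmul_comm_add (a b : L) (hab : ⁅a, b⁆ = 0) : lmul p N a b = a + b := by
  have hp : p.Prime := Fact.out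
  obtain ⟨T, _, S, ev, A, _, Φ, ρ, hev, hρ, hρ1, hS, hinj, sec, hsec, hes, hcomm⟩ := rees_main hp h.out.some
  rw [← hes a, ← hes b, ← lmul_map ev hev, ← map_add]
  congr 1
  refine hinj _ (lmul_mem S hS (hsec _) (hsec _)) _ (add_mem (hsec _) (hsec _)) ?_
  refine Φ.exp_inj hp (hρ1 _) (hρ1 _) ?_
  rw [exp_lmul hp Φ ρ hρ hρ1, map_add, Φ.exp_add hp (hρ1 _) (hρ1 _)]
  have := hρ (sec a) (sec b)
  rw [hcomm a b hab, map_zero, Ring.lie_def] at this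
  exact (sub_eq_zero.1 this.symm)

lemma exp_conj_exp (hp : p.Prime) {A : Type} [Ring A] (Φ : Filt p N A) {a b : A} (ha : a ∈ Φ.F 1) (hb : b ∈ Φ.F 1) :
    pexp p N a * pexp p N b * pexp p N (-a) = pexp p N (Ead p N a b) := by
  rw [← Φ.exp_conj hp ha (Φ.anti _ hb)]
  have h1 := Φ.exp_mul_neg hp ha
  have h2 := Φ.exp_neg_mul hp ha
  generalize pexp p N a = E at *
  generalize pexp p N (-a) = E' at *
  rw [pexp, pexp, Finset.mul_sum, Finset.sum_mul]
  refine sum_congr rfl fun k hk => ?_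
  rw [mul_smul_comm, smul_mul_assoc]
  congr 1
  clear hk
  induction k with
  | zero => simp [h1]
  | succ k ih =>
    rw [pow_succ, pow_succ, ← ih]
    simp only [mul_assoc]
    rw [← mul_assoc E' E, h2, one_mul]

lemma lmul_conj (a b : L) : lmul p N (lmul p N a b) (-a) = Ead p N a b := by
  have hp : p.Prime := Fact.out
  obtain ⟨T, _, S, ev, A, _, Φ, ρ, hev, hρ, hρ1, hS, hinj, sec, hsec, hes, hcomm⟩ := rees_main hp h.out.some
  rw [← hes a, ← hes b, ← Ead_map p N ev hev, ← map_neg, ← lmul_map ev hev, ← lmul_map ev hev]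
  congr 1
  refine hinj _ (lmul_mem S hS (lmul_mem S hS (hsec _) (hsec _)) (neg_mem (hsec _))) _ (Ead_mem _ _ S (hsec _) (hS _ (hsec _))) ?_
  refine Φ.exp_inj hp (hρ1 _) (hρ1 _) ?_
  rw [Ead_map p N ρ hρ, ← exp_conj_exp hp Φ (hρ1 _) (hρ1 _)]
  simp only [exp_lmul hp Φ ρ hρ hρ1, map_neg]

end

/-- type synonym carrying the Lazard group structure -/
def LG (_p _N : ℕ) (L : Type) : Type := L

namespace LG
variable {p N : ℕ} {L : Type} 
def mk (x : L) : LG p N L := x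
def val (x : LG p N L) : L := x
@[simp] lemma val_mk (x : L) : (mk x : LG p N L).val = x := rfl
@[simp] lemma mk_val (x : LG p N L) : (mk x.val : LG p N L) = x := rfl
@[ext] lemma ext {x y : LG p N L} (h : x.val = y.val) : x = y := h
def equiv : L ≃ LG p N L := ⟨mk, val, fun _ => rfl, fun _ => rfl⟩

variable [LieRing L] [Fact p.Prime] [IsLaz p N L]

noncomputable instance : Group (LG p N L) :=
  { mul := fun a b => mk (lmul p N a.val b.val)
    one := mk 0
    inv := fun a => mk (- a.val)
    mul_assoc := fun a b c => lmul_assoc (p := p) (N := N) (L := L) a b c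
    one_mul := fun a => by
      show lmul p N (0 : L) (a.val) = a.val
      rw [lmul_comm_add _ _ (by simp), zero_add]
    mul_one := fun a => by
      show lmul p N (a.val) (0 : L) = a.val
      rw [lmul_comm_add _ _ (by simp), add_zero]
    inv_mul_cancel := fun a => by
      show lmul p N (- a.val) (a.val) = (0 : L)
      rw [lmul_comm_add _ _ (by simp), neg_add_cancel] }

lemma val_mul (a b : LG p N L) : (a * b).val = lmul p N a.val b.val := rfl
@[simp] lemma val_one : (1 : LG p N L).val = 0 := rfl
@[simp] lemma val_inv (a : LG p N L) : (a⁻¹).val = - a.val := rfl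
lemma mk_zero : (mk 0 : LG p N L) = 1 := rfl

lemma val_mul_of_comm (a b : LG p N L) (h : ⁅a.val, b.val⁆ = 0) : (a * b).val = a.val + b.val :=
  lmul_comm_add _ _ h

@[simp] lemma val_pow (a : LG p N L) (k : ℕ) : (a ^ k).val = k • a.val := by
  induction k with
  | zero => simp
  | succ k ih => rw [pow_succ, val_mul_of_comm _ _ (by rw [ih]; simp), ih, add_smul, one_smul]

@[simp] lemma val_zpow (a : LG p N L) (k : ℤ) : (a ^ k).val = k • a.val := by
  cases k with
  | ofNat k => simp
  | negSucc k => rw [zpow_negSucc, val_inv, val_pow, negSucc_zsmul]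

lemma val_conj (a b : LG p N L) : (a * b * a⁻¹).val = Ead p N a.val b.val := lmul_conj _ _

/-- functoriality -/
noncomputable def map {L' : Type} [LieRing L'] [IsLaz p N L'] (f : L →+ L') (hf : ∀ x y, f ⁅x, y⁆ = ⁅f x, f y⁆) :
    LG p N L →* LG p N L' :=
  MonoidHom.mk' (fun x => mk (f x.val)) (fun a b => by
    ext; rw [val_mk, val_mul, lmul_map f hf, val_mul]; rfl)

@[simp] lemma map_val {L' : Type} [LieRing L'] [IsLaz p N L'] (f : L →+ L') (hf : ∀ x y, f ⁅x, y⁆ = ⁅f x, f y⁆) (x : LG p N L) :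
    (map f hf x).val = f x.val := rfl

end LG
end Laz


namespace Laz
open Finset
attribute [local instance] LieRing.ofAssociativeRing

/-- weak chains suffice -/
lemma exists_strong {p N : ℕ} {L : Type} [LieRing L] (D : ℕ → AddSubgroup L) (h1 : D 1 = ⊤) (hanti : ∀ i, D (i + 1) ≤ D i)
    (hlie : ∀ i (x y : L), y ∈ D i → ⁅x, y⁆ ∈ D (i + 1)) (htop : D p = ⊥) (htors : ∀ a : L, (p ^ N) • a = 0) :
    ∃ Γ : LFilt p N L, ∀ i x, x ∈ Γ.F i ↔ x ∈ D i ∧ ∀ j, ∀ y ∈ D j, ⁅x, y⁆ ∈ D (j + i) := by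
  refine ⟨{ F := fun i => { carrier := {x | x ∈ D i ∧ ∀ j, ∀ y ∈ D j, ⁅x, y⁆ ∈ D (j + i)}, add_mem' := ?_, zero_mem' := ?_, neg_mem' := ?_ }, one := ?_, anti := ?_, lie_mem := ?_, top := ?_, tors := htors }, fun i x => Iff.rfl⟩
  · rintro a b ⟨ha, ha'⟩ ⟨hb, hb'⟩
    exact ⟨add_mem ha hb, fun j y hy => by rw [add_lie]; exact add_mem (ha' j y hy) (hb' j y hy)⟩
  · exact ⟨zero_mem _, fun j y hy => by rw [zero_lie]; exact zero_mem _⟩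
  · rintro a ⟨ha, ha'⟩
    exact ⟨neg_mem ha, fun j y hy => by rw [neg_lie]; exact neg_mem (ha' j y hy)⟩
  · rw [eq_top_iff]; intro x _
    exact ⟨by rw [h1]; trivial, fun j y hy => hlie j x y hy⟩
  · rintro i x ⟨hx, hx'⟩
    exact ⟨hanti i hx, fun j y hy => hanti _ (hx' j y hy)⟩
  · rintro i j a b ⟨ha, ha'⟩ ⟨hb, hb'⟩
    refine ⟨by rw [add_comm]; exact ha' j b hb, fun k y hy => ?_⟩
    rw [lie_lie]
    refine sub_mem ?_ ?_
    · have := ha' _ _ (hb' _ _ hy)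
      rwa [show k + (i + j) = k + j + i by omega]
    · have := hb' _ _ (ha' _ _ hy)
      rwa [show k + (i + j) = k + i + j by omega]
  · rw [eq_bot_iff]; rintro x ⟨hx, -⟩; rwa [htop] at hx

lemma IsLaz.of_chain {p N : ℕ} {L : Type} [LieRing L] (D : ℕ → AddSubgroup L) (h1 : D 1 = ⊤) (hanti : ∀ i, D (i + 1) ≤ D i)
    (hlie : ∀ i (x y : L), y ∈ D i → ⁅x, y⁆ ∈ D (i + 1)) (htop : D p = ⊥) (htors : ∀ a : L, (p ^ N) • a = 0) : IsLaz p N L := by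
  obtain ⟨Γ, -⟩ := exists_strong D h1 hanti hlie htop htors
  exact ⟨⟨Γ⟩⟩

section
variable {p N : ℕ} {L L' : Type} [LieRing L] [LieRing L']

lemma IsLaz.of_surj [h : IsLaz p N L] (f : L →+ L') (hf : ∀ x y, f ⁅x, y⁆ = ⁅f x, f y⁆) (hs : Function.Surjective f) : IsLaz p N L' := by
  obtain ⟨Γ⟩ := h.out
  refine ⟨⟨{ F := fun i => (Γ.F i).map f, one := ?_, anti := fun i => AddSubgroup.map_mono (Γ.anti i), lie_mem := ?_, top := ?_, tors := ?_ }⟩⟩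
  · rw [Γ.one]; exact AddSubgroup.map_top_of_surjective f hs
  · rintro i j _ _ ⟨a, ha, rfl⟩ ⟨b, hb, rfl⟩
    exact ⟨⁅a, b⁆, Γ.lie_mem ha hb, hf a b⟩
  · rw [Γ.top, AddSubgroup.map_bot]
  · intro a; obtain ⟨a, rfl⟩ := hs a
    rw [← map_nsmul, Γ.tors, map_zero]

lemma IsLaz.of_inj [h : IsLaz p N L'] (f : L →+ L') (hf : ∀ x y, f ⁅x, y⁆ = ⁅f x, f y⁆) (hs : Function.Injective f) : IsLaz p N L := by
  obtain ⟨Γ⟩ := h.out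
  refine ⟨⟨{ F := fun i => (Γ.F i).comap f, one := ?_, anti := fun i => AddSubgroup.comap_mono (Γ.anti i), lie_mem := ?_, top := ?_, tors := ?_ }⟩⟩
  · rw [Γ.one]; rfl
  · intro i j a b ha hb
    rw [AddSubgroup.mem_comap, hf]; exact Γ.lie_mem ha hb
  · rw [Γ.top, eq_bot_iff]
    intro x hx
    exact hs (by rw [map_zero]; exact hx)
  · intro a; apply hs; rw [map_nsmul, Γ.tors, map_zero]

instance IsLaz.prod [h : IsLaz p N L] [h' : IsLaz p N L'] : IsLaz p N (L × L') := by
  obtain ⟨Γ⟩ := h.out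
  obtain ⟨Γ'⟩ := h'.out
  refine ⟨⟨{ F := fun i => (Γ.F i).prod (Γ'.F i), one := ?_, anti := fun i => AddSubgroup.prod_mono (Γ.anti i) (Γ'.anti i), lie_mem := ?_, top := ?_, tors := ?_ }⟩⟩
  · rw [Γ.one, Γ'.one]; exact AddSubgroup.top_prod_top
  · intro i j a b ha hb
    exact ⟨Γ.lie_mem ha.1 hb.1, Γ'.lie_mem ha.2 hb.2⟩
  · rw [Γ.top, Γ'.top]; exact AddSubgroup.bot_prod_bot
  · intro a; exact Prod.ext (Γ.tors _) (Γ'.tors _)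

/-- make a Lie ideal -/
def mkIdeal (I : AddSubgroup L) (h : ∀ x y : L, y ∈ I → ⁅x, y⁆ ∈ I) : LieIdeal ℤ L :=
  { I with
    smul_mem' := fun c x hx => zsmul_mem (K := I) hx c
    lie_mem := fun {x y} hy => h x y hy }

noncomputable def qmk (I : LieIdeal ℤ L) : L →+ L ⧸ I := (LieSubmodule.Quotient.mk' I : L →ₗ[ℤ] L ⧸ I).toAddMonoidHom

lemma qmk_lie (I : LieIdeal ℤ L) (x y : L) : qmk I ⁅x, y⁆ = ⁅qmk I x, qmk I y⁆ := LieSubmodule.Quotient.mk_bracket I x y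

lemma qmk_surj (I : LieIdeal ℤ L) : Function.Surjective (qmk I) := LieSubmodule.Quotient.surjective_mk' I

lemma qmk_eq_zero (I : LieIdeal ℤ L) (x : L) : qmk I x = 0 ↔ x ∈ I := LieSubmodule.Quotient.mk_eq_zero (N := I)

instance IsLaz.quot [IsLaz p N L] (I : LieIdeal ℤ L) : IsLaz p N (L ⧸ I) := IsLaz.of_surj (qmk I) (qmk_lie I) (qmk_surj I)

instance IsLaz.sub [IsLaz p N L] (S : LieSubalgebra ℤ L) : IsLaz p N S :=
  IsLaz.of_inj (S.toSubmodule.subtype.toAddMonoidHom) (fun _ _ => rfl) Subtype.val_injective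

variable [Fact p.Prime] [IsLaz p N L] [IsLaz p N L']

lemma lmul_sub_mem (I : AddSubgroup L) (hI : ∀ x y : L, y ∈ I → ⁅x, y⁆ ∈ I) (a b : L) (h : ⁅a, b⁆ ∈ I) :
    lmul p N a b - (a + b) ∈ I := by
  have : qmk (mkIdeal I hI) (lmul p N a b - (a + b)) = 0 := by
    rw [map_sub, lmul_map _ (qmk_lie _), lmul_comm_add, map_add, sub_self]
    rw [← qmk_lie, qmk_eq_zero]; exact h
  rw [qmk_eq_zero] at this
  exact this

lemma e_one' (hp : p.Prime) (x : L) (hx : (p ^ N) • x = 0) : e p N 1 • x = x := by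
  rw [nsmul_congr _ hx (e_one hp), one_smul]

lemma Ead_two (z a : L) (h : ⁅z, ⁅z, a⁆⁆ = 0) : Ead p N z a = a + ⁅z, a⁆ := by
  have hp : p.Prime := Fact.out
  obtain ⟨m, rfl⟩ : ∃ m, p = m + 2 := ⟨p - 2, by have := hp.two_le; omega⟩
  rw [Ead, sum_range_succ', sum_range_succ', Finset.sum_eq_zero, Function.iterate_zero_apply, nsmul_congr _ (tors _ _ _) (e_zero hp), one_smul]
  · rw [zero_add, zero_add, Function.iterate_one, e_one' hp _ (tors _ _ _), add_comm]
  · intro k hk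
    clear hk
    rw [Function.iterate_add_apply]
    show _ • (fun x => ⁅z, x⁆)^[k] (⁅z, ⁅z, a⁆⁆) = 0
    rw [h]
    clear h
    have : (fun x : L => ⁅z, x⁆)^[k] 0 = 0 := by
      induction k with
      | zero => rfl
      | succ k ih => rw [Function.iterate_succ_apply', ih, lie_zero]
    rw [this, smul_zero]

lemma Ead_mod (I : AddSubgroup L) (hI : ∀ x y : L, y ∈ I → ⁅x, y⁆ ∈ I) (a b : L) (h : ⁅a, ⁅a, b⁆⁆ ∈ I) :
    Ead p N a b - (b + ⁅a, b⁆) ∈ I := by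
  have : qmk (mkIdeal I hI) (Ead p N a b - (b + ⁅a, b⁆)) = 0 := by
    rw [map_sub, Ead_map _ _ _ (qmk_lie _), Ead_two, map_add, qmk_lie, sub_self]
    rw [← qmk_lie, ← qmk_lie, qmk_eq_zero]; exact h
  rw [qmk_eq_zero] at this
  exact this

/-- homs to commutative groups -/
lemma hom_comm_aux {A : Type*} [CommGroup A] (χ : LG p N L →* A) (Γ : LFilt p N L) (i : ℕ) (hi : i < p) :
    ∀ a : L, ∀ u ∈ AddSubgroup.closure {z | ∃ x y : L, y ∈ Γ.F (p - i) ∧ ⁅x, y⁆ = z}, χ (LG.mk (a + u)) = χ (LG.mk a) := by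
  have hm : ∀ {k} {x y : L}, y ∈ Γ.F k → ⁅x, y⁆ ∈ Γ.F (k + 1) := by
    intro k x y hy
    rw [add_comm]
    exact Γ.lie_mem (by rw [Γ.one]; trivial) hy
  induction i with
  | zero =>
    intro a u hu
    have : u = 0 := by
      refine AddSubgroup.closure_induction (p := fun u _ => u = 0) ?_ rfl ?_ ?_ hu
      · rintro _ ⟨x, y, hy, rfl⟩
        rw [Nat.sub_zero, Γ.top, AddSubgroup.mem_bot] at hy
        rw [hy, lie_zero]
      · rintro x y _ _ rfl rfl; simp
      · rintro x _ rfl; simp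
    rw [this, add_zero]
  | succ i ih =>
    specialize ih (by omega)
    set J := AddSubgroup.closure {z | ∃ x y : L, y ∈ Γ.F (p - i) ∧ ⁅x, y⁆ = z} with hJ
    have hJ1 : ∀ x y : L, y ∈ Γ.F (p - i) → ⁅x, y⁆ ∈ J := fun x y hy => AddSubgroup.subset_closure ⟨x, y, hy, rfl⟩
    have hJF : ∀ u ∈ J, u ∈ Γ.F (p - i) := by
      intro u hu
      refine AddSubgroup.closure_le _ |>.2 ?_ hu
      rintro _ ⟨x, y, hy, rfl⟩
      exact Γ.anti _ (hm hy)
    have hJI : ∀ x y : L, y ∈ J → ⁅x, y⁆ ∈ J := fun x y hy => hJ1 _ _ (hJF _ hy)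
    have key : ∀ x y : L, y ∈ Γ.F (p - (i + 1)) → ∀ a, χ (LG.mk (a + ⁅x, y⁆)) = χ (LG.mk a) := by
      intro x y hy a
      have hz : ⁅x, y⁆ ∈ Γ.F (p - i) := by
        have := hm (x := x) hy
        rwa [show p - (i + 1) + 1 = p - i by omega] at this
      have h1 : ∀ b, χ (LG.mk (b + ⁅x, y⁆)) = χ (LG.mk b) * χ (LG.mk ⁅x, y⁆) := by
        intro b
        rw [← map_mul]
        have := lmul_sub_mem (p := p) (N := N) J hJI b ⁅x, y⁆ (hJ1 _ _ hz)
        have h2 := ih (b + ⁅x, y⁆) _ this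
        rw [add_sub_cancel] at h2
        exact h2.symm
      have h2 : χ (LG.mk ⁅x, y⁆) = 1 := by
        have h3 := ih (y + ⁅x, y⁆) _ (Ead_mod (p := p) (N := N) J hJI x y (hJ1 _ _ hz))
        rw [add_sub_cancel, h1] at h3
        have h4 : χ (LG.mk x * LG.mk y * (LG.mk x)⁻¹) = χ (LG.mk (Ead p N x y)) := congrArg χ (LG.ext (LG.val_conj _ _))
        rw [h3] at h4
        simp only [map_mul, map_inv] at h4
        rw [mul_inv_cancel_comm] at h4
        exact left_eq_mul.1 h4
      rw [h1, h2, mul_one]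
    intro a u hu
    revert a
    refine AddSubgroup.closure_induction (p := fun u _ => ∀ a : L, χ (LG.mk (a + u)) = χ (LG.mk a)) ?_ ?_ ?_ ?_ hu
    · rintro _ ⟨x, y, hy, rfl⟩ a
      exact key x y hy a
    · intro a; rw [add_zero]
    · intro x y _ _ hx hy a
      rw [← add_assoc, hy, hx]
    · intro x _ hx a
      rw [← hx (a + -x), neg_add_cancel_right]

lemma hom_comm {A : Type*} [CommGroup A] (χ : LG p N L →* A) :
    (∀ a b, χ (LG.mk (a + b)) = χ (LG.mk a) * χ (LG.mk b)) ∧ ∀ a b : L, χ (LG.mk ⁅a, b⁆) = 1 := by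
  have hp : p.Prime := Fact.out
  obtain ⟨Γ⟩ := IsLaz.out (p := p) (N := N) (L := L)
  have := hom_comm_aux χ Γ (p - 1) (by have := hp.two_le; omega)
  rw [show p - (p - 1) = 1 by have := hp.two_le; omega, Γ.one] at this
  set J := AddSubgroup.closure {z : L | ∃ x y : L, y ∈ (⊤ : AddSubgroup L) ∧ ⁅x, y⁆ = z} with hJ
  have hJ1 : ∀ x y : L, ⁅x, y⁆ ∈ J := fun x y => AddSubgroup.subset_closure ⟨x, y, trivial, rfl⟩
  constructor
  · intro a b
    have h2 := this (a + b) _ (lmul_sub_mem (p := p) (N := N) J (fun x y _ => hJ1 x y) a b (hJ1 _ _))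
    rw [add_sub_cancel] at h2
    rw [← h2, ← map_mul]; rfl
  · intro a b
    have := this 0 _ (hJ1 a b)
    rw [zero_add] at this
    rw [this, LG.mk_zero, map_one]

end
end Laz


namespace Laz
open Finset
attribute [local instance] LieRing.ofAssociativeRing

section
variable {p N : ℕ} {L L' : Type} [LieRing L] [LieRing L'] [Fact p.Prime] [IsLaz p N L] [IsLaz p N L']

lemma LG.isPGroup : IsPGroup p (LG p N L) := fun g => ⟨N, by ext; rw [LG.val_pow, tors]; rfl⟩

instance [Finite L] : Finite (LG p N L) := inferInstanceAs (Finite L)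

/-- a proper subgroup of a finite p-group lies in the kernel of a nontrivial abelian character -/
lemma exists_char {G : Type} [Group G] [Finite G] (hG : IsPGroup p G) (S : Subgroup G) (hS : S ≠ ⊤) :
    ∃ (A : Type) (_ : CommGroup A) (χ : G →* A), S ≤ χ.ker ∧ χ.ker ≠ ⊤ := by
  obtain ⟨H, hH, hSH⟩ := (eq_top_or_exists_le_coatom S).resolve_left hS
  have : Group.IsNilpotent G := hG.isNilpotent
  have hn : H.Normal := Subgroup.NormalizerCondition.normal_of_coatom H Group.normalizerCondition_of_isNilpotent hH
  refine ⟨Abelianization (G ⧸ H), inferInstance, (Abelianization.of).comp (QuotientGroup.mk' H), ?_, ?_⟩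
  · intro x hx
    rw [MonoidHom.mem_ker, MonoidHom.comp_apply, QuotientGroup.mk'_apply, (QuotientGroup.eq_one_iff (N := H) x).2 (hSH hx), map_one]
  · intro h
    have hnt : Nontrivial (G ⧸ H) := QuotientGroup.nontrivial_iff.2 hH.1
    have := Group.IsSolvable.commutator_lt_top_of_nontrivial (G ⧸ H)
    apply this.ne
    rw [eq_top_iff]
    intro x _
    obtain ⟨g, rfl⟩ := QuotientGroup.mk'_surjective H x
    rw [← Abelianization.ker_of, MonoidHom.mem_ker, ← MonoidHom.comp_apply, ← MonoidHom.mem_ker, h]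
    trivial

/-- subgroups are Lie subrings -/
lemma subgroup_lie [Finite L] (S : Subgroup (LG p N L)) :
    (∀ a b : L, LG.mk a ∈ S → LG.mk b ∈ S → LG.mk (a + b) ∈ S) ∧ (∀ a b : L, LG.mk a ∈ S → LG.mk b ∈ S → LG.mk ⁅a, b⁆ ∈ S) := by
  set U := LieSubalgebra.lieSpan ℤ L {x : L | LG.mk x ∈ S} with hU
  let f : LG p N U →* LG p N L := LG.map (U.toSubmodule.subtype.toAddMonoidHom) (fun _ _ => rfl)
  have hf : ∀ u : U, f (LG.mk u) = LG.mk (u : L) := fun _ => rfl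
  have main : S.comap f = ⊤ := by
    by_contra hne
    obtain ⟨A, _, χ, h1, h2⟩ := exists_char (p := p) LG.isPGroup _ hne
    obtain ⟨hadd, hlie⟩ := hom_comm χ
    apply h2
    let V : LieSubalgebra ℤ L :=
      { carrier := {x | ∃ h : x ∈ U, χ (LG.mk ⟨x, h⟩) = 1}
        add_mem' := by
          rintro a b ⟨ha, ha'⟩ ⟨hb, hb'⟩
          refine ⟨add_mem ha hb, ?_⟩
          have := hadd ⟨a, ha⟩ ⟨b, hb⟩
          rw [ha', hb', one_mul] at this
          exact this
        zero_mem' := ⟨zero_mem _, map_one χ⟩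
        smul_mem' := by
          rintro c x ⟨hx, hx'⟩
          refine ⟨U.smul_mem c hx, ?_⟩
          have : (LG.mk ⟨c • x, U.smul_mem c hx⟩ : LG p N U) = (LG.mk ⟨x, hx⟩) ^ c := by
            ext1; rw [LG.val_zpow]; rfl
          rw [this, map_zpow, hx', one_zpow]
        lie_mem' := by
          rintro a b ⟨ha, ha'⟩ ⟨hb, hb'⟩
          exact ⟨U.lie_mem ha hb, hlie ⟨a, ha⟩ ⟨b, hb⟩⟩ }
    have hUV : U ≤ V := by
      rw [hU, LieSubalgebra.lieSpan_le]
      intro x hx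
      exact ⟨LieSubalgebra.subset_lieSpan hx, h1 (show f (LG.mk _) ∈ S by rw [hf]; exact hx)⟩
    rw [eq_top_iff]
    intro x _
    exact (hUV x.val.2).2
  have hmem : ∀ x ∈ U, LG.mk x ∈ S := by
    intro x hx
    have : LG.mk ⟨x, hx⟩ ∈ S.comap f := by rw [main]; trivial
    exact this
  exact ⟨fun a b ha hb => hmem _ (add_mem (LieSubalgebra.subset_lieSpan ha) (LieSubalgebra.subset_lieSpan hb)),
    fun a b ha hb => hmem _ (U.lie_mem (LieSubalgebra.subset_lieSpan ha) (LieSubalgebra.subset_lieSpan hb))⟩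

/-- group homomorphisms are Lie homomorphisms -/
lemma hom_lie [Finite L] [Finite L'] (φ : LG p N L →* LG p N L') :
    (∀ a b : L, (φ (LG.mk (a + b))).val = (φ (LG.mk a)).val + (φ (LG.mk b)).val) ∧
    (∀ a b : L, (φ (LG.mk ⁅a, b⁆)).val = ⁅(φ (LG.mk a)).val, (φ (LG.mk b)).val⁆) := by
  have h1 : ∀ u v : L × L', (lmul p N u v).1 = lmul p N u.1 v.1 := fun u v => 
    lmul_map (AddMonoidHom.fst L L') (fun _ _ => rfl) u v
  have h2 : ∀ u v : L × L', (lmul p N u v).2 = lmul p N u.2 v.2 := fun u v => 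
    lmul_map (AddMonoidHom.snd L L') (fun _ _ => rfl) u v
  let ψ : LG p N L →* LG p N (L × L') := MonoidHom.mk' (fun x => LG.mk (x.val, (φ x).val)) (fun a b => by
    ext1
    rw [LG.val_mul]
    refine Prod.ext ?_ ?_
    · exact (h1 (a.val, (φ a).val) (b.val, (φ b).val)).symm
    · rw [map_mul]; exact (h2 (a.val, (φ a).val) (b.val, (φ b).val)).symm)
  obtain ⟨k1, k2⟩ := subgroup_lie ψ.range
  have hm : ∀ u : L × L', LG.mk u ∈ ψ.range ↔ (φ (LG.mk u.1)).val = u.2 := by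
    intro u
    constructor
    · rintro ⟨x, hx⟩
      have : (x.val, (φ x).val) = u := hx
      rw [← this]; rfl
    · intro h
      refine ⟨LG.mk u.1, ?_⟩
      exact (Prod.ext rfl h : (u.1, (φ (LG.mk u.1)).val) = u)
  constructor
  · intro a b
    exact (hm _).1 (k1 (a, (φ (LG.mk a)).val) (b, (φ (LG.mk b)).val) ((hm _).2 rfl) ((hm _).2 rfl))
  · intro a b
    exact (hm _).1 (k2 (a, (φ (LG.mk a)).val) (b, (φ (LG.mk b)).val) ((hm _).2 rfl) ((hm _).2 rfl))

end
end Laz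


namespace Laz
open Finset
attribute [local instance] LieRing.ofAssociativeRing

section
variable {p N : ℕ} {L L' : Type} [LieRing L] [LieRing L'] [Fact p.Prime] [IsLaz p N L] [IsLaz p N L']

lemma iso_iff [Finite L] [Finite L'] : Nonempty (LG p N L ≃* LG p N L') ↔ ∃ f : L ≃+ L', ∀ x y : L, f ⁅x, y⁆ = ⁅f x, f y⁆ := by
  constructor
  · rintro ⟨φ⟩
    obtain ⟨h1, h2⟩ := hom_lie φ.toMonoidHom
    refine ⟨{ toFun := fun x => (φ (LG.mk x)).val, invFun := fun y => (φ.symm (LG.mk y)).val, left_inv := ?_, right_inv := ?_, map_add' := h1 }, h2⟩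
    · intro x; exact congrArg LG.val (φ.symm_apply_apply (LG.mk x))
    · intro x; exact congrArg LG.val (φ.apply_symm_apply (LG.mk x))
  · rintro ⟨f, hf⟩
    refine ⟨MulEquiv.ofBijective (LG.map f.toAddMonoidHom hf) ?_⟩
    exact f.bijective

open scoped commutatorElement in
lemma commutator_iff : (∀ x y : LG p N L, ⁅x, y⁆ ^ p = 1) ↔ ∀ x y : L, p • ⁅x, y⁆ = 0 := by
  let Ω : AddSubgroup L := (nsmulAddMonoidHom p : L →+ L).ker
  have hΩ : ∀ z, z ∈ Ω ↔ p • z = 0 := fun z => Iff.rfl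
  have hI : ∀ x y : L, y ∈ Ω → ⁅x, y⁆ ∈ Ω := by
    intro x y hy
    rw [hΩ] at hy ⊢
    rw [← lie_nsmul, hy, lie_zero]
  set I := mkIdeal Ω hI with hII
  let π : LG p N L →* LG p N (L ⧸ I) := LG.map (qmk I) (qmk_lie I)
  have hπ : ∀ x : LG p N L, π x = 1 ↔ x ^ p = 1 := by
    intro x
    have h1 : π x = 1 ↔ qmk I x.val = 0 := Iff.rfl
    have h2 : x ^ p = 1 ↔ p • x.val = 0 := by rw [← LG.val_pow]; rfl
    rw [h1, h2, qmk_eq_zero]; exact hΩ _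
  have hs : Function.Surjective π := qmk_surj I
  constructor
  · intro h
    have hc : ∀ a b : LG p N (L ⧸ I), a * b = b * a := by
      intro a b
      obtain ⟨a, rfl⟩ := hs a
      obtain ⟨b, rfl⟩ := hs b
      have := (hπ _).2 (h a b)
      rw [map_commutatorElement] at this
      exact commutatorElement_eq_one_iff_mul_comm.1 this
    let cg : CommGroup (LG p N (L ⧸ I)) := { (inferInstance : Group (LG p N (L ⧸ I))) with mul_comm := hc }
    have h3 := (@hom_comm p N (L ⧸ I) _ _ _ (LG p N (L ⧸ I)) cg (MonoidHom.id _)).2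
    intro x y
    have h4 := h3 (qmk I x) (qmk I y)
    rw [← qmk_lie] at h4
    have h5 : qmk I ⁅x, y⁆ = 0 := h4
    rw [qmk_eq_zero] at h5
    exact h5
  · intro h x y
    rw [← hπ, map_commutatorElement, commutatorElement_eq_one_iff_mul_comm]
    have : ⁅(π x).val, (π y).val⁆ = 0 := by
      show ⁅qmk I x.val, qmk I y.val⁆ = 0
      rw [← qmk_lie, qmk_eq_zero]; exact h _ _
    ext
    rw [LG.val_mul_of_comm _ _ this, LG.val_mul_of_comm _ _ (by rw [← lie_skew, this, neg_zero]), add_comm]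

end

/-- elementary nilpotency -/
def Znil (L : Type) [LieRing L] : ℕ → L → Prop
  | 0, z => z = 0
  | k + 1, z => ∀ x : L, Znil L k ⁅x, z⁆

def Nil (L : Type) [LieRing L] : Prop := ∃ k, ∀ z, Znil L k z

section
variable {L : Type} [LieRing L]

lemma Znil_zero (k : ℕ) : Znil L k 0 := by
  induction k with
  | zero => rfl
  | succ k ih => intro x; rwa [lie_zero]

lemma Znil_succ (k : ℕ) (z : L) (h : Znil L k z) : Znil L (k + 1) z := by
  induction k generalizing z with
  | zero => 
    have : z = 0 := h
    rw [this]; exact Znil_zero _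
  | succ k ih => intro x; exact ih _ (h x)

def ZS (L : Type) [LieRing L] (k : ℕ) : LieIdeal ℤ L :=
  mkIdeal { carrier := {z | Znil L k z}
            zero_mem' := Znil_zero k
            add_mem' := by
              intro a b ha hb
              induction k generalizing a b with
              | zero => 
                have h1 : a = 0 := ha
                have h2 : b = 0 := hb
                show a + b = 0
                rw [h1, h2, add_zero]
              | succ k ih => intro x; rw [lie_add]; exact ih (ha x) (hb x)
            neg_mem' := by
              intro a ha
              induction k generalizing a with
              | zero => 
                have h1 : a = 0 := ha
                show -a = 0
                rw [h1, neg_zero]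
              | succ k ih => intro x; rw [lie_neg]; exact ih (ha x) }
    (fun x _ hz => Znil_succ k _ hz x)

lemma mem_ZS (k : ℕ) (z : L) : z ∈ ZS L k ↔ Znil L k z := Iff.rfl

lemma nil_iff : LieRing.IsNilpotent L ↔ Nil L := by
  rw [LieRing.IsNilpotent, LieModule.isNilpotent_iff ℤ]
  constructor
  · rintro ⟨k, hk⟩
    have : ∀ j ≤ k, ∀ z ∈ LieModule.lowerCentralSeries ℤ L L (k - j), Znil L j z := by
      intro j
      induction j with
      | zero =>
        intro _ z hz
        rw [Nat.sub_zero, hk] at hz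
        exact hz
      | succ j ih =>
        intro hj z hz x
        apply ih (by omega)
        rw [show k - j = k - (j + 1) + 1 by omega, LieModule.lowerCentralSeries_succ]
        exact LieSubmodule.lie_mem_lie trivial hz
    refine ⟨k, fun z => this k le_rfl z ?_⟩
    rw [Nat.sub_self, LieModule.lowerCentralSeries_zero]; trivial
  · rintro ⟨k, hk⟩
    refine ⟨k, ?_⟩
    have : ∀ i ≤ k, LieModule.lowerCentralSeries ℤ L L i ≤ ZS L (k - i) := by
      intro i
      induction i with
      | zero => intro _ z _; exact hk z
      | succ i ih =>
        intro hi
        rw [LieModule.lowerCentralSeries_succ, LieSubmodule.lie_le_iff]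
        intro x _ m hm
        have := ih (by omega) hm
        rw [show k - i = k - (i + 1) + 1 by omega] at this
        exact this x
    rw [eq_bot_iff]
    intro z hz
    have := this k le_rfl hz
    rw [Nat.sub_self] at this
    exact this

lemma IsLaz.nil {p N : ℕ} [h : IsLaz p N L] : Nil L := by
  obtain ⟨Γ⟩ := h.out
  refine ⟨p, ?_⟩
  have : ∀ j ≤ p, ∀ z ∈ Γ.F (p - j), Znil L j z := by
    intro j
    induction j with
    | zero => intro _ z hz; rw [Nat.sub_zero, Γ.top] at hz; exact hz
    | succ j ih =>
      intro hj z hz x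
      apply ih (by omega)
      have := Γ.lie_mem (show x ∈ Γ.F 1 by rw [Γ.one]; trivial) hz
      rwa [show 1 + (p - (j + 1)) = p - j by omega] at this
  intro z
  apply this p le_rfl
  rw [Nat.sub_self]
  exact Γ.anti 0 (by rw [zero_add, Γ.one]; trivial)

def DD (L : Type) [LieRing L] : ℕ → AddSubgroup L
  | 0 => ⊤
  | k + 1 => AddSubgroup.closure {z | ∃ x y : L, y ∈ DD L k ∧ ⁅x, y⁆ = z}

lemma DD_lie (k : ℕ) (x y : L) (h : y ∈ DD L k) : ⁅x, y⁆ ∈ DD L (k + 1) := AddSubgroup.subset_closure ⟨x, y, h, rfl⟩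

lemma DD_anti (k : ℕ) : DD L (k + 1) ≤ DD L k := by
  induction k with
  | zero => exact le_top
  | succ k ih =>
    refine AddSubgroup.closure_mono ?_
    rintro _ ⟨x, y, hy, rfl⟩
    exact ⟨x, y, ih hy, rfl⟩

lemma DD_stop (hL : Nil L) (k : ℕ) (h : DD L (k + 1) = DD L k) : DD L k = ⊥ := by
  obtain ⟨K, hK⟩ := hL
  have h1 : ∀ j, DD L (k + j) = DD L k := by
    intro j
    induction j with
    | zero => rfl
    | succ j ih => rw [← add_assoc, DD, ih, ← DD, h]
  have h2 : ∀ j ≤ K, ∀ z ∈ DD L j, Znil L (K - j) z := by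
    intro j
    induction j with
    | zero => intro _ z _; exact hK z
    | succ j ih =>
      intro hj z hz
      have : DD L (j + 1) ≤ (ZS L (K - (j + 1))).toSubmodule.toAddSubgroup := by
        rw [DD, AddSubgroup.closure_le]
        rintro _ ⟨x, y, hy, rfl⟩
        have := ih (by omega) y hy
        rw [show K - j = K - (j + 1) + 1 by omega] at this
        exact this x
      exact this hz
  rw [← h1 K, eq_bot_iff]
  intro z hz
  have h3 : DD L (k + K) ≤ DD L K := antitone_nat_of_succ_le (f := DD L) DD_anti (by omega)
  have := h2 K le_rfl z (h3 hz)
  rw [Nat.sub_self] at this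
  exact this

/-- nilpotent Lie rings of order `p ^ m` with `m ≤ p` are Lazard -/
lemma isLaz_of_card {p N m : ℕ} (hp : p.Prime) (hL : Nil L) (hc : Nat.card L = p ^ m) (hm : m ≤ p) (hN : m ≤ N) : IsLaz p N L := by
  have hfin : Finite L := Nat.finite_of_card_ne_zero (by rw [hc]; exact pow_ne_zero _ hp.ne_zero)
  have htors : ∀ a : L, (p ^ N) • a = 0 := by
    intro a
    obtain ⟨c, rfl⟩ := Nat.exists_eq_add_of_le hN
    rw [pow_add, mul_comm, mul_smul, ← hc, card_nsmul_eq_zero', smul_zero]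
  refine IsLaz.of_chain (fun i => DD L (i - 1)) rfl ?_ ?_ ?_ htors
  · intro i
    rcases i with _ | i
    · exact le_rfl
    · exact DD_anti i
  · intro i x y hy
    rcases i with _ | i
    · trivial
    · exact DD_lie i x y hy
  · show DD L (p - 1) = ⊥
    have hcard : ∀ k, ∃ a ≤ m, Nat.card (DD L k) = p ^ a := by
      intro k
      have := AddSubgroup.card_addSubgroup_dvd_card (DD L k)
      rw [hc] at this
      exact (Nat.dvd_prime_pow hp).1 this
    choose a ha ha' using hcard
    have hzero : ∀ k, a k = 0 → DD L k = ⊥ := by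
      intro k hk
      rw [← AddSubgroup.card_eq_one, ha', hk, pow_zero]
    have hdec : ∀ k, a k ≠ 0 → a (k + 1) < a k := by
      intro k hk
      by_contra hlt
      push Not at hlt
      have h1 : DD L (k + 1) = DD L k := by
        refine AddSubgroup.eq_of_le_of_card_ge (DD_anti k) ?_
        rw [ha', ha']; exact Nat.pow_le_pow_right hp.pos hlt
      have h2 := DD_stop hL k h1
      have h3 := ha' k
      rw [h2, AddSubgroup.card_bot] at h3
      exact hk (Nat.pow_right_injective hp.two_le (by simp [← h3]))
    have hdec0 : ∀ k, a k = 0 → a (k + 1) = 0 := by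
      intro k hk
      have h1 : DD L (k + 1) = ⊥ := by rw [eq_bot_iff, ← hzero k hk]; exact DD_anti k
      have h3 := ha' (k + 1)
      rw [h1, AddSubgroup.card_bot] at h3
      exact Nat.pow_right_injective hp.two_le (by simp [← h3])
    have ha0 : a 0 = m := by
      have h3 := ha' 0
      have : Nat.card (DD L 0) = Nat.card L := AddSubgroup.card_top
      rw [this, hc] at h3
      exact (Nat.pow_right_injective hp.two_le h3).symm
    by_cases hcase : a 1 + 1 = m
    · have h1 : DD L 1 = ⊥ := by
        apply DD_stop hL
        refine le_antisymm (DD_anti 1) ?_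
        have hq : Nat.card (L ⧸ DD L 1) = p := by
          have := AddSubgroup.card_eq_card_quotient_mul_card_addSubgroup (DD L 1)
          rw [hc, ha', ← hcase, pow_succ, mul_comm] at this
          exact (Nat.eq_of_mul_eq_mul_right (pow_pos hp.pos _) this).symm
        have : Fact p.Prime := ⟨hp⟩
        have hcyc := isAddCyclic_of_prime_card hq
        obtain ⟨g, hg⟩ := hcyc.exists_generator
        obtain ⟨x, rfl⟩ := QuotientAddGroup.mk_surjective g
        have hdec : ∀ z : L, ∃ k : ℤ, ∃ d ∈ DD L 1, z = k • x + d := by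
          intro z
          obtain ⟨k, hk⟩ := AddSubgroup.mem_zmultiples_iff.1 (hg (z : L ⧸ DD L 1))
          refine ⟨k, z - k • x, ?_, by abel⟩
          rw [← QuotientAddGroup.eq_zero_iff]
          rw [QuotientAddGroup.mk_sub, QuotientAddGroup.mk_zsmul, hk, sub_self]
        show AddSubgroup.closure _ ≤ _
        rw [AddSubgroup.closure_le]
        rintro _ ⟨u, v, -, rfl⟩
        obtain ⟨k, d, hd, rfl⟩ := hdec u
        obtain ⟨l, d', hd', rfl⟩ := hdec v
        have : ⁅k • x + d, l • x + d'⁆ = ⁅k • x + d, d'⁆ - ⁅l • x, d⁆ := by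
          rw [lie_add, add_lie _ _ (l • x), lie_zsmul, zsmul_lie, lie_self, smul_zero, smul_zero, zero_add, ← lie_skew d]
          abel
        rw [SetLike.mem_coe, this]
        exact sub_mem (DD_lie _ _ _ hd') (DD_lie _ _ _ hd)
      rw [eq_bot_iff, ← h1]
      exact antitone_nat_of_succ_le (f := DD L) DD_anti (by have := hp.two_le; omega)
    · have hb : ∀ k, a (k + 1) ≤ m - (k + 2) := by
        intro k
        induction k with
        | zero =>
          by_cases h0 : a 0 = 0
          · have := hdec0 0 h0; omega
          · have := hdec 0 h0; simp only [zero_add] at this ⊢; omega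
        | succ k ih =>
          by_cases h0 : a (k + 1) = 0
          · have := hdec0 _ h0; omega
          · have := hdec _ h0; omega
      apply hzero
      have := hb (p - 2)
      have h2 := hp.two_le
      rw [show p - 2 + 1 = p - 1 by omega] at this
      omega

end
end Laz


namespace Laz
open Finset
attribute [local instance] LieRing.ofAssociativeRing

section
variable {p N : ℕ} {A : Type} [Ring A]

lemma Filt.exp_sub_one_mem (Φ : Filt p N A) (hp : p.Prime) (B : AddSubgroup A) (hmul : ∀ a ∈ B, ∀ b ∈ B, a * b ∈ B) {a : A} (ha : a ∈ B) :
    pexp p N a - 1 ∈ B := by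
  obtain ⟨m, rfl⟩ : ∃ m, p = m + 1 := ⟨p - 1, by have := hp.two_le; omega⟩
  rw [pexp, sum_range_succ', pow_zero, nsmul_congr _ (Φ.tors 1) (e_zero hp), one_smul, add_sub_cancel_right]
  refine sum_mem fun k hk => nsmul_mem ?_ _
  clear hk
  induction k with
  | zero => simpa using ha
  | succ k ih => rw [pow_succ]; exact hmul _ ih _ ha

lemma Filt.exists_log [Finite A] (Φ : Filt p N A) (hp : p.Prime) (B : AddSubgroup A) (hB : B ≤ Φ.F 1) (hmul : ∀ a ∈ B, ∀ b ∈ B, a * b ∈ B) {u : A} (hu : u ∈ B) :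
    ∃ a ∈ B, pexp p N a = 1 + u := by
  let f : B → B := fun a => ⟨pexp p N a.1 - 1, Φ.exp_sub_one_mem hp B hmul a.2⟩
  have hf : Function.Injective f := by
    intro a b hab
    have h1 : pexp p N a.1 - 1 = pexp p N b.1 - 1 := congrArg Subtype.val hab
    exact Subtype.ext (Φ.exp_inj hp (hB a.2) (hB b.2) (sub_left_inj.1 h1))
  obtain ⟨a, ha⟩ := (Finite.injective_iff_surjective.1 hf) ⟨u, hu⟩
  refine ⟨a, a.2, ?_⟩
  have h1 : pexp p N a.1 - 1 = u := congrArg Subtype.val ha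
  rw [← h1]; abel

lemma Filt.log_mem [Finite A] (Φ : Filt p N A) (hp : p.Prime) (B : AddSubgroup A) (hB : B ≤ Φ.F 1) (hmul : ∀ a ∈ B, ∀ b ∈ B, a * b ∈ B) {a : A} 
    (ha : a ∈ Φ.F 1) (hu : pexp p N a - 1 ∈ B) : a ∈ B := by
  obtain ⟨b, hb, h⟩ := Φ.exists_log hp B hB hmul hu
  rw [add_sub_cancel] at h
  rwa [← Φ.exp_inj hp (hB hb) ha h]

end

section
variable {p N : ℕ} {L : Type} [LieRing L] 

instance finite_end {M : Type} [AddCommGroup M] [Finite M] : Finite (Module.End ℤ M) :=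
  Finite.of_injective (fun f : Module.End ℤ M => (f : M → M)) DFunLike.coe_injective

lemma LFilt.zero (Γ : LFilt p N L) : Γ.F 0 = ⊤ := by
  rw [eq_top_iff, ← Γ.one]; exact Γ.anti 0

noncomputable def adFilt (Γ : LFilt p N L) : Filt p N (Module.End ℤ L) := endFilt p N Γ.F Γ.anti Γ.zero Γ.top Γ.tors

lemma ad_mem (Γ : LFilt p N L) (x : L) : LieAlgebra.ad ℤ L x ∈ (adFilt Γ).F 1 := by
  intro i m hm
  rw [LieAlgebra.ad_apply, add_comm]
  exact Γ.lie_mem (by rw [Γ.one]; trivial) hm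

lemma pexp_apply {M : Type} [AddCommGroup M] (a : Module.End ℤ M) (m : M) : pexp p N a m = ∑ k ∈ range p, e p N k • (a ^ k) m := by
  rw [pexp, LinearMap.sum_apply]; rfl

lemma pexp_ad (x y : L) : pexp p N (LieAlgebra.ad ℤ L x) y = Ead p N x y := by
  rw [pexp_apply, Ead]
  refine sum_congr rfl fun k hk => ?_
  rw [Module.End.pow_apply]; rfl

/-- generic consequence: stabilised subgroups -/
lemma Filt.log_stab {M : Type} [AddCommGroup M] [Finite M] (Φ : Filt p N (Module.End ℤ M)) (hp : p.Prime) {a : Module.End ℤ M}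
    (ha : a ∈ Φ.F 1) (S : AddSubgroup M) (h : ∀ y ∈ S, pexp p N a y ∈ S) : ∀ y ∈ S, a y ∈ S := by
  let B : AddSubgroup (Module.End ℤ M) :=
    { carrier := {a | a ∈ Φ.F 1 ∧ ∀ y ∈ S, a y ∈ S}
      add_mem' := fun {a b} ha hb => ⟨add_mem ha.1 hb.1, fun y hy => add_mem (ha.2 y hy) (hb.2 y hy)⟩
      zero_mem' := ⟨zero_mem _, fun y _ => zero_mem _⟩
      neg_mem' := fun {a} ha => ⟨neg_mem ha.1, fun y hy => neg_mem (ha.2 y hy)⟩ }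
  have : a ∈ B := by
    refine Φ.log_mem hp B (fun a ha => ha.1) ?_ ha ?_
    · intro a ha b hb
      exact ⟨Φ.anti 1 (Φ.mul_mem ha.1 hb.1), fun y hy => ha.2 _ (hb.2 _ hy)⟩
    · exact ⟨Φ.exp_sub_one_mem hp _ (fun a ha b hb => Φ.anti 1 (Φ.mul_mem ha hb)) ha, fun y hy => sub_mem (h y hy) hy⟩
  exact this.2

/-- generic consequence: fixed vectors -/
lemma Filt.log_fix {M : Type} [AddCommGroup M] [Finite M] (Φ : Filt p N (Module.End ℤ M)) (hp : p.Prime) {a : Module.End ℤ M}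
    (ha : a ∈ Φ.F 1) (z : M) (h : pexp p N a z = z) : a z = 0 := by
  let B : AddSubgroup (Module.End ℤ M) :=
    { carrier := {a | a ∈ Φ.F 1 ∧ a z = 0}
      add_mem' := fun {a b} ha hb => ⟨add_mem ha.1 hb.1, by rw [LinearMap.add_apply, ha.2, hb.2, add_zero]⟩
      zero_mem' := ⟨zero_mem _, rfl⟩
      neg_mem' := fun {a} ha => ⟨neg_mem ha.1, by rw [LinearMap.neg_apply, ha.2, neg_zero]⟩ }
  have : a ∈ B := by
    refine Φ.log_mem hp B (fun a ha => ha.1) ?_ ha ?_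
    · intro a ha b hb
      exact ⟨Φ.anti 1 (Φ.mul_mem ha.1 hb.1), by rw [Module.End.mul_apply, hb.2, map_zero]⟩
    · exact ⟨Φ.exp_sub_one_mem hp _ (fun a ha b hb => Φ.anti 1 (Φ.mul_mem ha hb)) ha, 
        by rw [LinearMap.sub_apply, h, Module.End.one_apply, sub_self]⟩
  exact this.2

variable [Fact p.Prime] [IsLaz p N L] [Finite L]

lemma lie_of_comm (x y : LG p N L) (h : x * y = y * x) : ⁅x.val, y.val⁆ = 0 := by
  obtain ⟨Γ⟩ := IsLaz.out (p := p) (N := N) (L := L)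
  have := (adFilt Γ).log_fix Fact.out (ad_mem Γ x.val) y.val (by 
    rw [pexp_ad, ← LG.val_conj, h, mul_inv_cancel_right])
  rwa [LieAlgebra.ad_apply] at this

lemma normal_ideal (S : AddSubgroup L) (h : ∀ x y : LG p N L, y.val ∈ S → (x * y * x⁻¹).val ∈ S) :
    ∀ x y : L, y ∈ S → ⁅x, y⁆ ∈ S := by
  intro x y hy
  obtain ⟨Γ⟩ := IsLaz.out (p := p) (N := N) (L := L)
  have := (adFilt Γ).log_stab Fact.out (ad_mem Γ x) S (fun y hy => by 
    rw [pexp_ad]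
    have := h (LG.mk x) (LG.mk y) hy
    rwa [LG.val_conj] at this) y hy
  rwa [LieAlgebra.ad_apply] at this

/-- relation mod a subgroup which is an ideal -/
lemma lmul_neg_mem_iff (S : AddSubgroup L) (hS : ∀ x y : L, y ∈ S → ⁅x, y⁆ ∈ S) (a b : L) (h : lmul p N a (-b) ∈ S) : a - b ∈ S := by
  have h1 : (LG.mk (qmk (mkIdeal S hS) a) : LG p N (L ⧸ mkIdeal S hS)) * (LG.mk (qmk (mkIdeal S hS) b))⁻¹ = 1 := by
    ext
    show lmul p N (qmk (mkIdeal S hS) a) (- qmk (mkIdeal S hS) b) = 0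
    rw [← map_neg, ← lmul_map _ (qmk_lie _), qmk_eq_zero]
    exact h
  rw [mul_inv_eq_one] at h1
  have h2 : qmk (mkIdeal S hS) a = qmk (mkIdeal S hS) b := h1
  rw [← sub_eq_zero, ← map_sub, qmk_eq_zero] at h2
  exact h2

lemma lie_mem_of_comm (S : AddSubgroup L) (hS : ∀ x y : L, y ∈ S → ⁅x, y⁆ ∈ S) (a b : LG p N L) (h : (a * b * a⁻¹ * b⁻¹).val ∈ S) : ⁅a.val, b.val⁆ ∈ S := by
  let π : LG p N L →* LG p N (L ⧸ mkIdeal S hS) := LG.map (qmk _) (qmk_lie _)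
  have hfin : Finite (L ⧸ mkIdeal S hS) := Finite.of_surjective _ (qmk_surj (mkIdeal S hS))
  have h1 : π (a * b * a⁻¹ * b⁻¹) = 1 := (qmk_eq_zero (mkIdeal S hS) _).2 h
  rw [map_mul, map_mul, map_mul, map_inv, map_inv, mul_inv_eq_one, mul_inv_eq_iff_eq_mul] at h1
  have h2 : ⁅qmk (mkIdeal S hS) a.val, qmk (mkIdeal S hS) b.val⁆ = 0 := lie_of_comm _ _ h1
  rw [← qmk_lie, qmk_eq_zero] at h2
  exact h2

end
end Laz


namespace Laz
open Finset
attribute [local instance] LieRing.ofAssociativeRing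

section
variable {L : Type} [LieRing L] 

def EE (α : L → L) : ℕ → AddSubgroup L
  | 0 => ⊤
  | k + 1 => AddSubgroup.closure ({z | ∃ x y : L, y ∈ EE α k ∧ ⁅x, y⁆ = z} ∪ {z | ∃ y ∈ EE α k, α y - y = z})

variable (α : L → L)

lemma EE_lie (k : ℕ) (x y : L) (h : y ∈ EE α k) : ⁅x, y⁆ ∈ EE α (k + 1) := AddSubgroup.subset_closure (Or.inl ⟨x, y, h, rfl⟩)
lemma EE_al (k : ℕ) (y : L) (h : y ∈ EE α k) : α y - y ∈ EE α (k + 1) := AddSubgroup.subset_closure (Or.inr ⟨y, h, rfl⟩)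

lemma EE_anti (k : ℕ) : EE α (k + 1) ≤ EE α k := by
  induction k with
  | zero => exact le_top
  | succ k ih =>
    refine AddSubgroup.closure_mono ?_
    rintro _ (⟨x, y, hy, rfl⟩ | ⟨y, hy, rfl⟩)
    · exact Or.inl ⟨x, y, ih hy, rfl⟩
    · exact Or.inr ⟨y, ih hy, rfl⟩

lemma EE_stop (K : ℕ) (hK : EE α K = ⊥) (k : ℕ) (h : EE α (k + 1) = EE α k) : EE α k = ⊥ := by
  have h1 : ∀ j, EE α (k + j) = EE α k := by
    intro j
    induction j with
    | zero => rfl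
    | succ j ih => rw [← add_assoc, EE, ih, ← EE, h]
  rw [← h1 K, eq_bot_iff, ← hK]
  exact antitone_nat_of_succ_le (f := EE α) (EE_anti α) (by omega)

lemma EE_card {p m : ℕ} (hp : p.Prime) (hc : Nat.card L = p ^ m) (K : ℕ) (hK : EE α K = ⊥) : EE α m = ⊥ := by
  have hfin : Finite L := Nat.finite_of_card_ne_zero (by rw [hc]; exact pow_ne_zero _ hp.ne_zero)
  have hcard : ∀ k, ∃ a ≤ m, Nat.card (EE α k) = p ^ a := by
    intro k
    have := AddSubgroup.card_addSubgroup_dvd_card (EE α k)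
    rw [hc] at this
    exact (Nat.dvd_prime_pow hp).1 this
  choose a ha ha' using hcard
  have hzero : ∀ k, a k = 0 → EE α k = ⊥ := by
    intro k hk
    rw [← AddSubgroup.card_eq_one, ha', hk, pow_zero]
  have hdec : ∀ k, a k ≠ 0 → a (k + 1) < a k := by
    intro k hk
    by_contra hlt
    push Not at hlt
    have h1 : EE α (k + 1) = EE α k := by
      refine AddSubgroup.eq_of_le_of_card_ge (EE_anti α k) ?_
      rw [ha', ha']; exact Nat.pow_le_pow_right hp.pos hlt
    have h2 := EE_stop α K hK k h1
    have h3 := ha' k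
    rw [h2, AddSubgroup.card_bot] at h3
    exact hk (Nat.pow_right_injective hp.two_le (by simp [← h3]))
  have hdec0 : ∀ k, a k = 0 → a (k + 1) = 0 := by
    intro k hk
    have h1 : EE α (k + 1) = ⊥ := by rw [eq_bot_iff, ← hzero k hk]; exact EE_anti α k
    have h3 := ha' (k + 1)
    rw [h1, AddSubgroup.card_bot] at h3
    exact Nat.pow_right_injective hp.two_le (by simp [← h3])
  have hb : ∀ k, a k ≤ m - k := by
    intro k
    induction k with
    | zero => have := ha 0; omega
    | succ k ih =>
      by_cases h0 : a k = 0
      · have := hdec0 _ h0; omega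
      · have := hdec _ h0; omega
  apply hzero
  have := hb m
  omega

/-- the strong `α`-stable filtration -/
lemma exists_stable {p N m : ℕ} [Fact p.Prime] [IsLaz p N L] (hc : Nat.card L = p ^ m) (hm : m + 1 ≤ p)
    {G : Type} [Group G] [Finite G] (hG : IsPGroup p G) (f : LG p N L →* G) (hf : Function.Injective f)
    (g : G) (α : Module.End ℤ L) (hα : ∀ x y : L, α ⁅x, y⁆ = ⁅α x, α y⁆) (hs : Function.Surjective α)
    (hg : ∀ x : L, g * f (LG.mk x) * g⁻¹ = f (LG.mk (α x))) :
    ∃ Γ : LFilt p N L, ∀ i, ∀ x ∈ Γ.F i, α x - x ∈ Γ.F (i + 1) := by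
  have hp : p.Prime := Fact.out
  have hfin : Finite L := Nat.finite_of_card_ne_zero (by rw [hc]; exact pow_ne_zero _ hp.ne_zero)
  have : Group.IsNilpotent G := hG.isNilpotent
  obtain ⟨K, hK⟩ := Subgroup.nilpotent_iff_lowerCentralSeries.1 this
  let T : ℕ → AddSubgroup L := fun i =>
    { carrier := {x | f (LG.mk x) ∈ (⊤ : Subgroup G).lowerCentralSeries i}
      add_mem' := fun {a b} ha hb => (subgroup_lie (((⊤ : Subgroup G).lowerCentralSeries i).comap f)).1 a b ha hb
      zero_mem' := one_mem ((Subgroup.lowerCentralSeries ⊤ i).comap f)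
      neg_mem' := fun {a} ha => ((Subgroup.lowerCentralSeries ⊤ i).comap f).inv_mem (x := LG.mk a) ha }
  have hT : ∀ i x, x ∈ T i ↔ f (LG.mk x) ∈ (⊤ : Subgroup G).lowerCentralSeries i := fun i x => Iff.rfl
  have hTI : ∀ i, ∀ x y : L, y ∈ T i → ⁅x, y⁆ ∈ T i := by
    intro i
    refine normal_ideal (p := p) (N := N) (T i) ?_
    intro x y hy
    rw [hT] at hy ⊢
    rw [LG.mk_val] at hy ⊢
    rw [map_mul, map_mul, map_inv]
    exact (inferInstance : ((⊤ : Subgroup G).lowerCentralSeries i).Normal).conj_mem _ hy _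
  have hcomm : ∀ i (h y : G), y ∈ (⊤ : Subgroup G).lowerCentralSeries i → h * y * h⁻¹ * y⁻¹ ∈ (⊤ : Subgroup G).lowerCentralSeries (i + 1) := by
    intro i h y hy
    have : y * h * y⁻¹ * h⁻¹ ∈ (⊤ : Subgroup G).lowerCentralSeries (i + 1) := Subgroup.commutator_mem_commutator hy (Subgroup.mem_top h)
    have := inv_mem this
    simpa [mul_assoc] using this
  have hET : ∀ i, EE α i ≤ T i := by
    intro i
    induction i with
    | zero => intro x _; rw [hT]; exact Subgroup.mem_top _
    | succ i ih =>
      rw [EE, AddSubgroup.closure_le]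
      rintro _ (⟨x, y, hy, rfl⟩ | ⟨y, hy, rfl⟩)
      · refine lie_mem_of_comm (p := p) (N := N) (T (i + 1)) (hTI (i + 1)) (LG.mk x) (LG.mk y) ?_
        rw [hT, LG.mk_val, map_mul, map_mul, map_mul, map_inv, map_inv]
        exact hcomm i _ _ (ih hy)
      · refine lmul_neg_mem_iff (p := p) (N := N) (T (i + 1)) (hTI (i + 1)) (α y) y ?_
        rw [hT]
        show f (LG.mk (α y) * (LG.mk y)⁻¹) ∈ _
        rw [map_mul, ← hg, map_inv]
        exact hcomm i _ _ (ih hy)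
  have hEK : EE α K = ⊥ := by
    rw [eq_bot_iff]
    intro x hx
    have := (hT _ _).1 (hET K hx)
    rw [hK, Subgroup.mem_bot, ← map_one f] at this
    exact hf this
  have hEm := EE_card α hp hc K hEK
  have hEp : EE α (p - 1) = ⊥ := by
    rw [eq_bot_iff, ← hEm]
    exact antitone_nat_of_succ_le (f := EE α) (EE_anti α) (by omega)
  have hC_anti : ∀ i, EE α (i + 1 - 1) ≤ EE α (i - 1) := by
    intro i
    rcases i with _ | i
    · exact le_rfl
    · exact EE_anti α i
  have hC_lie : ∀ i (x y : L), y ∈ EE α (i - 1) → ⁅x, y⁆ ∈ EE α (i + 1 - 1) := by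
    intro i x y hy
    rcases i with _ | i
    · trivial
    · exact EE_lie α i x y hy
  have hC_al : ∀ i, ∀ y ∈ EE α (i - 1), α y - y ∈ EE α (i + 1 - 1) := by
    intro i y hy
    rcases i with _ | i
    · trivial
    · exact EE_al α i y hy
  obtain ⟨Γ, hΓ⟩ := exists_strong (p := p) (N := N) (fun i => EE α (i - 1)) rfl hC_anti hC_lie hEp (tors p N)
  refine ⟨Γ, fun i x hx => ?_⟩
  rw [hΓ] at hx ⊢
  refine ⟨hC_al i x hx.1, fun j y hy => ?_⟩
  have hst : ∀ i, ∀ y ∈ EE α (i - 1), α y ∈ EE α (i - 1) := by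
    intro i y hy
    have := add_mem (hC_anti _ (hC_al i y hy)) hy
    rwa [sub_add_cancel] at this
  have hinv : ∃ y' ∈ EE α (j - 1), α y' = y := by
    let r : EE α (j - 1) → EE α (j - 1) := fun y => ⟨α y.1, hst j y.1 y.2⟩
    have hr : Function.Injective r := by
      intro a b hab
      have hinj := Finite.injective_iff_surjective.2 hs
      exact Subtype.ext (hinj (congrArg Subtype.val hab))
    obtain ⟨y', hy'⟩ := (Finite.injective_iff_surjective.1 hr) ⟨y, hy⟩
    exact ⟨y', y'.2, congrArg Subtype.val hy'⟩
  obtain ⟨y', hy', rfl⟩ := hinv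
  have h1 : ⁅α x - x, α y'⁆ = (α ⁅x, y'⁆ - ⁅x, y'⁆) - ⁅x, α y' - y'⁆ := by
    rw [sub_lie, lie_sub, hα]; abel
  rw [h1]
  refine sub_mem ?_ ?_
  · exact hC_al _ _ (hx.2 j y' hy')
  · have := hx.2 _ _ (hC_al j y' hy')
    rwa [show j + (i + 1) = j + 1 + i by omega]

end
end Laz


namespace Laz
open Finset
set_option linter.unusedVariables false
attribute [local instance] LieRing.ofAssociativeRing

section
variable {p N : ℕ} {L : Type} [LieRing L] 

/-- filtered families of endomorphisms -/
def VV (Γ : LFilt p N L) : AddSubgroup (L →+ Module.End ℤ L) where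
  carrier := {f | ∀ i, ∀ x ∈ Γ.F i, f x ∈ (adFilt Γ).F i}
  add_mem' := fun {a b} ha hb i x hx => add_mem (ha i x hx) (hb i x hx)
  zero_mem' := fun i x hx => zero_mem _
  neg_mem' := fun {a} ha i x hx => neg_mem (ha i x hx)

def VD (Γ : LFilt p N L) (k : ℕ) : AddSubgroup (VV Γ) where
  carrier := {f | ∀ i, ∀ x ∈ Γ.F i, f.1 x ∈ (adFilt Γ).F (i + k)}
  add_mem' := fun {a b} ha hb i x hx => add_mem (ha i x hx) (hb i x hx)
  zero_mem' := fun i x hx => zero_mem _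
  neg_mem' := fun {a} ha i x hx => neg_mem (ha i x hx)

noncomputable def VVFilt (Γ : LFilt p N L) : Filt p N (Module.End ℤ (VV Γ)) :=
  endFilt p N (VD Γ) (fun k f hf i x hx => (adFilt Γ).anti _ (hf i x hx))
    (by rw [eq_top_iff]; intro f _ i x hx; exact f.2 i x hx)
    (by
      rw [eq_bot_iff]; intro f hf
      refine Subtype.ext (AddMonoidHom.ext fun x => ?_)
      have h1 : f.1 x ∈ (adFilt Γ).F (1 + p) := hf 1 x (by rw [Γ.one]; trivial)
      have h2 := (adFilt Γ).le (show p ≤ 1 + p by omega) h1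
      rw [(adFilt Γ).top] at h2
      exact h2)
    (by
      intro f
      refine Subtype.ext (AddMonoidHom.ext fun x => ?_)
      exact (adFilt Γ).tors (f.1 x))

def VP (Γ : LFilt p N L) (δ : Module.End ℤ L) (hδ : δ ∈ (adFilt Γ).F 1) : Module.End ℤ (VV Γ) :=
  AddMonoidHom.toIntLinearMap (
  { toFun := fun f => ⟨
      { toFun := fun x => δ * f.1 x - f.1 x * δ
        map_zero' := by simp
        map_add' := fun x y => by rw [map_add]; noncomm_ring }, fun i x hx => by
          have h1 := (adFilt Γ).mul_mem hδ (f.2 i x hx)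
          have h2 := (adFilt Γ).mul_mem (f.2 i x hx) hδ
          rw [add_comm] at h1
          exact (adFilt Γ).anti _ (sub_mem h1 h2)⟩
    map_zero' := by refine Subtype.ext (AddMonoidHom.ext fun x => ?_); simp
    map_add' := fun f g => by
      refine Subtype.ext (AddMonoidHom.ext fun x => ?_)
      show δ * (f.1 x + g.1 x) - (f.1 x + g.1 x) * δ = (δ * f.1 x - f.1 x * δ) + (δ * g.1 x - g.1 x * δ)
      noncomm_ring } : VV Γ →+ VV Γ)

def VQ (Γ : LFilt p N L) (δ : Module.End ℤ L) (hδ : δ ∈ (adFilt Γ).F 1) : Module.End ℤ (VV Γ) :=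
  AddMonoidHom.toIntLinearMap (
  { toFun := fun f => ⟨
      { toFun := fun x => f.1 (δ x)
        map_zero' := by simp
        map_add' := fun x y => by rw [map_add, map_add] }, fun i x hx => by
          exact (adFilt Γ).anti _ (f.2 _ _ (hδ i _ hx))⟩
    map_zero' := by refine Subtype.ext (AddMonoidHom.ext fun x => ?_); rfl
    map_add' := fun f g => by
      refine Subtype.ext (AddMonoidHom.ext fun x => ?_)
      rfl } : VV Γ →+ VV Γ)

lemma VP_apply (Γ : LFilt p N L) (δ : Module.End ℤ L) (hδ : δ ∈ (adFilt Γ).F 1) (f : VV Γ) (x : L) :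
    (VP Γ δ hδ f).1 x = ⁅δ, f.1 x⁆ := rfl
lemma VQ_apply (Γ : LFilt p N L) (δ : Module.End ℤ L) (hδ : δ ∈ (adFilt Γ).F 1) (f : VV Γ) (x : L) :
    (VQ Γ δ hδ f).1 x = f.1 (δ x) := rfl

lemma V_sum_apply (Γ : LFilt p N L) {ι : Type} (s : Finset ι) (c : ι → ℕ) (g : ι → VV Γ) (x : L) :
    (∑ k ∈ s, c k • g k).1 x = ∑ k ∈ s, c k • (g k).1 x := by
  have := map_sum ((AddMonoidHom.eval x).comp (VV Γ).subtype) (fun k => c k • g k) s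
  refine this.trans (sum_congr rfl fun k _ => ?_)
  exact map_nsmul ((AddMonoidHom.eval x).comp (VV Γ).subtype) (c k) (g k)

lemma VP_exp (Γ : LFilt p N L) (δ : Module.End ℤ L) (hδ : δ ∈ (adFilt Γ).F 1) (f : VV Γ) (x : L) :
    (pexp p N (VP Γ δ hδ) f).1 x = Ead p N δ (f.1 x) := by
  rw [pexp_apply, V_sum_apply, Ead]
  refine sum_congr rfl fun k hk => ?_
  clear hk
  congr 1
  induction k with
  | zero => rfl
  | succ k ih => rw [pow_succ', Module.End.mul_apply, VP_apply, ih, Function.iterate_succ_apply']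

lemma VQ_exp (Γ : LFilt p N L) (δ : Module.End ℤ L) (hδ : δ ∈ (adFilt Γ).F 1) (f : VV Γ) (x : L) :
    (pexp p N (VQ Γ δ hδ) f).1 x = f.1 (pexp p N δ x) := by
  rw [pexp_apply, V_sum_apply, pexp_apply, map_sum]
  refine sum_congr rfl fun k hk => ?_
  clear hk
  rw [map_nsmul]
  congr 1
  induction k generalizing x with
  | zero => rfl
  | succ k ih => rw [pow_succ', Module.End.mul_apply, VQ_apply, ih, pow_succ, Module.End.mul_apply]

lemma exp_derivation [Finite L] (hp : p.Prime) (Γ : LFilt p N L) (δ : Module.End ℤ L) (hδ : δ ∈ (adFilt Γ).F 1)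
    (hα : ∀ x y : L, pexp p N δ ⁅x, y⁆ = ⁅pexp p N δ x, pexp p N δ y⁆) (x y : L) : δ ⁅x, y⁆ = ⁅δ x, y⁆ + ⁅x, δ y⁆ := by
  have hfin0 : Finite (L →+ Module.End ℤ L) := Finite.of_injective (fun f => (f : L → Module.End ℤ L)) DFunLike.coe_injective
  have hfin : Finite (VV Γ) := inferInstance
  let τ : VV Γ := ⟨(LieAlgebra.ad ℤ L : L →ₗ[ℤ] Module.End ℤ L).toAddMonoidHom, by
    intro i x hx j y hy
    rw [add_comm]
    exact Γ.lie_mem hx hy⟩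
  have hτ : ∀ x, τ.1 x = LieAlgebra.ad ℤ L x := fun x => rfl
  have hP : VP Γ δ hδ ∈ (VVFilt Γ).F 1 := by
    intro k f hf i x hx
    rw [VP_apply]
    have h1 := (adFilt Γ).mul_mem hδ (hf i x hx)
    have h2 := (adFilt Γ).mul_mem (hf i x hx) hδ
    rw [add_comm] at h1
    exact sub_mem h1 h2
  have hQ : VQ Γ δ hδ ∈ (VVFilt Γ).F 1 := by
    intro k f hf i x hx
    rw [VQ_apply]
    have := hf _ _ (hδ i _ hx)
    rwa [show i + (k + 1) = i + 1 + k by omega]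
  have hPQ : Commute (VQ Γ δ hδ) (VP Γ δ hδ) := by
    refine LinearMap.ext fun f => Subtype.ext (AddMonoidHom.ext fun x => ?_)
    rfl
  have key : pexp p N (VP Γ δ hδ) τ = pexp p N (VQ Γ δ hδ) τ := by
    refine Subtype.ext (AddMonoidHom.ext fun x => ?_)
    rw [VP_exp, VQ_exp, hτ, hτ, ← (adFilt Γ).exp_conj hp hδ ((adFilt Γ).anti _ (ad_mem Γ x))]
    have h1 : pexp p N δ * LieAlgebra.ad ℤ L x = LieAlgebra.ad ℤ L (pexp p N δ x) * pexp p N δ := by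
      refine LinearMap.ext fun y => ?_
      exact hα x y
    rw [h1, mul_assoc, (adFilt Γ).exp_mul_neg hp hδ, mul_one]
  have h2 : pexp p N (-VQ Γ δ hδ + VP Γ δ hδ) τ = τ := by
    rw [(VVFilt Γ).exp_add hp (neg_mem hQ) hP hPQ.neg_left, Module.End.mul_apply, key, ← Module.End.mul_apply,
      (VVFilt Γ).exp_neg_mul hp hQ, Module.End.one_apply]
  have h3 := (VVFilt Γ).log_fix hp (add_mem (neg_mem hQ) hP) τ h2
  have h4 : VP Γ δ hδ τ = VQ Γ δ hδ τ := by
    rw [LinearMap.add_apply, LinearMap.neg_apply, neg_add_eq_zero] at h3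
    exact h3.symm
  have h5 : ⁅δ, LieAlgebra.ad ℤ L x⁆ = LieAlgebra.ad ℤ L (δ x) := by
    have := congrArg (fun f : VV Γ => f.1 x) h4
    exact this
  have h6 := LinearMap.congr_fun h5 y
  have h7 : δ ⁅x, y⁆ - ⁅x, δ y⁆ = ⁅δ x, y⁆ := h6
  rw [← h7]; abel

end
end Laz


namespace Laz
open Finset
set_option linter.unusedVariables false
attribute [local instance] LieRing.ofAssociativeRing

section
variable {L : Type} [LieRing L] 

/-- derivations as a predicate -/
def IsDer (δ : Module.End ℤ L) : Prop := ∀ x y : L, δ ⁅x, y⁆ = ⁅δ x, y⁆ + ⁅x, δ y⁆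

/-- semidirect product Lie ring -/
def SD (δ : Module.End ℤ L) (_hδ : IsDer δ) : Type := L × ℤ

variable (δ : Module.End ℤ L) (hδ : IsDer δ)

instance : AddCommGroup (SD δ hδ) := inferInstanceAs (AddCommGroup (L × ℤ))

def SD.mk (x : L) (k : ℤ) : SD δ hδ := (x, k)

instance : LieRing (SD δ hδ) where
  bracket a b := SD.mk δ hδ (⁅a.1, b.1⁆ + a.2 • δ b.1 - b.2 • δ a.1) 0
  add_lie a b c := by
    refine Prod.ext ?_ (add_zero (0 : ℤ)).symm
    show ⁅a.1 + b.1, c.1⁆ + (a.2 + b.2) • δ c.1 - c.2 • δ (a.1 + b.1) = 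
      (⁅a.1, c.1⁆ + a.2 • δ c.1 - c.2 • δ a.1) + (⁅b.1, c.1⁆ + b.2 • δ c.1 - c.2 • δ b.1)
    rw [add_lie, map_add]; module
  lie_add a b c := by
    refine Prod.ext ?_ (add_zero (0 : ℤ)).symm
    show ⁅a.1, b.1 + c.1⁆ + a.2 • δ (b.1 + c.1) - (b.2 + c.2) • δ (a.1) = 
      (⁅a.1, b.1⁆ + a.2 • δ b.1 - b.2 • δ a.1) + (⁅a.1, c.1⁆ + a.2 • δ c.1 - c.2 • δ a.1)
    rw [lie_add, map_add]; module
  lie_self a := by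
    refine Prod.ext ?_ rfl
    show ⁅a.1, a.1⁆ + a.2 • δ a.1 - a.2 • δ a.1 = 0
    rw [lie_self]; abel
  leibniz_lie a b c := by
    refine Prod.ext ?_ (add_zero (0 : ℤ)).symm
    show ⁅a.1, ⁅b.1, c.1⁆ + b.2 • δ c.1 - c.2 • δ b.1⁆ + a.2 • δ (⁅b.1, c.1⁆ + b.2 • δ c.1 - c.2 • δ b.1) - (0 : ℤ) • δ a.1 =
      (⁅⁅a.1, b.1⁆ + a.2 • δ b.1 - b.2 • δ a.1, c.1⁆ + (0 : ℤ) • δ c.1 - c.2 • δ (⁅a.1, b.1⁆ + a.2 • δ b.1 - b.2 • δ a.1)) +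
      (⁅b.1, ⁅a.1, c.1⁆ + a.2 • δ c.1 - c.2 • δ a.1⁆ + b.2 • δ (⁅a.1, c.1⁆ + a.2 • δ c.1 - c.2 • δ a.1) - (0 : ℤ) • δ b.1)
    simp only [lie_add, lie_sub, add_lie, sub_lie, map_add, map_sub, map_zsmul, lie_zsmul, zsmul_lie, hδ _ _, leibniz_lie a.1 b.1 c.1,
      zero_smul]
    rw [← lie_skew (δ a.1) b.1]
    module

lemma SD.lie_def (a b : SD δ hδ) : ⁅a, b⁆ = SD.mk δ hδ (⁅a.1, b.1⁆ + a.2 • δ b.1 - b.2 • δ a.1) 0 := rfl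

variable (p : ℕ) (w : L)

/-- the central subgroup generated by `(-w, p)` -/
def SDI : AddSubgroup (SD δ hδ) := AddSubgroup.zmultiples (SD.mk δ hδ (-w) p)

lemma SDI_central (hw : δ w = 0) (hpw : ∀ x : L, p • δ x = ⁅w, x⁆) (a b : SD δ hδ) (hb : b ∈ SDI δ hδ p w) : ⁅a, b⁆ = 0 := by
  obtain ⟨c, rfl⟩ := AddSubgroup.mem_zmultiples_iff.1 hb
  rw [lie_zsmul, SD.lie_def]
  have : ⁅a.1, (SD.mk δ hδ (-w) p).1⁆ + a.2 • δ (SD.mk δ hδ (-w) p).1 - (SD.mk δ hδ (-w) p).2 • δ a.1 = 0 := by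
    show ⁅a.1, -w⁆ + a.2 • δ (-w) - (p : ℤ) • δ a.1 = 0
    rw [map_neg, hw, natCast_zsmul, hpw, lie_neg, lie_skew]; simp
  rw [this]
  exact smul_zero c

lemma SDI_ideal (hw : δ w = 0) (hpw : ∀ x : L, p • δ x = ⁅w, x⁆) (a b : SD δ hδ) (hb : b ∈ SDI δ hδ p w) : ⁅a, b⁆ ∈ SDI δ hδ p w := by
  rw [SDI_central δ hδ p w hw hpw a b hb]; exact zero_mem _

end

section
variable {M G : Type} [Group M] [Group G]

/-- extension data -/
structure ExtData (p : ℕ) (a : MulAut M) (w : M) (f : M →* G) (g : G) : Prop where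
  inj : Function.Injective f
  conj : ∀ x, g * f x * g⁻¹ = f (a x)
  pow : g ^ p = f w
  gen : ∀ h : G, ∃ x, ∃ k : ℤ, h = f x * g ^ k
  dvd : ∀ k : ℤ, ∀ x, g ^ k = f x → (p : ℤ) ∣ k

variable {p : ℕ} {a : MulAut M} {w : M} {f : M →* G} {g : G}

noncomputable def ExtData.lift (h : ExtData p a w f g) : M ⋊[zpowersHom (MulAut M) a] Multiplicative ℤ →* G :=
  SemidirectProduct.lift f (zpowersHom G g) (by
    have key : ∀ (k : ℤ) x, f ((a ^ k) x) = g ^ k * f x * (g ^ k)⁻¹ := by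
      intro k
      induction k using Int.induction_on with
      | zero => intro x; simp
      | succ k ih => 
        intro x
        rw [zpow_add_one, MulAut.mul_apply, ih, ← h.conj, zpow_add_one]; group
      | pred k ih => 
        intro x
        rw [zpow_sub_one, MulAut.mul_apply, ih, zpow_sub_one]
        have : f (a⁻¹ x) = g⁻¹ * f x * g := by
          have := h.conj (a⁻¹ x)
          rw [MulAut.apply_inv_self] at this
          rw [← this]; group
        rw [this]; group
    intro k
    ext x
    exact key k.toAdd x)

lemma ExtData.lift_apply (h : ExtData p a w f g) (x : M ⋊[zpowersHom (MulAut M) a] Multiplicative ℤ) :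
    h.lift x = f x.left * g ^ x.right.toAdd := rfl

lemma ExtData.surj (h : ExtData p a w f g) : Function.Surjective h.lift := by
  intro y
  obtain ⟨x, k, rfl⟩ := h.gen y
  exact ⟨⟨x, Multiplicative.ofAdd k⟩, rfl⟩

lemma ExtData.mem_ker (h : ExtData p a w f g) (x : M ⋊[zpowersHom (MulAut M) a] Multiplicative ℤ) :
    x ∈ h.lift.ker ↔ ∃ c : ℤ, x.right.toAdd = p * c ∧ x.left * w ^ c = 1 := by
  rw [MonoidHom.mem_ker, h.lift_apply]
  have key : ∀ c : ℤ, f x.left * g ^ ((p : ℤ) * c) = 1 ↔ x.left * w ^ c = 1 := by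
    intro c
    rw [zpow_mul, zpow_natCast, h.pow, ← map_zpow, ← map_mul, ← map_one f, h.inj.eq_iff]
  constructor
  · intro h1
    obtain ⟨c, hc⟩ := h.dvd x.right.toAdd (x.left⁻¹) (by rw [map_inv]; exact (inv_eq_of_mul_eq_one_right h1).symm)
    rw [hc, key] at h1
    exact ⟨c, hc, h1⟩
  · rintro ⟨c, hc, h1⟩
    rw [hc, key]; exact h1

lemma ExtData.iso {G' : Type} [Group G'] {f' : M →* G'} {g' : G'} (h : ExtData p a w f g) (h' : ExtData p a w f' g') :
    Nonempty (G ≃* G') := by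
  have hk : h.lift.ker = h'.lift.ker := by
    ext x; rw [h.mem_ker, h'.mem_ker]
  exact ⟨(QuotientGroup.quotientKerEquivOfSurjective _ h.surj).symm.trans 
    ((QuotientGroup.quotientMulEquivOfEq hk).trans (QuotientGroup.quotientKerEquivOfSurjective _ h'.surj))⟩

end
end Laz


namespace Laz
open Finset
set_option linter.unusedVariables false
attribute [local instance] LieRing.ofAssociativeRing

section
variable {p N : ℕ} [Fact p.Prime] {L : Type} [LieRing L] 

lemma SD.zsmul_def (δ : Module.End ℤ L) (hδ : IsDer δ) (c : ℤ) (x : L) (k : ℤ) : c • SD.mk δ hδ x k = SD.mk δ hδ (c • x) (c * k) := rfl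
lemma SD.nsmul_def (δ : Module.End ℤ L) (hδ : IsDer δ) (c : ℕ) (x : L) (k : ℤ) : c • SD.mk δ hδ x k = SD.mk δ hδ (c • x) (c * k) := by
  rw [← natCast_zsmul, SD.zsmul_def, natCast_zsmul]
lemma SD.add_def (δ : Module.End ℤ L) (hδ : IsDer δ) (x y : L) (k l : ℤ) : SD.mk δ hδ x k + SD.mk δ hδ y l = SD.mk δ hδ (x + y) (k + l) := rfl

lemma SD.mem (δ : Module.End ℤ L) (hδ : IsDer δ) (w x : L) (k : ℤ) : 
    SD.mk δ hδ x k ∈ SDI δ hδ p w ↔ ∃ c : ℤ, x = -(c • w) ∧ k = c * p := by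
  rw [SDI, AddSubgroup.mem_zmultiples_iff]
  constructor
  · rintro ⟨c, hc⟩
    rw [SD.zsmul_def] at hc
    have h1 : c • (-w) = x := congrArg Prod.fst hc
    have h2 : c * (p : ℤ) = k := congrArg Prod.snd hc
    exact ⟨c, by rw [← h1, smul_neg], h2.symm⟩
  · rintro ⟨c, rfl, rfl⟩
    exact ⟨c, by rw [SD.zsmul_def, smul_neg]⟩

/-- the cyclic extension of Lie rings -/
lemma lie_ext (Γ : LFilt p N L) [IsLaz p N L] (δ : Module.End ℤ L) (hδ : IsDer δ) (hδ1 : δ ∈ (adFilt Γ).F 1)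
    (w : L) (hw : δ w = 0) (hpw : ∀ x : L, p • δ x = ⁅w, x⁆) (m : ℕ) (hm : m + 1 ≤ N) (hmw : p ^ m • w = 0) (a : MulAut (LG p N L))
    (ha : ∀ x : L, a (LG.mk x) = LG.mk (pexp p N δ x)) :
    ∃ (E : Type) (_ : LieRing E) (_ : IsLaz p N E) (f : LG p N L →* LG p N E) (g : LG p N E), ExtData p a (LG.mk w) f g := by
  have hp : p.Prime := Fact.out
  let I : LieIdeal ℤ (SD δ hδ) := mkIdeal (SDI δ hδ p w) (SDI_ideal δ hδ p w hw hpw)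
  let π := qmk I
  have hI : ∀ x k, π (SD.mk δ hδ x k) = 0 ↔ ∃ c : ℤ, x = -(c • w) ∧ k = c * p := by
    intro x k
    rw [← SD.mem (p := p)]
    exact qmk_eq_zero I _
  let i : L →+ (SD δ hδ ⧸ I) := π.comp ((AddMonoidHom.inl L ℤ : L →+ L × ℤ) : L →+ SD δ hδ)
  have hi : ∀ x, i x = π (SD.mk δ hδ x 0) := fun x => rfl
  have hilie : ∀ x y : L, i ⁅x, y⁆ = ⁅i x, i y⁆ := by
    intro x y
    rw [hi, hi, hi, ← qmk_lie, SD.lie_def]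
    refine congrArg (fun z => π (SD.mk δ hδ z 0)) ?_
    show ⁅x, y⁆ = ⁅x, y⁆ + (0 : ℤ) • δ y - (0 : ℤ) • δ x
    simp
  have hiinj : Function.Injective i := by
    rw [injective_iff_map_eq_zero]
    intro x hx
    rw [hi, hI] at hx
    obtain ⟨c, h1, h2⟩ := hx
    have : c = 0 := by
      rcases mul_eq_zero.1 h2.symm with h | h
      · exact h
      · exact absurd (by exact_mod_cast h) hp.ne_zero
    rw [h1, this]; simp
  have hsurj : ∀ z : SD δ hδ ⧸ I, ∃ x k, z = π (SD.mk δ hδ x k) := by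
    intro z
    obtain ⟨y, rfl⟩ := qmk_surj I z
    exact ⟨y.1, y.2, rfl⟩
  have hlie : ∀ x y k l, ⁅π (SD.mk δ hδ x k), π (SD.mk δ hδ y l)⁆ = i (⁅x, y⁆ + k • δ y - l • δ x) := by
    intro x y k l
    rw [← qmk_lie]; rfl
  have hδm : ∀ j, ∀ x ∈ Γ.F j, δ x ∈ Γ.F (j + 1) := fun j x hx => hδ1 j x hx
  have htop : ∀ x : L, x ∈ Γ.F 1 := by intro x; rw [Γ.one]; trivial
  have hlaz : IsLaz p N (SD δ hδ ⧸ I) := by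
    refine IsLaz.of_chain (fun j => if j ≤ 1 then ⊤ else (Γ.F j).map i) (by simp) ?_ ?_ ?_ ?_
    · intro j
      rcases j with _ | _ | j
      · simp
      · simp
      · simp only [show ¬ (j + 1 + 1 + 1 ≤ 1) by omega, show ¬ (j + 1 + 1 ≤ 1) by omega, if_false]
        exact AddSubgroup.map_mono (Γ.anti _)
    · intro j x y hy
      obtain ⟨x, k, rfl⟩ := hsurj x
      rcases j with _ | _ | j
      · simp
      · obtain ⟨y, l, rfl⟩ := hsurj y
        simp only [show ¬ (0 + 1 + 1 ≤ 1) by omega, if_false]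
        rw [hlie]
        exact AddSubgroup.mem_map_of_mem _ (sub_mem (add_mem (Γ.lie_mem (htop _) (htop _)) (zsmul_mem (hδm _ _ (htop _)) _)) 
          (zsmul_mem (hδm _ _ (htop _)) _))
      · simp only [show ¬ (j + 1 + 1 + 1 ≤ 1) by omega, show ¬ (j + 1 + 1 ≤ 1) by omega, if_false] at hy ⊢
        obtain ⟨y, hy, rfl⟩ := hy
        rw [hi, hlie, zero_smul, sub_zero]
        refine AddSubgroup.mem_map_of_mem _ (add_mem ?_ (zsmul_mem (hδm _ _ hy) _))
        have := Γ.lie_mem (htop x) hy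
        rwa [add_comm] at this
    · simp only [show ¬ (p ≤ 1) by have := hp.two_le; omega, if_false, Γ.top, AddSubgroup.map_bot]
    · intro z
      obtain ⟨x, k, rfl⟩ := hsurj z
      rw [← map_nsmul, SD.nsmul_def, hI]
      refine ⟨p ^ (N - 1) * k, ?_, ?_⟩
      · rw [Γ.tors, mul_comm, mul_smul]
        have : ((p : ℤ) ^ (N - 1)) • w = 0 := by
          obtain ⟨r, hr⟩ : ∃ r, N - 1 = m + r := ⟨N - 1 - m, by omega⟩
          rw [hr, pow_add, mul_comm, mul_smul]
          have : ((p : ℤ) ^ m) • w = 0 := by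
            have h := natCast_zsmul w (p ^ m)
            rw [hmw] at h
            exact_mod_cast h
          rw [this, smul_zero]
        rw [this]; simp
      · obtain ⟨r, hr⟩ : ∃ r, N = r + 1 := ⟨N - 1, by omega⟩
        rw [hr]; push_cast; ring
  refine ⟨SD δ hδ ⧸ I, inferInstance, hlaz, LG.map i hilie, LG.mk (π (SD.mk δ hδ 0 1)), ?_⟩
  have hk : ∀ k : ℤ, k • π (SD.mk δ hδ 0 1) = π (SD.mk δ hδ 0 k) := by
    intro k; rw [← map_zsmul, SD.zsmul_def, smul_zero, mul_one]
  constructor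
  · intro x y hxy
    exact hiinj hxy
  · intro x
    ext
    rw [LG.val_conj, LG.map_val, LG.map_val, LG.val_mk]
    have h1 : (a x).val = pexp p N δ x.val := ha x.val
    rw [h1, pexp_apply, map_sum, Ead]
    refine sum_congr rfl fun k hk => ?_
    clear hk
    rw [map_nsmul]
    congr 1
    induction k with
    | zero => rfl
    | succ k ih => 
      rw [Function.iterate_succ_apply', ih, pow_succ', Module.End.mul_apply, hi, hlie]
      simp
  · ext
    rw [LG.val_pow, LG.map_val, LG.val_mk, LG.val_mk, ← natCast_zsmul, hk, hi, ← sub_eq_zero, ← map_sub]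
    have : SD.mk δ hδ 0 p - SD.mk δ hδ w 0 = SD.mk δ hδ (-w) p := by
      refine Prod.ext ?_ ?_
      · exact zero_sub w
      · exact sub_zero (p : ℤ)
    rw [this, hI]
    exact ⟨1, by simp, by simp⟩
  · intro h
    obtain ⟨x, k, hz⟩ := hsurj h.val
    have hJ : ∀ u v : SD δ hδ ⧸ I, ⁅u, v⁆ ∈ i.range := by
      intro u v
      obtain ⟨u, k, rfl⟩ := hsurj u
      obtain ⟨v, l, rfl⟩ := hsurj v
      rw [hlie]; exact ⟨_, rfl⟩
    have h1 := lmul_sub_mem (p := p) (N := N) i.range (fun u v _ => hJ u v) h.val (((LG.mk (π (SD.mk δ hδ 0 1)) : LG p N _) ^ k)⁻¹).val (hJ _ _)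
    rw [← LG.val_mul, LG.val_inv, LG.val_zpow, LG.val_mk, hk, hz, ← map_neg, ← map_add] at h1
    have h2 : SD.mk δ hδ x k + - SD.mk δ hδ 0 k = SD.mk δ hδ x 0 := by
      refine Prod.ext ?_ ?_
      · exact (add_neg_eq_iff_eq_add.2 (by exact (add_zero x).symm))
      · exact add_neg_cancel k
    rw [h2, ← hi] at h1
    have h3 := add_mem h1 (⟨x, rfl⟩ : i x ∈ i.range)
    rw [sub_add_cancel] at h3
    obtain ⟨y, hy⟩ := h3
    refine ⟨LG.mk y, k, ?_⟩
    rw [← mul_inv_eq_iff_eq_mul]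
    ext
    exact hy.symm
  · intro k x h
    have h1 := congrArg LG.val h
    rw [LG.val_zpow, LG.val_mk, hk, LG.map_val, hi, ← sub_eq_zero, ← map_sub] at h1
    have : SD.mk δ hδ 0 k - SD.mk δ hδ x.val 0 = SD.mk δ hδ (-x.val) k := by
      refine Prod.ext ?_ ?_
      · exact zero_sub _
      · exact sub_zero _
    rw [this, hI] at h1
    obtain ⟨c, -, hc⟩ := h1
    exact ⟨c, by rw [hc, mul_comm]⟩

end
end Laz


namespace Laz
open Finset
set_option linter.unusedVariables false
attribute [local instance] LieRing.ofAssociativeRing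

section
variable {p N : ℕ} [Fact p.Prime]

lemma group_step (m : ℕ) (hm : m + 1 ≤ p) (hN : m + 1 ≤ N) (G : Type) [Group G] (hG : Nat.card G = p ^ (m + 1))
    (M : Subgroup G) (hM : Nat.card M = p ^ m) (L : Type) [LieRing L] [IsLaz p N L] (ε : M ≃* LG p N L) :
    ∃ (E : Type) (_ : LieRing E) (_ : IsLaz p N E), Nonempty (G ≃* LG p N E) := by
  have hp : p.Prime := Fact.out
  have hfinG : Finite G := Nat.finite_of_card_ne_zero (by rw [hG]; exact pow_ne_zero _ hp.ne_zero)
  have hidx : M.index = p := by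
    have := M.card_mul_index
    rw [hM, hG, pow_succ] at this
    exact Nat.eq_of_mul_eq_mul_left (pow_pos hp.pos m) this
  have hnorm : M.Normal := by
    refine Subgroup.normal_of_index_eq_minFac_card ?_
    rw [hidx, hG, hp.pow_minFac (by omega)]
  have hcardQ : Nat.card (G ⧸ M) = p := by rw [← hidx]; rfl
  have hcardL : Nat.card L = p ^ m := by
    rw [← hM, Nat.card_congr (ε.toEquiv.trans LG.equiv.symm)]
  have hfinL : Finite L := Nat.finite_of_card_ne_zero (by rw [hcardL]; exact pow_ne_zero _ hp.ne_zero)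
  obtain ⟨g, hg⟩ : ∃ g : G, g ∉ M := by
    by_contra hcon
    push Not at hcon
    have : M = ⊤ := by rw [eq_top_iff]; intro x _; exact hcon x
    rw [this, Subgroup.index_top] at hidx
    exact hp.one_lt.ne hidx
  let f : LG p N L →* G := M.subtype.comp ε.symm.toMonoidHom
  have hf : Function.Injective f := Subtype.coe_injective.comp ε.symm.injective
  have hfM : ∀ x, f x ∈ M := fun x => (ε.symm x).2
  have hMf : ∀ x ∈ M, ∃ y, f y = x := fun x hx => ⟨ε ⟨x, hx⟩, by simp [f]⟩
  let a : MulAut (LG p N L) := (ε.symm.trans (MulAut.conjNormal g)).trans ε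
  have hfa : ∀ x, g * f x * g⁻¹ = f (a x) := by
    intro x
    simp [f, a]
  have hlie := hom_lie a.toMonoidHom
  let α : Module.End ℤ L := AddMonoidHom.toIntLinearMap (AddMonoidHom.mk' (fun x => (a (LG.mk x)).val) hlie.1)
  have hα : ∀ x, LG.mk (α x) = a (LG.mk x) := fun x => rfl
  have hαlie : ∀ x y : L, α ⁅x, y⁆ = ⁅α x, α y⁆ := hlie.2
  have hαs : Function.Surjective α := by
    intro y
    obtain ⟨x, hx⟩ := a.surjective (LG.mk y)
    exact ⟨x.val, congrArg LG.val hx⟩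
  obtain ⟨Γ, hΓ⟩ := exists_stable hcardL hm (IsPGroup.of_card hG) f hf g α hαlie hαs (fun x => by rw [hα]; exact hfa _)
  have hα1 : α - 1 ∈ (adFilt Γ).F 1 := fun i x hx => hΓ i x hx
  obtain ⟨δ, hδ1, hδα⟩ := (adFilt Γ).exists_log hp ((adFilt Γ).F 1) le_rfl 
    (fun a ha b hb => (adFilt Γ).anti 1 ((adFilt Γ).mul_mem ha hb)) hα1
  rw [add_sub_cancel] at hδα
  have hder : IsDer δ := exp_derivation hp Γ δ hδ1 (by rw [hδα]; exact hαlie)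
  -- facts on the quotient
  have hgq : (g : G ⧸ M) ≠ 1 := by rwa [Ne, QuotientGroup.eq_one_iff]
  have hprime : Fact (Nat.card (G ⧸ M)).Prime := ⟨by rw [hcardQ]; exact hp⟩
  have hord : orderOf (g : G ⧸ M) = p := by
    rw [← hcardQ]
    refine orderOf_eq_card_of_forall_mem_zpowers fun x => mem_zpowers_of_prime_card rfl hgq
  have hgp : g ^ p ∈ M := by
    rw [← QuotientGroup.eq_one_iff, QuotientGroup.mk_pow, ← hord, pow_orderOf_eq_one]
  obtain ⟨w, hw⟩ := hMf _ hgp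
  have hext : ∃ w, ExtData p a w f g := by
    refine ⟨w, hf, hfa, hw.symm, ?_, ?_⟩
    · intro h
      obtain ⟨k, hk⟩ := Subgroup.mem_zpowers_iff.1 (mem_zpowers_of_prime_card (p := Nat.card (G ⧸ M)) rfl hgq (g' := (h : G ⧸ M)))
      rw [← QuotientGroup.mk_zpow, QuotientGroup.eq] at hk
      have hk' := hnorm.conj_mem _ hk (g ^ k)
      obtain ⟨y, hy⟩ := hMf _ hk'
      refine ⟨y, k, ?_⟩
      rw [hy]; group
    · intro k x hx
      rw [← hord, orderOf_dvd_iff_zpow_eq_one, ← QuotientGroup.mk_zpow, QuotientGroup.eq_one_iff, hx]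
      exact hfM x
  have hE : ExtData p a w f g := by
    obtain ⟨w', hE⟩ := hext
    have : w' = w := hf (by rw [← hE.pow, hw])
    rwa [this] at hE
  have haw : a w = w := by
    apply hf
    rw [← hfa, hw]; group
  have hδw : δ w.val = 0 := by
    refine (adFilt Γ).log_fix hp hδ1 w.val ?_
    rw [hδα]
    exact congrArg LG.val haw
  have hpow : ∀ (k : ℕ) (x : L), f (LG.mk ((α ^ k) x)) = g ^ k * f (LG.mk x) * (g ^ k)⁻¹ := by
    intro k
    induction k with
    | zero => intro x; simp
    | succ k ih => 
      intro x
      rw [pow_succ, Module.End.mul_apply, ih, hα, ← hfa]; group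
  have hpδ : p • δ = LieAlgebra.ad ℤ L w.val := by
    refine (adFilt Γ).exp_inj hp (nsmul_mem hδ1 _) (ad_mem Γ _) ?_
    rw [(adFilt Γ).exp_nsmul hp hδ1, hδα]
    refine LinearMap.ext fun x => ?_
    rw [pexp_ad]
    have h1 := LG.val_conj w (LG.mk x)
    rw [LG.val_mk] at h1
    rw [← h1]
    have h2 : (LG.mk ((α ^ p) x) : LG p N L) = w * LG.mk x * w⁻¹ := by
      apply hf
      rw [hpow, map_mul, map_mul, map_inv, hw]
    exact congrArg LG.val h2
  obtain ⟨E, i1, i2, f', g', hE'⟩ := lie_ext Γ δ hder hδ1 w.val hδw (fun x => LinearMap.congr_fun hpδ x) m hN 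
    (by rw [← hcardL]; exact card_nsmul_eq_zero') a (fun x => by rw [hδα, hα])
  exact ⟨E, i1, i2, hE.iso hE'⟩

variable (p N) in
/-- every group of order `p ^ m`, `m ≤ p`, is a Lazard group -/
theorem exists_lie (m : ℕ) (hm : m ≤ p) (hN : m ≤ N) (G : Type) [Group G] (hG : Nat.card G = p ^ m) :
    ∃ (E : Type) (_ : LieRing E) (_ : IsLaz p N E), Nonempty (G ≃* LG p N E) := by
  have hp : p.Prime := Fact.out
  induction m generalizing G with
  | zero => 
    let i1 : LieRing PUnit.{1} := 
      { bracket := fun _ _ => 0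
        add_lie := fun _ _ _ => rfl
        lie_add := fun _ _ _ => rfl
        lie_self := fun _ => rfl
        leibniz_lie := fun _ _ _ => rfl }
    have i2 : IsLaz p N PUnit.{1} := IsLaz.of_chain (fun _ => ⊤) rfl (fun _ => le_rfl) (fun _ _ _ _ => trivial) (Subsingleton.elim _ _)
      (fun _ => rfl)
    refine ⟨PUnit, i1, i2, ⟨?_⟩⟩
    have := (Nat.card_eq_one_iff_unique.1 (by simpa using hG)).1
    have hs : Subsingleton (LG p N PUnit.{1}) := inferInstanceAs (Subsingleton PUnit.{1})
    exact ⟨⟨fun _ => 1, fun _ => 1, fun _ => Subsingleton.elim _ _, fun _ => Subsingleton.elim _ _⟩, fun _ _ => Subsingleton.elim _ _⟩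
  | succ m ih =>
    have hfinG : Finite G := Nat.finite_of_card_ne_zero (by rw [hG]; exact pow_ne_zero _ hp.ne_zero)
    obtain ⟨M, hM⟩ := Sylow.exists_subgroup_card_pow_prime (G := G) p (n := m) (by rw [hG]; exact pow_dvd_pow _ (by omega))
    obtain ⟨L, i1, i2, ⟨ε⟩⟩ := ih (by omega) (by omega) M hM
    exact group_step m hm hN G hG M hM L ε

end
end Laz


namespace Laz
open Finset
set_option linter.unusedVariables false

section
variable {J : Type} [Fintype J] (p : ℕ) (lam : J → ℕ)

/-- digit arrays -/
def Dgs : Set (J → ℕ → ℕ) := {d | (∀ j i, d j i < p) ∧ ∀ j i, lam j ≤ i → d j i = 0}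

variable {A : Type} [AddCommGroup A] (π : A →+ A) (a : J → A)

/-- the element with given digits -/
def eta (d : J → ℕ → ℕ) : A := ∑ j, ∑ i ∈ range (lam j), d j i • (π^[i] (a j))

open Classical in
noncomputable def ind (j : J) (i n : ℕ) : J → ℕ → ℕ := fun j' i' => if j' = j ∧ i' = i then n else 0

open Classical in
noncomputable def upd (d : J → ℕ → ℕ) (j : J) (i n : ℕ) : J → ℕ → ℕ := fun j' i' => if j' = j ∧ i' = i then n else d j' i'

lemma eta_add (d e : J → ℕ → ℕ) : eta lam π a (d + e) = eta lam π a d + eta lam π a e := by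
  simp only [eta, ← sum_add_distrib, Pi.add_apply, add_smul]

lemma eta_zero : eta lam π a 0 = 0 := by simp [eta]

lemma eta_ind (j : J) (i n : ℕ) (h : i < lam j) : eta lam π a (ind j i n) = n • (π^[i] (a j)) := by
  classical
  rw [eta, sum_eq_single j, sum_eq_single i]
  · simp [ind]
  · intro i' _ h'; simp [ind, h']
  · intro h'; simp at h'; omega
  · intro j' _ h'; simp [ind, h']
  · intro h'; simp at h'

lemma eta_upd (d : J → ℕ → ℕ) (j : J) (i n : ℕ) (h : i < lam j) :
    eta lam π a (upd d j i n) + d j i • (π^[i] (a j)) = eta lam π a d + n • (π^[i] (a j)) := by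
  rw [← eta_ind lam π a j i _ h, ← eta_ind lam π a j i _ h, ← eta_add, ← eta_add]
  congr 1
  funext j' i'
  simp only [Pi.add_apply, upd, ind]
  by_cases h' : j' = j ∧ i' = i
  · simp [h'.1, h'.2, add_comm]
  · simp [h']

lemma Dgs_zero (hp : p.Prime) : (0 : J → ℕ → ℕ) ∈ Dgs p lam := ⟨fun _ _ => hp.pos, fun _ _ _ => rfl⟩

lemma Dgs_upd {d : J → ℕ → ℕ} (hd : d ∈ Dgs p lam) (j : J) (i n : ℕ) (h : i < lam j) (hn : n < p) : upd d j i n ∈ Dgs p lam := by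
  constructor
  · intro j' i'
    rw [upd]; split_ifs
    · exact hn
    · exact hd.1 _ _
  · intro j' i' h'
    rw [upd, if_neg]
    · exact hd.2 _ _ h'
    · rintro ⟨rfl, rfl⟩; omega

variable {p lam π a}

lemma ann_le (ann : ∀ j, π^[lam j] (a j) = 0) (j : J) (i : ℕ) (h : lam j ≤ i) : π^[i] (a j) = 0 := by
  obtain ⟨k, rfl⟩ := Nat.exists_eq_add_of_le' h
  rw [Function.iterate_add_apply, ann, iterate_map_zero]

/-- digits may be normalised after adding a generator -/
lemma norm_gen (hp : p.Prime) {c : ℕ} (carry : ∀ x, p • x = c • π x) (ann : ∀ j, π^[lam j] (a j) = 0) (j : J) (k : ℕ) :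
    ∀ i, lam j ≤ i + k → ∀ d ∈ Dgs p lam, ∃ d' ∈ Dgs p lam, eta lam π a d' = eta lam π a d + π^[i] (a j) := by
  induction k with
  | zero => intro i h d hd; exact ⟨d, hd, by rw [ann_le ann j i h, add_zero]⟩
  | succ k ih =>
    intro i h d hd
    by_cases hi : lam j ≤ i
    · exact ⟨d, hd, by rw [ann_le ann j i hi, add_zero]⟩
    push Not at hi
    by_cases hlt : d j i + 1 < p
    · refine ⟨upd d j i (d j i + 1), Dgs_upd p lam hd j i _ hi hlt, ?_⟩
      have := eta_upd lam π a d j i (d j i + 1) hi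
      rw [add_smul, one_smul, add_comm (d j i • _), ← add_assoc] at this
      exact add_right_cancel this
    · have hdp : d j i + 1 = p := by have := hd.1 j i; omega
      have h0 := eta_upd lam π a d j i 0 hi
      rw [zero_smul, add_zero] at h0
      have h1 : ∀ r : ℕ, ∀ d ∈ Dgs p lam, ∃ d' ∈ Dgs p lam, eta lam π a d' = eta lam π a d + r • π^[i + 1] (a j) := by
        intro r
        induction r with
        | zero => intro d hd; exact ⟨d, hd, by simp⟩
        | succ r ihr =>
          intro d hd
          obtain ⟨d1, hd1, h1⟩ := ihr d hd
          obtain ⟨d2, hd2, h2⟩ := ih (i + 1) (by omega) d1 hd1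
          exact ⟨d2, hd2, by rw [h2, h1, add_smul, one_smul, add_assoc]⟩
      obtain ⟨d', hd', h'⟩ := h1 c _ (Dgs_upd p lam hd j i 0 hi hp.pos)
      refine ⟨d', hd', ?_⟩
      rw [h', Function.iterate_succ_apply', ← carry, ← hdp, add_smul, one_smul, ← add_assoc, h0]

lemma norm_eta (hp : p.Prime) {c : ℕ} (carry : ∀ x, p • x = c • π x) (ann : ∀ j, π^[lam j] (a j) = 0) (n : J → ℕ → ℕ) :
    ∃ d ∈ Dgs p lam, eta lam π a d = eta lam π a n := by
  let T : AddSubmonoid A := 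
    { carrier := {x | ∀ d ∈ Dgs p lam, ∃ d' ∈ Dgs p lam, eta lam π a d' = eta lam π a d + x}
      zero_mem' := fun d hd => ⟨d, hd, by simp⟩
      add_mem' := fun {x y} hx hy d hd => by
        obtain ⟨d1, hd1, h1⟩ := hx d hd
        obtain ⟨d2, hd2, h2⟩ := hy d1 hd1
        exact ⟨d2, hd2, by rw [h2, h1, add_assoc]⟩ }
  have hT : eta lam π a n ∈ T := by
    refine sum_mem fun j _ => sum_mem fun i _ => nsmul_mem ?_ _
    exact norm_gen hp carry ann j (lam j) i (by omega)
  obtain ⟨d, hd, h⟩ := hT 0 (Dgs_zero p lam hp)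
  exact ⟨d, hd, by rw [h, eta_zero, zero_add]⟩

variable (p lam) in
lemma card_Dgs (hp : p.Prime) : Nat.card (Dgs p lam) = p ^ ∑ j, lam j := by
  let E : Dgs p lam ≃ ((j : J) → (Fin (lam j) → Fin p)) :=
    { toFun := fun d j i => ⟨d.1 j i, d.2.1 j i⟩
      invFun := fun f => ⟨fun j i => if h : i < lam j then (f j ⟨i, h⟩ : ℕ) else 0, by
        constructor
        · intro j i
          dsimp only
          split_ifs with h
          · exact (f j ⟨i, h⟩).2
          · exact hp.pos
        · intro j i h
          dsimp only
          rw [dif_neg (by omega)]⟩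
      left_inv := fun d => by
        refine Subtype.ext ?_
        funext j i
        dsimp only
        split_ifs with h
        · rfl
        · exact (d.2.2 j i (by omega)).symm
      right_inv := fun f => by
        funext j i
        refine Fin.ext ?_
        simp }
  rw [Nat.card_congr E, Nat.card_pi]
  simp [Finset.prod_pow_eq_pow_sum]

variable (p lam π a) in
/-- digit bases -/
structure Dig (c : ℕ) : Prop where
  carry : ∀ x, p • x = c • π x
  ann : ∀ j, π^[lam j] (a j) = 0
  inj : ∀ d ∈ Dgs p lam, ∀ e ∈ Dgs p lam, eta lam π a d = eta lam π a e → d = e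
  surj : ∀ x, ∃ d ∈ Dgs p lam, eta lam π a d = x

lemma Dig.of_span (hp : p.Prime) {c : ℕ} (carry : ∀ x, p • x = c • π x) (ann : ∀ j, π^[lam j] (a j) = 0)
    (hcard : Nat.card A = p ^ ∑ j, lam j) (hspan : ∀ x : A, ∃ n, eta lam π a n = x) : Dig p lam π a c := by
  have hs : ∀ x, ∃ d ∈ Dgs p lam, eta lam π a d = x := by
    intro x
    obtain ⟨n, rfl⟩ := hspan x
    exact norm_eta hp carry ann n
  refine ⟨carry, ann, ?_, hs⟩
  have hfin : Finite (Dgs p lam) := Nat.finite_of_card_ne_zero (by rw [card_Dgs p lam hp]; exact pow_ne_zero _ hp.ne_zero)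
  have hb : Function.Bijective (fun d : Dgs p lam => eta lam π a d.1) := by
    refine (Function.Surjective.bijective_of_nat_card_le ?_ ?_)
    · intro x
      obtain ⟨d, hd, h⟩ := hs x
      exact ⟨⟨d, hd⟩, h⟩
    · rw [hcard, card_Dgs p lam hp]
  intro d hd e he h
  exact congrArg Subtype.val (hb.1 (a₁ := ⟨d, hd⟩) (a₂ := ⟨e, he⟩) h)

/-- lifting -/
lemma Dig.lift (hp : p.Prime) {c : ℕ} (h : Dig p lam π a c) {B : Type} [AddCommGroup B] {ϖ : B →+ B} {b : J → B}
    (carry : ∀ x, p • x = c • ϖ x) (ann : ∀ j, ϖ^[lam j] (b j) = 0) :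
    ∃ F : A →+ B, ∀ n, F (eta lam π a n) = eta lam ϖ b n := by
  choose dig hdig heta using h.surj
  have hpair : ∀ n, eta lam (π.prodMap ϖ) (fun j => (a j, b j)) n = (eta lam π a n, eta lam ϖ b n) := by
    intro n
    have hit : ∀ i (x : A × B), (π.prodMap ϖ)^[i] x = (π^[i] x.1, ϖ^[i] x.2) := by
      intro i
      induction i with
      | zero => intro x; rfl
      | succ i ih => intro x; rw [Function.iterate_succ_apply, ih]; rfl
    refine Prod.ext ?_ ?_
    · have := map_sum (AddMonoidHom.fst A B) (fun j => ∑ i ∈ range (lam j), n j i • (π.prodMap ϖ)^[i] (a j, b j)) univ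
      refine this.trans (sum_congr rfl fun j _ => ?_)
      rw [map_sum]
      refine sum_congr rfl fun i _ => ?_
      rw [hit]; rfl
    · have := map_sum (AddMonoidHom.snd A B) (fun j => ∑ i ∈ range (lam j), n j i • (π.prodMap ϖ)^[i] (a j, b j)) univ
      refine this.trans (sum_congr rfl fun j _ => ?_)
      rw [map_sum]
      refine sum_congr rfl fun i _ => ?_
      rw [hit]; rfl
  have key : ∀ n, eta lam ϖ b (dig (eta lam π a n)) = eta lam ϖ b n := by
    intro n
    obtain ⟨d, hd, hdn⟩ := norm_eta (π := π.prodMap ϖ) (a := fun j => (a j, b j)) (c := c) hp 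
      (fun x => Prod.ext (h.carry x.1) (carry x.2)) (fun j => by
        have hit : ∀ i (x : A × B), (π.prodMap ϖ)^[i] x = (π^[i] x.1, ϖ^[i] x.2) := by
          intro i
          induction i with
          | zero => intro x; rfl
          | succ i ih => intro x; rw [Function.iterate_succ_apply, ih]; rfl
        rw [hit, h.ann, ann]; rfl) n
    rw [hpair, hpair, Prod.mk.injEq] at hdn
    have : dig (eta lam π a n) = d := h.inj _ (hdig _) _ hd (by rw [heta, hdn.1])
    rw [this, hdn.2]
  refine ⟨AddMonoidHom.mk' (fun x => eta lam ϖ b (dig x)) ?_, key⟩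
  intro x y
  have h1 := key (dig x + dig y)
  rwa [eta_add, eta_add, heta, heta] at h1

variable (lam) in
/-- shift of digits -/
def shf (d : J → ℕ → ℕ) : J → ℕ → ℕ := fun j i => if i = 0 ∨ lam j ≤ i then 0 else d j (i - 1)

lemma shf_mem (hp : p.Prime) {d : J → ℕ → ℕ} (hd : d ∈ Dgs p lam) : shf lam d ∈ Dgs p lam := by
  constructor
  · intro j i; rw [shf]; split_ifs
    · exact hp.pos
    · exact hd.1 _ _
  · intro j i h; rw [shf, if_pos (Or.inr h)]

lemma eta_shf (ann : ∀ j, π^[lam j] (a j) = 0) (d : J → ℕ → ℕ) : eta lam π a (shf lam d) = π (eta lam π a d) := by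
  rw [eta, eta, map_sum]
  refine sum_congr rfl fun j _ => ?_
  rw [map_sum]
  rcases hl : lam j with _ | l
  · simp
  · have hann := ann j
    rw [hl] at hann
    rw [sum_range_succ', sum_range_succ, map_nsmul π (d j l), ← Function.iterate_succ_apply' π, Nat.succ_eq_add_one, hann]
    simp only [shf, true_or, if_true, zero_smul, smul_zero]
    congr 1
    refine sum_congr rfl fun i hi => ?_
    rw [mem_range] at hi
    rw [if_neg (by omega), map_nsmul, Function.iterate_succ_apply', Nat.add_sub_cancel]

end
end Laz


namespace Laz
open Finset
set_option linter.unusedVariables false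

section
variable {A : Type} [AddCommGroup A] 

/-- iterated kernels -/
def Kr (π : A →+ A) (i : ℕ) : AddSubgroup A where
  carrier := {x | π^[i] x = 0}
  zero_mem' := iterate_map_zero π i
  add_mem' := fun {x y} hx hy => by
    show π^[i] (x + y) = 0
    rw [iterate_map_add, hx, hy, add_zero]
  neg_mem' := fun {x} hx => by
    show π^[i] (-x) = 0
    rw [iterate_map_neg, hx, neg_zero]

lemma mem_Kr (π : A →+ A) (i : ℕ) (x : A) : x ∈ Kr π i ↔ π^[i] x = 0 := Iff.rfl

/-- restriction to the image -/
def rst (π : A →+ A) : π.range →+ π.range := (π.comp π.range.subtype).codRestrict π.range (fun x => ⟨x.1, rfl⟩)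

lemma rst_iter (π : A →+ A) (i : ℕ) (x : π.range) : (((rst π)^[i] x : π.range) : A) = π^[i] x := by
  induction i generalizing x with
  | zero => rfl
  | succ i ih => rw [Function.iterate_succ_apply, ih]; rfl

lemma card_Kr_succ [Finite A] (π : A →+ A) (i : ℕ) : Nat.card (Kr π (i + 1)) = Nat.card (Kr (rst π) i) * Nat.card (Kr π 1) := by
  let f : Kr π (i + 1) →+ Kr (rst π) i := 
    { toFun := fun x => ⟨⟨π x.1, x.1, rfl⟩, by
        rw [mem_Kr]
        refine Subtype.ext ?_
        rw [rst_iter]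
        exact x.2⟩
      map_zero' := by refine Subtype.ext (Subtype.ext ?_); simp
      map_add' := fun x y => by refine Subtype.ext (Subtype.ext ?_); simp }
  have hs : Function.Surjective f := by
    rintro ⟨⟨_, x, rfl⟩, hx⟩
    refine ⟨⟨x, ?_⟩, rfl⟩
    rw [mem_Kr] at hx ⊢
    have := congrArg Subtype.val hx
    rw [rst_iter] at this
    exact this
  have h1 := f.ker.card_mul_index
  rw [AddSubgroup.index_ker, AddMonoidHom.range_eq_top.2 hs, AddSubgroup.card_top, mul_comm] at h1
  rw [← h1]
  congr 1
  refine Nat.card_congr ⟨fun x => ⟨x.1.1, ?_⟩, fun x => ⟨⟨x.1, ?_⟩, ?_⟩, fun _ => rfl, fun _ => rfl⟩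
  · have h := x.2
    rw [AddMonoidHom.mem_ker] at h
    exact congrArg (fun z : Kr (rst π) i => z.1.1) h
  · have h := x.2
    rw [mem_Kr] at h ⊢
    rw [Function.iterate_succ_apply]
    have h' : π x.1 = 0 := h
    rw [h', iterate_map_zero]
  · rw [AddMonoidHom.mem_ker]
    exact Subtype.ext (Subtype.ext x.2)

/-- elementary abelian generation -/
lemma exists_gen {p : ℕ} (hp : p.Prime) {S : Type} [AddCommGroup S] [Finite S] (hS : ∀ x : S, p • x = 0) (U : AddSubgroup S)
    (X : Type) [Fintype X] {u : ℕ} (hU : Nat.card U = p ^ u) (hSc : Nat.card S = p ^ (u + Fintype.card X)) :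
    ∃ c : X → S, ∀ x : S, ∃ y ∈ U, ∃ n : X → ℕ, x = y + ∑ j, n j • c j := by
  have : Fact p.Prime := ⟨hp⟩
  let inst : Module (ZMod p) S := AddCommGroup.zmodModule hS
  clear_value inst
  let U' : Submodule (ZMod p) S := AddSubgroup.toZModSubmodule p U
  have hU' : ∀ x, x ∈ U' ↔ x ∈ U := fun x => AddSubgroup.mem_toZModSubmodule p
  obtain ⟨C, hC⟩ := U'.exists_isCompl
  have hfu : Module.finrank (ZMod p) (↥U' : Type) = u := by
    have := Module.natCard_eq_pow_finrank (K := ZMod p) (V := U')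
    rw [Nat.card_zmod] at this
    exact Nat.pow_right_injective hp.two_le (this.symm.trans hU)
  have hfs : Module.finrank (ZMod p) S = u + Fintype.card X := by
    have := Module.natCard_eq_pow_finrank (K := ZMod p) (V := S)
    rw [Nat.card_zmod] at this
    exact Nat.pow_right_injective hp.two_le (this.symm.trans hSc)
  have hfc : Module.finrank (ZMod p) C = Fintype.card X := by
    have := Submodule.finrank_add_eq_of_isCompl hC
    omega
  let b := (Module.finBasisOfFinrankEq (ZMod p) C hfc).reindex (Fintype.equivFin X).symm
  refine ⟨fun j => b j, fun x => ?_⟩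
  obtain ⟨y, z, hyz⟩ := Submodule.mem_sup.1 (show x ∈ U' ⊔ C by rw [hC.sup_eq_top]; trivial)
  obtain ⟨hz, h1, h2⟩ := hyz
  refine ⟨y, (hU' y).1 z, fun j => (b.repr ⟨hz, h1⟩ j).val, ?_⟩
  refine h2.symm.trans ?_
  congr 1
  have h3 := congrArg Subtype.val (b.sum_repr ⟨hz, h1⟩)
  refine h3.symm.trans ?_
  rw [Submodule.coe_sum]
  refine sum_congr rfl fun j _ => ?_
  rw [Submodule.coe_smul, ← Nat.cast_smul_eq_nsmul (ZMod p), ZMod.natCast_zmod_val]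

end

section
variable {J : Type} [Fintype J] {p : ℕ} 

/-- the span as a subgroup -/
def etaSpan {A : Type} [AddCommGroup A] [Finite A] (lam : J → ℕ) (π : A →+ A) (a : J → A) : AddSubgroup A where
  carrier := {x | ∃ n, eta lam π a n = x}
  zero_mem' := ⟨0, eta_zero _ _ _⟩
  add_mem' := by
    rintro _ _ ⟨n, rfl⟩ ⟨m, rfl⟩
    exact ⟨n + m, eta_add _ _ _ _ _⟩
  neg_mem' := by
    rintro _ ⟨n, rfl⟩
    have h1 : ∀ k : ℕ, eta lam π a (k • n) = k • eta lam π a n := by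
      intro k
      induction k with
      | zero => rw [zero_smul, zero_smul, eta_zero]
      | succ k ih => rw [add_smul, one_smul, eta_add, ih, add_smul, one_smul]
    refine ⟨(Nat.card A - 1) • n, ?_⟩
    rw [h1, eq_neg_iff_add_eq_zero]
    have h2 : (Nat.card A - 1 + 1) • eta lam π a n = 0 := by
      rw [Nat.sub_add_cancel Nat.card_pos]; exact card_nsmul_eq_zero'
    rwa [add_smul, one_smul] at h2

theorem exists_dig (hp : p.Prime) (c : ℕ) (n : ℕ) : ∀ (A : Type) [AddCommGroup A] [Finite A] (π : A →+ A) (lam : J → ℕ),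
    (∀ x, p • x = c • π x) → (∀ x, π^[n] x = 0) → (∀ i, Nat.card (Kr π i) = p ^ ∑ j, min (lam j) i) → 
    ∃ a : J → A, Dig p lam π a c := by
  induction n with
  | zero =>
    intro A _ _ π lam carry hn hk
    have hA : ∀ x : A, x = 0 := hn
    have hs : Subsingleton A := ⟨fun x y => by rw [hA x, hA y]⟩
    have h1 := hk 1
    have hlam : ∀ j, lam j = 0 := by
      intro j
      have h2 : Nat.card (Kr π 1) = 1 := Nat.card_of_subsingleton 0
      rw [h2] at h1
      have h3 : ∑ j, min (lam j) 1 = 0 := Nat.pow_right_injective hp.two_le (by simp [← h1])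
      have := (sum_eq_zero_iff.1 h3) j (mem_univ j)
      omega
    refine ⟨0, Dig.of_span hp carry (fun j => hA _) ?_ (fun x => ⟨0, by rw [hA x]; exact hA _⟩)⟩
    simp [hlam]
  | succ n ih =>
    intro A _ _ π lam carry hn hk
    classical
    have hk' : ∀ i, Nat.card (Kr (rst π) i) = p ^ ∑ j, min (lam j - 1) i := by
      intro i
      have h1 := card_Kr_succ π i
      rw [hk, hk] at h1
      have h2 : ∑ j, min (lam j) (i + 1) = ∑ j, min (lam j - 1) i + ∑ j, min (lam j) 1 := by
        rw [← sum_add_distrib]; refine sum_congr rfl fun j _ => ?_; omega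
      rw [h2, pow_add] at h1
      exact (Nat.eq_of_mul_eq_mul_right (pow_pos hp.pos _) h1).symm
    obtain ⟨b, hb⟩ := ih π.range (rst π) (fun j => lam j - 1) (fun x => Subtype.ext (carry x.1)) 
      (by
        rintro ⟨_, x, rfl⟩
        refine Subtype.ext ?_
        rw [rst_iter]
        exact hn x) hk'
    let S := Kr π 1
    let U : AddSubgroup S := (π.range).comap S.subtype
    have hUc : Nat.card U = p ^ ∑ j, min (lam j - 1) 1 := by
      rw [← hk' 1]
      refine Nat.card_congr ⟨fun x => ⟨⟨x.1.1, x.2⟩, ?_⟩, fun x => ⟨⟨x.1.1, ?_⟩, x.1.2⟩, fun _ => rfl, fun _ => rfl⟩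
      · rw [mem_Kr]
        refine Subtype.ext ?_
        rw [rst_iter]
        exact x.1.2
      · have := x.2
        rw [mem_Kr] at this ⊢
        have := congrArg Subtype.val this
        rwa [rst_iter] at this
    have hSc : Nat.card S = p ^ (∑ j, min (lam j - 1) 1 + Fintype.card {j // lam j = 1}) := by
      rw [hk]
      congr 1
      rw [Fintype.card_subtype, card_filter, ← sum_add_distrib]
      refine sum_congr rfl fun j _ => ?_
      split_ifs <;> omega
    have hSp : ∀ x : S, p • x = 0 := by
      intro x
      refine Subtype.ext ?_
      show p • x.1 = 0
      have : π x.1 = 0 := x.2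
      rw [carry, this, smul_zero]
    obtain ⟨cc, hcc⟩ := exists_gen hp hSp U {j // lam j = 1} hUc hSc
    have hpre : ∀ j, ∃ x, π x = b j := fun j => (b j).2
    choose pre hpre using hpre
    let a : J → A := fun j => if h : lam j = 1 then (cc ⟨j, h⟩ : S) else if lam j = 0 then 0 else pre j
    have ha0 : ∀ j, lam j = 0 → a j = 0 := fun j h => by simp [a, h]
    have ha1 : ∀ j (h : lam j = 1), a j = (cc ⟨j, h⟩ : S) := fun j h => by simp [a, h]
    have ha2 : ∀ j, 2 ≤ lam j → π (a j) = b j := fun j h => by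
      simp only [a]
      rw [dif_neg (by omega), if_neg (by omega), hpre]
    have ann : ∀ j, π^[lam j] (a j) = 0 := by
      intro j
      by_cases h0 : lam j = 0
      · rw [ha0 j h0, iterate_map_zero]
      by_cases h1 : lam j = 1
      · rw [h1, ha1 j h1]; exact (cc ⟨j, h1⟩).2
      · obtain ⟨l, hl⟩ : ∃ l, lam j = l + 1 := ⟨lam j - 1, by omega⟩
        rw [hl, Function.iterate_succ_apply, ha2 j (by omega), ← rst_iter]
        have := hb.ann j
        simp only [hl, Nat.add_sub_cancel] at this
        rw [this]; rfl
    let W := etaSpan lam π a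
    have hW : ∀ j i, i < lam j → π^[i] (a j) ∈ W := fun j i h => ⟨ind j i 1, by rw [eta_ind _ _ _ _ _ _ h, one_smul]⟩
    have hB : ∀ y : π.range, ∃ z ∈ W, π z = y ∧ (y : A) ∈ W := by
      intro y
      obtain ⟨m, -, hm⟩ := hb.surj y
      have hm' := congrArg Subtype.val hm
      rw [eta, AddSubgroup.val_finsetSum] at hm'
      refine ⟨∑ j, ∑ i ∈ range (lam j - 1), m j i • π^[i] (a j), ?_, ?_, ?_⟩
      · refine sum_mem fun j _ => sum_mem fun i hi => nsmul_mem (hW j i ?_) _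
        rw [mem_range] at hi; omega
      · rw [← hm', map_sum]
        refine sum_congr rfl fun j _ => ?_
        rw [map_sum, AddSubgroup.val_finsetSum]
        refine sum_congr rfl fun i hi => ?_
        rw [mem_range] at hi
        rw [map_nsmul, AddSubgroup.coe_nsmul, rst_iter, ← ha2 j (by omega), ← Function.iterate_succ_apply' π, Function.iterate_succ_apply]
      · rw [← hm']
        refine sum_mem fun j _ => ?_
        rw [AddSubgroup.val_finsetSum]
        refine sum_mem fun i hi => ?_
        rw [mem_range] at hi
        rw [AddSubgroup.coe_nsmul, rst_iter, ← ha2 j (by omega), ← Function.iterate_succ_apply]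
        exact nsmul_mem (hW j _ (by simp only [Nat.succ_eq_add_one]; omega)) _
    refine ⟨a, Dig.of_span hp carry ann ?_ ?_⟩
    · -- cardinality
      have h1 := hk (n + 1 + ∑ j, lam j)
      have h2 : Kr π (n + 1 + ∑ j, lam j) = ⊤ := by
        rw [eq_top_iff]; intro x _
        rw [mem_Kr, add_comm, Function.iterate_add_apply, hn, iterate_map_zero]
      rw [h2, AddSubgroup.card_top] at h1
      rw [h1]; congr 1
      refine sum_congr rfl fun j _ => ?_
      have := single_le_sum (f := lam) (fun j _ => Nat.zero_le _) (mem_univ j)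
      omega
    · intro x
      obtain ⟨z, hz, hz', -⟩ := hB ⟨π x, x, rfl⟩
      have hxz : x - z ∈ S := by
        show π (x - z) = 0
        rw [map_sub, hz', sub_self]
      obtain ⟨y, hy, m, hm⟩ := hcc ⟨x - z, hxz⟩
      have hm' := congrArg Subtype.val hm
      have hxzW : x - z ∈ W := by
        have e1 : x - z = (y : A) + ∑ j, m j • ((cc j : S) : A) := by
          rw [show x - z = _ from hm', AddSubgroup.coe_add, AddSubgroup.val_finsetSum]; rfl
        rw [e1]
        refine add_mem ?_ (sum_mem fun j _ => nsmul_mem ?_ _)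
        · obtain ⟨_, _, _, h⟩ := hB ⟨y, hy⟩
          exact h
        · rw [← ha1 j.1 j.2]
          exact hW j.1 0 (by rw [j.2]; omega)
      have := add_mem hxzW hz
      rw [sub_add_cancel] at this
      exact this

end
end Laz


namespace Laz
open Finset
set_option linter.unusedVariables false

section
variable {J : Type} [Fintype J] {p : ℕ} {lam : J → ℕ}

lemma eta_map {A B : Type} [AddCommGroup A] [AddCommGroup B] (π : A →+ A) (ϖ : B →+ B) (f : A →+ B)
    (h : ∀ x, f (π x) = ϖ (f x)) (a : J → A) (d : J → ℕ → ℕ) :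
    f (eta lam π a d) = eta lam ϖ (fun j => f (a j)) d := by
  have h2 : ∀ i x, f (π^[i] x) = ϖ^[i] (f x) := by
    intro i
    induction i with
    | zero => intro x; rfl
    | succ i ih => intro x; rw [Function.iterate_succ_apply, ih, h, Function.iterate_succ_apply]
  rw [eta, eta, map_sum]
  refine sum_congr rfl fun j _ => ?_
  rw [map_sum]
  refine sum_congr rfl fun i _ => ?_
  rw [map_nsmul, h2]

/-- the digit twist between two modules -/
def Tw (p : ℕ) (lam : J → ℕ) (c c' : ℕ) {A M : Type} [AddCommGroup A] [AddCommGroup M] (π : A →+ A) (π' : M →+ M) (E : A ≃ M) : Prop :=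
  ∃ a m, Dig p lam π a c ∧ Dig p lam π' m c' ∧ ∀ d ∈ Dgs p lam, E (eta lam π a d) = eta lam π' m d

variable {c c' : ℕ} {A M : Type} [AddCommGroup A] [AddCommGroup M] {π : A →+ A} {π' : M →+ M} {E : A ≃ M}

lemma Tw.exists {a : J → A} {m : J → M} (h : Dig p lam π a c) (h' : Dig p lam π' m c') : ∃ E : A ≃ M, Tw p lam c c' π π' E := by
  have h1 : Function.Bijective (fun d : Dgs p lam => eta lam π a d.1) := by
    constructor
    · intro x y hxy; exact Subtype.ext (h.inj _ x.2 _ y.2 hxy)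
    · intro x; obtain ⟨d, hd, e⟩ := h.surj x; exact ⟨⟨d, hd⟩, e⟩
  have h2 : Function.Bijective (fun d : Dgs p lam => eta lam π' m d.1) := by
    constructor
    · intro x y hxy; exact Subtype.ext (h'.inj _ x.2 _ y.2 hxy)
    · intro x; obtain ⟨d, hd, e⟩ := h'.surj x; exact ⟨⟨d, hd⟩, e⟩
  refine ⟨(Equiv.ofBijective _ h1).symm.trans (Equiv.ofBijective _ h2), a, m, h, h', fun d hd => ?_⟩
  have h3 : (Equiv.ofBijective _ h1).symm (eta lam π a d) = ⟨d, hd⟩ := by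
    rw [Equiv.symm_apply_eq]; rfl
  rw [Equiv.trans_apply, h3]; rfl

lemma Tw.symm (h : Tw p lam c c' π π' E) : Tw p lam c' c π' π E.symm := by
  obtain ⟨a, m, ha, hm, hE⟩ := h
  exact ⟨m, a, hm, ha, fun d hd => by rw [Equiv.symm_apply_eq, hE d hd]⟩

lemma Tw.map_op (hp : p.Prime) (h : Tw p lam c c' π π' E) (x : A) : E (π x) = π' (E x) := by
  obtain ⟨a, m, ha, hm, hE⟩ := h
  obtain ⟨d, hd, rfl⟩ := ha.surj x
  rw [← eta_shf ha.ann, hE _ (shf_mem hp hd), hE _ hd, eta_shf hm.ann]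

lemma Tw.map_iter (hp : p.Prime) (h : Tw p lam c c' π π' E) (i : ℕ) (x : A) : E (π^[i] x) = π'^[i] (E x) := by
  induction i generalizing x with
  | zero => rfl
  | succ i ih => rw [Function.iterate_succ_apply, ih, h.map_op hp, Function.iterate_succ_apply]

lemma Tw.map_zero (hp : p.Prime) (h : Tw p lam c c' π π' E) : E 0 = 0 := by
  obtain ⟨a, m, ha, hm, hE⟩ := h
  rw [← eta_zero lam π a, hE _ (Dgs_zero p lam hp), eta_zero]

lemma Dig.nilp {a : J → A} (h : Dig p lam π a c) (x : A) : π^[∑ j, lam j] x = 0 := by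
  obtain ⟨d, hd, rfl⟩ := h.surj x
  rw [← mem_Kr, eta]
  refine sum_mem fun j _ => sum_mem fun i _ => nsmul_mem ?_ _
  rw [mem_Kr, ← Function.iterate_add_apply, ann_le h.ann]
  have := single_le_sum (f := lam) (fun j _ => Nat.zero_le _) (mem_univ j)
  omega

lemma Dig.top_digits (hp : p.Prime) {a : J → A} (h : Dig p lam π a c) {d : J → ℕ → ℕ} (hd : d ∈ Dgs p lam) (h0 : π (eta lam π a d) = 0) 
    (j : J) (i : ℕ) (hi : i + 1 ≠ lam j) : d j i = 0 := by
  rw [← eta_shf h.ann, ← eta_zero lam π a] at h0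
  have h1 := h.inj _ (shf_mem hp hd) _ (Dgs_zero p lam hp) h0
  rcases Nat.lt_or_ge i (lam j) with hl | hl
  · have h2 := congrFun (congrFun h1 j) (i + 1)
    rw [shf, if_neg (by omega)] at h2
    exact h2
  · exact hd.2 j i hl

lemma Dig.top_mod (hp : p.Prime) {a : J → A} (h : Dig p lam π a c) {d : J → ℕ → ℕ} (hd : ∀ j i, i + 1 ≠ lam j → d j i = 0) : 
    eta lam π a d = eta lam π a (fun j i => d j i % p) := by
  rw [eta, eta]
  refine sum_congr rfl fun j _ => sum_congr rfl fun i _ => ?_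
  by_cases hi : i + 1 = lam j
  · conv_lhs => rw [← Nat.mod_add_div (d j i) p]
    rw [add_smul, mul_comm, mul_smul, h.carry, ← Function.iterate_succ_apply' π, show i.succ = lam j from hi, h.ann, smul_zero, smul_zero, add_zero]
  · rw [hd j i hi, Nat.zero_mod]

lemma Tw.map_add_soc (hp : p.Prime) (h : Tw p lam c c' π π' E) (x y : A) (hx : π x = 0) (hy : π y = 0) : E (x + y) = E x + E y := by
  obtain ⟨a, m, ha, hm, hE⟩ := h
  obtain ⟨d, hd, rfl⟩ := ha.surj x
  obtain ⟨e, he, rfl⟩ := ha.surj y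
  have td := ha.top_digits hp hd hx
  have te := ha.top_digits hp he hy
  have ts : ∀ j i, i + 1 ≠ lam j → (d + e) j i = 0 := fun j i hi => by
    show d j i + e j i = 0
    rw [td j i hi, te j i hi]
  rw [hE d hd, hE e he, ← eta_add, ← eta_add, ha.top_mod hp ts, hm.top_mod hp ts, hE]
  refine ⟨fun j i => Nat.mod_lt _ hp.pos, fun j i hi => ?_⟩
  simp only
  rw [ts j i (by omega), Nat.zero_mod]

lemma Tw.exists_quot (hp : p.Prime) (h : Tw p lam c c' π π' E) : ∃ G : A →+ M ⧸ π'.range, ∀ x, G x = QuotientAddGroup.mk' π'.range (E x) := by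
  obtain ⟨a, m, ha, hm, hE⟩ := h
  have h0 : ∀ x, QuotientAddGroup.mk' π'.range (π' x) = 0 := fun x => by
    rw [← AddMonoidHom.mem_ker, QuotientAddGroup.ker_mk']; exact ⟨x, rfl⟩
  obtain ⟨G, hG⟩ := ha.lift hp (ϖ := (0 : (M ⧸ π'.range) →+ M ⧸ π'.range)) (b := fun j => QuotientAddGroup.mk' π'.range (m j)) (by
      intro x
      obtain ⟨x, rfl⟩ := QuotientAddGroup.mk'_surjective _ x
      rw [← map_nsmul, hm.carry, map_nsmul, h0]; simp) (by
      intro j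
      have h1 := hm.ann j
      rcases Nat.eq_zero_or_pos (lam j) with hj | hj
      · rw [hj] at h1 ⊢
        have h1 : m j = 0 := h1
        show QuotientAddGroup.mk' π'.range (m j) = 0
        rw [h1, _root_.map_zero]
      · obtain ⟨l, hl⟩ : ∃ l, lam j = l + 1 := ⟨lam j - 1, by omega⟩
        rw [hl, Function.iterate_succ_apply']; rfl)
  refine ⟨G, fun x => ?_⟩
  obtain ⟨d, hd, rfl⟩ := ha.surj x
  rw [hG, hE d hd, eta_map π' 0 (QuotientAddGroup.mk' π'.range) (fun x => h0 x)]

lemma Tw.add_mod (hp : p.Prime) (h : Tw p lam c c' π π' E) (x y : A) : ∃ s, E (x + y) = E x + E y + π' s := by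
  obtain ⟨G, hG⟩ := h.exists_quot hp
  have h1 := G.map_add x y
  rw [hG, hG, hG, ← map_add, ← sub_eq_zero, ← map_sub, ← AddMonoidHom.mem_ker, QuotientAddGroup.ker_mk'] at h1
  obtain ⟨s, hs⟩ := h1
  exact ⟨s, by rw [hs]; abel⟩

end
end Laz


namespace Laz
open Finset
set_option linter.unusedVariables false

section
variable {J : Type} [Fintype J] {p : ℕ} {lam : J → ℕ}

/-- central operators killing the commutator -/
def Cen {A : Type} [LieRing A] (π : A →+ A) : Prop := (∀ x y : A, ⁅π x, y⁆ = 0) ∧ ∀ x y : A, π ⁅x, y⁆ = 0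

lemma Cen.right {A : Type} [LieRing A] {π : A →+ A} (h : Cen π) (x y : A) : ⁅x, π y⁆ = 0 := by
  rw [← lie_skew, h.1, neg_zero]

/-- bracket compatible bijection -/
def LMap {A M : Type} [LieRing A] [LieRing M] (E : A ≃ M) : Prop := ∀ x y : A, E ⁅x, y⁆ = ⁅E x, E y⁆

lemma LMap.symm {A M : Type} [LieRing A] [LieRing M] {E : A ≃ M} (h : LMap E) : LMap E.symm := fun x y => by
  rw [Equiv.symm_apply_eq, h, Equiv.apply_symm_apply, Equiv.apply_symm_apply]

/-- the transported Lie ring -/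
theorem transport (hp : p.Prime) {c c' : ℕ} {A M : Type} [LieRing A] [iM : AddCommGroup M] {π : A →+ A} {π' : M →+ M} (hc : Cen π) {E : A ≃ M}
    (h : Tw p lam c c' π π' E) : ∃ iL : LieRing M, iL.toAddCommGroup = iM ∧ ∀ x y : A, E ⁅x, y⁆ = iL.toBracket.bracket (E x) (E y) := by
  let br : M → M → M := fun u v => E ⁅E.symm u, E.symm v⁆
  have hsoc : ∀ x y x' y' : A, E (⁅x, y⁆ + ⁅x', y'⁆) = E ⁅x, y⁆ + E ⁅x', y'⁆ := fun x y x' y' => h.map_add_soc hp _ _ (hc.2 _ _) (hc.2 _ _)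
  refine ⟨{ iM with
    bracket := br
    add_lie := ?_
    lie_add := ?_
    lie_self := ?_
    leibniz_lie := ?_ }, rfl, ?_⟩
  · intro u v w
    obtain ⟨s, hs⟩ := h.symm.add_mod hp u v
    show E ⁅E.symm (u + v), E.symm w⁆ = E ⁅E.symm u, E.symm w⁆ + E ⁅E.symm v, E.symm w⁆
    rw [hs, add_lie, hc.1, add_zero, add_lie, hsoc]
  · intro u v w
    obtain ⟨s, hs⟩ := h.symm.add_mod hp v w
    show E ⁅E.symm u, E.symm (v + w)⁆ = E ⁅E.symm u, E.symm v⁆ + E ⁅E.symm u, E.symm w⁆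
    rw [hs, lie_add, hc.right, add_zero, lie_add, hsoc]
  · intro u
    show E ⁅E.symm u, E.symm u⁆ = 0
    rw [lie_self, h.map_zero hp]
  · intro u v w
    show E ⁅E.symm u, E.symm (E ⁅E.symm v, E.symm w⁆)⁆ = E ⁅E.symm (E ⁅E.symm u, E.symm v⁆), E.symm w⁆ + E ⁅E.symm v, E.symm (E ⁅E.symm u, E.symm w⁆)⁆
    simp only [Equiv.symm_apply_apply]
    rw [← hsoc, ← leibniz_lie]
  · intro x y
    show _ = E ⁅E.symm (E x), E.symm (E y)⁆
    simp only [Equiv.symm_apply_apply]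

lemma Cen.transport (hp : p.Prime) {c c' : ℕ} {A M : Type} [LieRing A] [LieRing M] {π : A →+ A} {π' : M →+ M} (hc : Cen π) {E : A ≃ M}
    (h : Tw p lam c c' π π' E) (hE : LMap E) : Cen π' := by
  constructor
  · intro u v
    have h1 := hE (π (E.symm u)) (E.symm v)
    rw [hc.1, h.map_zero hp, h.map_op hp, Equiv.apply_symm_apply, Equiv.apply_symm_apply] at h1
    exact h1.symm
  · intro u v
    have h1 := h.map_op hp ⁅E.symm u, E.symm v⁆
    rw [hc.2, h.map_zero hp, hE, Equiv.apply_symm_apply, Equiv.apply_symm_apply] at h1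
    exact h1.symm

lemma Nil.transport (hp : p.Prime) {c c' : ℕ} {A M : Type} [LieRing A] [LieRing M] {π : A →+ A} {π' : M →+ M} (hc : Nil A) {E : A ≃ M}
    (h : Tw p lam c c' π π' E) (hE : LMap E) : Nil M := by
  obtain ⟨k, hk⟩ := hc
  have key : ∀ k (z : A), Znil A k z → Znil M k (E z) := by
    intro k
    induction k with
    | zero =>
      intro z hz
      have hz : z = 0 := hz
      show E z = 0
      rw [hz, h.map_zero hp]
    | succ k ih =>
      intro z hz x
      have := ih _ (hz (E.symm x))
      rwa [hE, Equiv.apply_symm_apply] at this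
  refine ⟨k, fun z => ?_⟩
  have := key k _ (hk (E.symm z))
  rwa [Equiv.apply_symm_apply] at this

lemma add_on_sum {A B : Type} [AddCommGroup A] [AddCommGroup B] (S : AddSubgroup A) (g : A → B) (g0 : g 0 = 0)
    (hg : ∀ x ∈ S, ∀ y ∈ S, g (x + y) = g x + g y) {X : Type} (s : Finset X) (f : X → A) (hf : ∀ i ∈ s, f i ∈ S) :
    g (∑ i ∈ s, f i) = ∑ i ∈ s, g (f i) := by
  classical
  induction s using Finset.induction_on with
  | empty => simpa using g0
  | insert i s hi ih =>
    rw [sum_insert hi, sum_insert hi, hg _ (hf i (mem_insert_self _ _)) _ (sum_mem fun j hj => hf j (mem_insert_of_mem hj)),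
      ih fun j hj => hf j (mem_insert_of_mem hj)]

lemma add_on_nsmul {A B : Type} [AddCommGroup A] [AddCommGroup B] (S : AddSubgroup A) (g : A → B) (g0 : g 0 = 0)
    (hg : ∀ x ∈ S, ∀ y ∈ S, g (x + y) = g x + g y) (x : A) (hx : x ∈ S) (n : ℕ) : g (n • x) = n • g x := by
  induction n with
  | zero => simpa using g0
  | succ n ih => rw [add_smul, one_smul, hg _ (nsmul_mem hx n) _ hx, ih, add_smul, one_smul]

theorem iso_transport (hp : p.Prime) {c c' : ℕ} {A A₂ M M₂ : Type} [LieRing A] [LieRing A₂] [LieRing M] [LieRing M₂] [Finite M] [Finite M₂]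
    {π : A →+ A} {π₂ : A₂ →+ A₂} {π' : M →+ M} {π₂' : M₂ →+ M₂} 
    (hcen : Cen π') (hcen₂ : Cen π₂') {E : A ≃ M} {E₂ : A₂ ≃ M₂} (hE : LMap E) (hE₂ : LMap E₂)
    (h : Tw p lam c c' π π' E) (h₂ : Tw p lam c c' π₂ π₂' E₂)
    (f : A ≃+ A₂) (hf : ∀ x y : A, f ⁅x, y⁆ = ⁅f x, f y⁆) (hfπ : ∀ x, f (π x) = π₂ (f x)) :
    ∃ F : M ≃+ M₂, (∀ x y : M, F ⁅x, y⁆ = ⁅F x, F y⁆) ∧ ∀ x, F (π' x) = π₂' (F x) := by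
  obtain ⟨G, hG⟩ := h₂.exists_quot hp
  have h' := h
  obtain ⟨a, m, ha, hm, hE'⟩ := h'
  have carry₂ : ∀ x, p • x = c' • π₂' x := by obtain ⟨_, _, _, h, _⟩ := h₂; exact h.carry
  have hg : ∀ i x, E₂ (f (π^[i] x)) = π₂'^[i] (E₂ (f x)) := by
    intro i
    induction i with
    | zero => intro x; rfl
    | succ i ih => intro x; rw [Function.iterate_succ_apply, ih, hfπ, h₂.map_op hp, Function.iterate_succ_apply]
  have ann₂ : ∀ j, π₂'^[lam j] (E₂ (f (a j))) = 0 := by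
    intro j
    rw [← hg, ha.ann, map_zero, h₂.map_zero hp]
  obtain ⟨F, hF⟩ := hm.lift hp (ϖ := π₂') (b := fun j => E₂ (f (a j))) carry₂ ann₂
  have hFπ : ∀ x, F (π' x) = π₂' (F x) := by
    intro x
    obtain ⟨d, hd, rfl⟩ := hm.surj x
    rw [← eta_shf hm.ann, hF, hF, eta_shf ann₂]
  have hFi : ∀ i x, F (π'^[i] x) = π₂'^[i] (F x) := by
    intro i
    induction i with
    | zero => intro x; rfl
    | succ i ih => intro x; rw [Function.iterate_succ_apply, ih, hFπ, Function.iterate_succ_apply]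
  have h0 : ∀ x, QuotientAddGroup.mk' π₂'.range (π₂' x) = 0 := fun x => by
    rw [← AddMonoidHom.mem_ker, QuotientAddGroup.ker_mk']; exact ⟨x, rfl⟩
  -- congruence
  have claimA : ∀ u, ∃ s, E₂ (f (E.symm u)) = F u + π₂' s := by
    intro u
    obtain ⟨d, hd, rfl⟩ := hm.surj u
    have e1 : E.symm (eta lam π' m d) = eta lam π a d := by rw [Equiv.symm_apply_eq, hE' d hd]
    rw [e1, hF]
    have e2 := eta_map (lam := lam) π (0 : (M₂ ⧸ π₂'.range) →+ _) (G.comp f.toAddMonoidHom) (fun x => by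
      show G (f (π x)) = 0
      rw [hfπ, hG, h₂.map_op hp, h0]) a d
    have e3 := eta_map (lam := lam) π₂' (0 : (M₂ ⧸ π₂'.range) →+ _) (QuotientAddGroup.mk' π₂'.range) (fun x => h0 x) (fun j => E₂ (f (a j))) d
    have e4 : QuotientAddGroup.mk' π₂'.range (E₂ (f (eta lam π a d))) = QuotientAddGroup.mk' π₂'.range (eta lam π₂' (fun j => E₂ (f (a j))) d) := by
      rw [e3, ← hG]
      refine e2.trans ?_
      congr 1
      funext j
      exact hG _
    rw [← sub_eq_zero, ← map_sub, ← AddMonoidHom.mem_ker, QuotientAddGroup.ker_mk'] at e4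
    obtain ⟨s, hs⟩ := e4
    exact ⟨s, by rw [hs]; abel⟩
  -- socle
  have claimB : ∀ u, π' u = 0 → E₂ (f (E.symm u)) = F u := by
    intro u hu
    obtain ⟨d, hd, rfl⟩ := hm.surj u
    have e1 : E.symm (eta lam π' m d) = eta lam π a d := by rw [Equiv.symm_apply_eq, hE' d hd]
    have td := hm.top_digits hp hd hu
    rw [e1, hF]
    have g0 : E₂ (f 0) = 0 := by rw [map_zero, h₂.map_zero hp]
    have hadd : ∀ x ∈ Kr π 1, ∀ y ∈ Kr π 1, E₂ (f (x + y)) = E₂ (f x) + E₂ (f y) := by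
      intro x hx y hy
      have hx : π x = 0 := hx
      have hy : π y = 0 := hy
      rw [map_add, h₂.map_add_soc hp _ _ (by rw [← hfπ, hx, map_zero]) (by rw [← hfπ, hy, map_zero])]
    have hmem : ∀ j i, d j i • π^[i] (a j) ∈ Kr π 1 := by
      intro j i
      by_cases hi : i + 1 = lam j
      · refine nsmul_mem ?_ _
        rw [mem_Kr, ← Function.iterate_add_apply, add_comm, hi, ha.ann]
      · rw [td j i hi, zero_smul]; exact zero_mem _
    rw [eta, eta, add_on_sum (Kr π 1) (fun x => E₂ (f x)) g0 hadd _ _ (fun j _ => sum_mem fun i _ => hmem j i)]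
    refine sum_congr rfl fun j _ => ?_
    rw [add_on_sum (Kr π 1) (fun x => E₂ (f x)) g0 hadd _ _ (fun i _ => hmem j i)]
    refine sum_congr rfl fun i _ => ?_
    by_cases hi : i + 1 = lam j
    · have := add_on_nsmul (Kr π 1) (fun x => E₂ (f x)) g0 hadd (π^[i] (a j)) (by
        rw [mem_Kr, ← Function.iterate_add_apply, add_comm, hi, ha.ann]) (d j i)
      refine this.trans ?_
      rw [hg]
    · rw [td j i hi, zero_smul, zero_smul]; exact g0
  have hinj : Function.Injective F := by
    rw [injective_iff_map_eq_zero]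
    intro u hu
    have key : ∀ k, π'^[k] u = 0 → u = 0 := by
      intro k
      induction k with
      | zero => exact fun h => h
      | succ k ih =>
        intro hk
        rw [Function.iterate_succ_apply'] at hk
        have h1 := claimB _ hk
        rw [hFi, hu, iterate_map_zero, ← h₂.map_zero hp, E₂.apply_eq_iff_eq, map_eq_zero_iff f f.injective, Equiv.symm_apply_eq, h.map_zero hp] at h1
        exact ih h1
    exact key _ (hm.nilp u)
  have hbij : Function.Bijective F := ⟨hinj, (Finite.injective_iff_surjective_of_equiv ((E.symm.trans f.toEquiv).trans E₂)).1 hinj⟩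
  refine ⟨AddEquiv.ofBijective F hbij, fun u v => ?_, hFπ⟩
  show F ⁅u, v⁆ = ⁅F u, F v⁆
  obtain ⟨s, hs⟩ := claimA u
  obtain ⟨r, hr⟩ := claimA v
  rw [← claimB _ (hcen.2 u v), hE.symm, hf, hE₂, hs, hr, add_lie, hcen₂.1, add_zero, lie_add, hcen₂.right, add_zero]

end
end Laz


namespace Laz
open Finset
set_option linter.unusedVariables false

section
variable {J : Type} [Fintype J] {p : ℕ} (lam : J → ℕ)

theorem model_one (hp : p.Prime) : ∃ (M : Type) (_ : AddCommGroup M) (π : M →+ M) (m : J → M), Dig p lam π m 1 := by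
  classical
  have : ∀ j, NeZero (p ^ lam j) := fun j => ⟨pow_ne_zero _ hp.ne_zero⟩
  let M := ∀ j, ZMod (p ^ lam j)
  let π : M →+ M := p • AddMonoidHom.id M
  have hπ : ∀ x, π x = p • x := fun x => rfl
  have hit : ∀ k x, π^[k] x = p ^ k • x := by
    intro k
    induction k with
    | zero => intro x; rw [pow_zero, one_smul]; rfl
    | succ k ih => intro x; rw [Function.iterate_succ_apply, ih, hπ, smul_smul, pow_succ]
  refine ⟨M, inferInstance, π, fun j => Pi.single j 1, Dig.of_span hp (fun x => by rw [hπ, one_smul]) ?_ ?_ ?_⟩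
  · intro j
    rw [hit, ← Pi.single_smul, nsmul_one, ZMod.natCast_self, Pi.single_zero]
  · rw [Nat.card_pi]
    simp [Finset.prod_pow_eq_pow_sum]
  · intro x
    refine ⟨fun j i => if i = 0 then (x j).val else 0, ?_⟩
    rw [eta]
    conv_rhs => rw [← Finset.univ_sum_single x]
    refine sum_congr rfl fun j _ => ?_
    rcases Nat.eq_zero_or_pos (lam j) with h | h
    · have : Subsingleton (ZMod (p ^ lam j)) := by rw [h, pow_zero]; infer_instance
      rw [Subsingleton.elim (x j) 0, Pi.single_zero]
      have h2 : range (lam j) = ∅ := by rw [h]; rfl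
      rw [h2, sum_empty]
    · rw [sum_eq_single 0]
      · rw [if_pos rfl, Function.iterate_zero_apply, ← Pi.single_smul, nsmul_one, ZMod.natCast_zmod_val]
      · intro i _ hi; rw [if_neg hi, zero_smul]
      · intro h2; exact absurd (mem_range.2 h) h2

theorem model_zero (hp : p.Prime) : ∃ (M : Type) (_ : AddCommGroup M) (π : M →+ M) (m : J → M), Dig p lam π m 0 := by
  classical
  have : NeZero p := ⟨hp.ne_zero⟩
  let M := ∀ j, Fin (lam j) → ZMod p
  let π : M →+ M := 
    { toFun := fun x j i => if h : i.1 = 0 then 0 else x j ⟨i.1 - 1, by omega⟩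
      map_zero' := by funext j i; show (if h : i.1 = 0 then (0 : ZMod p) else 0) = 0; split_ifs <;> rfl
      map_add' := fun x y => by 
        funext j i
        show (if h : i.1 = 0 then (0 : ZMod p) else x j ⟨i.1 - 1, by omega⟩ + y j ⟨i.1 - 1, by omega⟩) = 
          (if h : i.1 = 0 then (0 : ZMod p) else x j ⟨i.1 - 1, by omega⟩) + (if h : i.1 = 0 then (0 : ZMod p) else y j ⟨i.1 - 1, by omega⟩)
        split_ifs <;> simp }
  let e : J → ℕ → M := fun j k j' i => if j' = j ∧ i.1 = k then 1 else 0
  have hit : ∀ k j, π^[k] (e j 0) = e j k := by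
    intro k j
    induction k with
    | zero => rfl
    | succ k ih =>
      rw [Function.iterate_succ_apply', ih]
      funext j' i
      show (if h : i.1 = 0 then 0 else (if j' = j ∧ i.1 - 1 = k then (1 : ZMod p) else 0)) = if j' = j ∧ i.1 = k + 1 then 1 else 0
      by_cases h : i.1 = 0
      · rw [dif_pos h, if_neg (by omega)]
      · rw [dif_neg h]
        congr 1
        apply propext
        constructor <;> rintro ⟨h1, h2⟩ <;> refine ⟨h1, ?_⟩ <;> omega
  refine ⟨M, inferInstance, π, fun j => e j 0, Dig.of_span hp (fun x => ?_) ?_ ?_ ?_⟩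
  · rw [zero_smul]; funext j i; show p • x j i = 0; simp
  · intro j
    rw [hit]
    funext j' i
    show (if j' = j ∧ i.1 = lam j then (1 : ZMod p) else 0) = 0
    rw [if_neg]
    rintro ⟨rfl, h⟩
    omega
  · rw [Nat.card_pi]
    simp [Finset.prod_pow_eq_pow_sum]
  · intro x
    refine ⟨fun j i => if h : i < lam j then (x j ⟨i, h⟩).val else 0, ?_⟩
    rw [eta]
    funext j i
    rw [Finset.sum_apply, Finset.sum_apply, sum_eq_single j]
    · rw [Finset.sum_apply, Finset.sum_apply, sum_eq_single i.1]
      · rw [hit]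
        show (if h : i.1 < lam j then (x j ⟨i.1, h⟩).val else 0) • (if j = j ∧ i.1 = i.1 then (1 : ZMod p) else 0) = _
        rw [dif_pos i.2, if_pos ⟨rfl, rfl⟩, nsmul_one, ZMod.natCast_zmod_val]
      · intro k _ hk
        rw [hit]
        show (if h : k < lam j then (x j ⟨k, h⟩).val else 0) • (if j = j ∧ i.1 = k then (1 : ZMod p) else 0) = _
        rw [if_neg (fun h => hk h.2.symm), smul_zero]
      · intro h; exact absurd (mem_range.2 i.2) h
    · intro j' _ hj
      rw [Finset.sum_apply, Finset.sum_apply]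
      refine sum_eq_zero fun k _ => ?_
      rw [hit]
      show (if h : k < lam j' then (x j' ⟨k, h⟩).val else 0) • (if j = j' ∧ i.1 = k then (1 : ZMod p) else 0) = _
      rw [if_neg (fun h => hj h.1.symm), smul_zero]
    · intro h; exact absurd (mem_univ _) h

variable {lam}
theorem twist (hp : p.Prime) {c c' : ℕ} (hmod : ∃ (M : Type) (_ : AddCommGroup M) (π : M →+ M) (m : J → M), Dig p lam π m c') {A : Type} [LieRing A] {π : A →+ A} (hc : Cen π)
    {a : J → A} (ha : Dig p lam π a c) : ∃ (M : Type) (_ : LieRing M) (π' : M →+ M) (E : A ≃ M), Tw p lam c c' π π' E ∧ LMap E ∧ Cen π' := by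
  obtain ⟨M, iM, π', m, hm⟩ := hmod
  obtain ⟨E, hE⟩ := Tw.exists ha hm
  obtain ⟨iL, h1, h2⟩ := transport hp hc hE
  subst h1
  exact ⟨M, iL, π', E, hE, h2, hc.transport hp hE h2⟩

end
end Laz


namespace Laz
open Finset
set_option linter.unusedVariables false

section
variable {p n t : ℕ} [hp : Fact p.Prime] {lam : Fin t → ℕ}

/-- multiplication by `p` -/
def mulP (p : ℕ) (L : Type) [AddCommGroup L] : L →+ L := p • AddMonoidHom.id L

lemma mulP_iter {L : Type} [AddCommGroup L] (k : ℕ) (x : L) : (mulP p L)^[k] x = p ^ k • x := by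
  induction k generalizing x with
  | zero => rw [pow_zero, one_smul]; rfl
  | succ k ih => rw [Function.iterate_succ_apply, ih, show mulP p L x = p • x from rfl, smul_smul, pow_succ]

/-- the additive map underlying an endomorphism -/
def opA {K : Type} [AddCommGroup K] [Module (ZMod p) K] (σ : Module.End (ZMod p) K) : K →+ K := LinearMap.toAddMonoidHom σ

lemma opA_iter {K : Type} [AddCommGroup K] [Module (ZMod p) K] (σ : Module.End (ZMod p) K) (k : ℕ) (x : K) : 
    (opA σ)^[k] x = (σ ^ k) x := by
  rw [Module.End.pow_apply]; rfl

/-- correspondence between groups and pairs -/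
def Rl (p n : ℕ) [Fact p.Prime] (lam : Fin t → ℕ) (G : Type) [Group G] (K : Type) [LieRing K] [LieAlgebra (ZMod p) K] (σ : Module.End (ZMod p) K) : Prop :=
  ∃ (L : Type) (_ : LieRing L) (_ : IsLaz p n L), Nonempty (G ≃* LG p n L) ∧ ∃ E : L ≃ K, Tw p lam 1 0 (mulP p L) (opA σ) E ∧ LMap E ∧ Cen (mulP p L)

lemma cen_iff {L : Type} [LieRing L] : Cen (mulP p L) ↔ ∀ x y : L, p • ⁅x, y⁆ = 0 := by
  constructor
  · exact fun h => h.2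
  · refine fun h => ⟨fun x y => ?_, h⟩
    show ⁅p • x, y⁆ = 0
    rw [nsmul_lie, h]

lemma card_grp {L : Type} [LieRing L] [IsLaz p n L] {G : Type} [Group G] (e : G ≃* LG p n L) (i : ℕ) :
    Nat.card {x : G // x ^ p ^ i = 1} = Nat.card (Kr (mulP p L) i) := by
  refine Nat.card_congr ((e.toEquiv.trans LG.equiv.symm).subtypeEquiv fun x => ?_)
  have h1 : x ^ p ^ i = 1 ↔ (e x) ^ p ^ i = 1 := by rw [← map_pow, map_eq_one_iff e e.injective]
  rw [h1, mem_Kr, mulP_iter]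
  constructor
  · intro h
    have := congrArg LG.val h
    rwa [LG.val_pow, LG.val_one] at this
  · intro h
    refine LG.ext ?_
    rw [LG.val_pow, LG.val_one]
    exact h

lemma card_tw {c c' : ℕ} {A M : Type} [AddCommGroup A] [AddCommGroup M] {π : A →+ A} {π' : M →+ M} {E : A ≃ M} 
    (h : Tw p lam c c' π π' E) (i : ℕ) : Nat.card (Kr π i) = Nat.card (Kr π' i) := by
  refine Nat.card_congr (E.subtypeEquiv fun x => ?_)
  rw [mem_Kr, mem_Kr, ← h.map_iter hp.out]
  conv_rhs => rw [← h.map_zero hp.out, E.apply_eq_iff_eq]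

lemma card_ker {K : Type} [AddCommGroup K] [Module (ZMod p) K] [Module.Finite (ZMod p) K] (σ : Module.End (ZMod p) K) (i : ℕ) :
    Nat.card (Kr (opA σ) i) = p ^ Module.finrank (ZMod p) (LinearMap.ker (σ ^ i)) := by
  have h1 := Module.natCard_eq_pow_finrank (K := ZMod p) (V := LinearMap.ker (σ ^ i))
  rw [Nat.card_zmod] at h1
  rw [← h1]
  refine Nat.card_congr ((Equiv.refl K).subtypeEquiv fun x => ?_)
  rw [mem_Kr, opA_iter]; rfl

open scoped commutatorElement in
/-- typed group -/
def TG (p n : ℕ) (lam : Fin t → ℕ) (G : Type) [Group G] : Prop :=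
  Nat.card G = p ^ n ∧ (∀ i : ℕ, Nat.card {x : G // x ^ p ^ i = 1} = p ^ (∑ j, min (lam j) i)) ∧ ∀ x y : G, ⁅x, y⁆ ^ p = 1

open scoped commutatorElement in
lemma comm_congr {G H : Type} [Group G] [Group H] (e : G ≃* H) (h : ∀ x y : G, ⁅x, y⁆ ^ p = 1) : 
    ∀ x y : H, ⁅x, y⁆ ^ p = 1 := by
  intro x y
  have := congrArg e (h (e.symm x) (e.symm y))
  rwa [map_pow, map_commutatorElement, map_one, MulEquiv.apply_symm_apply, MulEquiv.apply_symm_apply] at this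

lemma Rl.congr {G : Type} [Group G] {K K' : Type} [LieRing K] [LieAlgebra (ZMod p) K] [LieRing K'] [LieAlgebra (ZMod p) K']
    {σ : Module.End (ZMod p) K} {τ : Module.End (ZMod p) K'} (h : Rl p n lam G K σ) (f : K ≃ₗ⁅ZMod p⁆ K') (hf : ∀ x, f (σ x) = τ (f x)) : 
    Rl p n lam G K' τ := by
  obtain ⟨L, iL, iz, e, E, ⟨a, m, ha, hm, hE⟩, hE', hc⟩ := h
  let f' : K →+ K' := f.toLinearEquiv.toAddEquiv.toAddMonoidHom
  have hfb : Function.Bijective f' := f.toLinearEquiv.bijective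
  have hf0 : ∀ d, f' (eta lam (opA σ) m d) = eta lam (opA τ) (fun j => f' (m j)) d := eta_map _ _ f' hf m
  refine ⟨L, iL, iz, e, E.trans f.toLinearEquiv.toEquiv, ⟨a, fun j => f' (m j), ha, ⟨?_, ?_, ?_, ?_⟩, ?_⟩, ?_, hc⟩
  · intro x
    obtain ⟨x, rfl⟩ := hfb.2 x
    rw [← map_nsmul, hm.carry, zero_smul, zero_smul, map_zero]
  · have h2 : ∀ i x, f' ((opA σ)^[i] x) = (opA τ)^[i] (f' x) := by
      intro i
      induction i with
      | zero => intro x; rfl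
      | succ i ih => intro x; rw [Function.iterate_succ_apply, ih, Function.iterate_succ_apply]; congr 1; exact hf x
    intro j
    rw [← h2, hm.ann, map_zero]
  · intro d hd e he h
    rw [← hf0, ← hf0] at h
    exact hm.inj d hd e he (hfb.1 h)
  · intro x
    obtain ⟨x, rfl⟩ := hfb.2 x
    obtain ⟨d, hd, rfl⟩ := hm.surj x
    exact ⟨d, hd, (hf0 d).symm⟩
  · intro d hd
    rw [← hf0, ← hE d hd]; rfl
  · intro x y
    show f (E ⁅x, y⁆) = ⁅f (E x), f (E y)⁆
    rw [hE', LieEquiv.map_lie]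

lemma Rl.cset {G : Type} [Group G] (hG : TG p n lam G) {K : Type} [LieRing K] [LieAlgebra (ZMod p) K] [Module.Finite (ZMod p) K]
    {σ : Module.End (ZMod p) K} (h : Rl p n lam G K σ) : σ ∈ CSet p n t lam K := by
  obtain ⟨L, iL, iz, ⟨e⟩, E, htw, hE, hc⟩ := h
  have hc' := hc.transport hp.out htw hE
  refine ⟨?_, hc'.1, ?_, ?_⟩
  · ext x
    rw [← opA_iter, ← E.apply_symm_apply x, ← htw.map_iter hp.out, mulP_iter]
    have : Nat.card L = p ^ n := by
      rw [← hG.1]; exact (Nat.card_congr (e.toEquiv.trans LG.equiv.symm)).symm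
    rw [← this, card_nsmul_eq_zero', htw.map_zero hp.out]; rfl
  · intro x y
    rw [show ⁅σ x, y⁆ = 0 from hc'.1 x y]
    exact hc'.2 x y
  · intro i
    have h1 := hG.2.1 i
    rw [card_grp e, card_tw htw, card_ker] at h1
    exact Nat.pow_right_injective hp.out.two_le h1

lemma Rl.typed {G : Type} [Group G] {K : Type} [LieRing K] [LieAlgebra (ZMod p) K] [Module.Finite (ZMod p) K] (hK : Module.finrank (ZMod p) K = n)
    {σ : Module.End (ZMod p) K} (hσ : σ ∈ CSet p n t lam K) (h : Rl p n lam G K σ) : TG p n lam G := by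
  obtain ⟨L, iL, iz, ⟨e⟩, E, htw, hE, hc⟩ := h
  refine ⟨?_, ?_, ?_⟩
  · have h1 := Module.natCard_eq_pow_finrank (K := ZMod p) (V := K)
    rw [Nat.card_zmod, hK] at h1
    rw [← h1]
    exact Nat.card_congr ((e.toEquiv.trans LG.equiv.symm).trans E)
  · intro i
    rw [card_grp e, card_tw htw, card_ker, hσ.2.2.2 i]
  · exact comm_congr e.symm (commutator_iff.2 (cen_iff.1 hc))

end
end Laz


namespace Laz
open Finset
set_option linter.unusedVariables false

section
variable {p n t : ℕ} [hp : Fact p.Prime] {lam : Fin t → ℕ}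

lemma linear_of_add {K K' : Type} [LieRing K] [LieAlgebra (ZMod p) K] [LieRing K'] [LieAlgebra (ZMod p) K'] (f : K ≃+ K')
    (hf : ∀ x y : K, f ⁅x, y⁆ = ⁅f x, f y⁆) : ∃ F : K ≃ₗ⁅ZMod p⁆ K', ∀ x, F x = f x := 
  ⟨{ f with
      map_smul' := fun c x => ZMod.map_smul f c x
      map_lie' := fun {x y} => hf x y }, fun x => rfl⟩

theorem exists_pair (hpn : n ≤ p) {G : Type} [Group G] (hG : TG p n lam G) : 
    ∃ (K : Type) (_ : LieRing K) (_ : LieAlgebra (ZMod p) K) (σ : Module.End (ZMod p) K), 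
      Module.Finite (ZMod p) K ∧ Module.finrank (ZMod p) K = n ∧ LieRing.IsNilpotent K ∧ Rl p n lam G K σ := by
  obtain ⟨L, iL, iz, ⟨e⟩⟩ := exists_lie p n n hpn le_rfl G hG.1
  have hcard : Nat.card L = p ^ n := by
    rw [← hG.1]; exact (Nat.card_congr (e.toEquiv.trans LG.equiv.symm)).symm
  have hfin : Finite L := Nat.finite_of_card_ne_zero (by rw [hcard]; exact pow_ne_zero _ hp.out.ne_zero)
  have hcen : Cen (mulP p L) := cen_iff.2 (commutator_iff.1 (comm_congr e hG.2.2))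
  obtain ⟨a, ha⟩ := exists_dig hp.out 1 n L (mulP p L) lam (fun x => by rw [one_smul]; rfl) (fun x => by
    rw [mulP_iter, ← hcard, card_nsmul_eq_zero']) (fun i => by rw [← card_grp e, hG.2.1 i])
  obtain ⟨K, iK, π', E, htw, hE, hc'⟩ := twist hp.out (model_zero lam hp.out) hcen ha
  have hz : ∀ x : K, p • x = 0 := by
    obtain ⟨_, _, _, hm, _⟩ := htw
    intro x; rw [hm.carry, zero_smul]
  obtain ⟨iAlg⟩ : Nonempty (LieAlgebra (ZMod p) K) := by
    let iMod : Module (ZMod p) K := AddCommGroup.zmodModule hz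
    exact ⟨{ iMod with
      lie_smul := fun c x y => ZMod.map_smul (AddMonoidHom.mk' (fun y : K => ⁅x, y⁆) (fun a b => lie_add x a b)) c y }⟩
  have hfK : Finite K := Finite.of_equiv L E
  have hmf : Module.Finite (ZMod p) K := Module.Finite.of_finite
  refine ⟨K, iK, iAlg, π'.toZModLinearMap p, hmf, ?_, ?_, L, iL, iz, ⟨e⟩, E, htw, hE, hcen⟩
  · have h1 := Module.natCard_eq_pow_finrank (K := ZMod p) (V := K)
    rw [Nat.card_zmod, ← Nat.card_congr E, hcard] at h1
    exact (Nat.pow_right_injective hp.out.two_le h1).symm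
  · exact nil_iff.2 (Nil.transport hp.out (IsLaz.nil (p := p) (N := n)) htw hE)

theorem exists_group (hpn : n ≤ p) (K : Type) [LieRing K] [LieAlgebra (ZMod p) K] [Module.Finite (ZMod p) K] (hK : Module.finrank (ZMod p) K = n)
    (hnil : LieRing.IsNilpotent K) {σ : Module.End (ZMod p) K} (hσ : σ ∈ CSet p n t lam K) : 
    ∃ (G : Type) (_ : Group G), Rl p n lam G K σ := by
  have hfin : Finite K := Module.finite_of_finite (ZMod p)
  have hcard := Module.natCard_eq_pow_finrank (K := ZMod p) (V := K)
  rw [Nat.card_zmod, hK] at hcard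
  have hz : ∀ x : K, p • x = 0 := fun x => by
    rw [← Nat.cast_smul_eq_nsmul (ZMod p), CharP.cast_eq_zero, zero_smul]
  have hcen : Cen (opA σ) := ⟨hσ.2.1, fun x y => (hσ.2.2.1 x y).trans (hσ.2.1 x y)⟩
  obtain ⟨a, ha⟩ := exists_dig hp.out 0 n K (opA σ) lam (fun x => by rw [zero_smul, hz]) (fun x => by
    rw [opA_iter, hσ.1]; rfl) (fun i => by rw [card_ker, hσ.2.2.2 i])
  obtain ⟨L, iL, π', E, htw, hE, hc'⟩ := twist hp.out (model_one lam hp.out) hcen ha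
  have hπ : π' = mulP p L := by
    obtain ⟨_, _, _, hm, _⟩ := htw
    ext x
    have := hm.carry x
    rw [one_smul] at this
    exact this.symm
  subst hπ
  have iz : IsLaz p n L := isLaz_of_card hp.out (Nil.transport hp.out (nil_iff.1 hnil) htw hE) 
    (by rw [← Nat.card_congr E, hcard]) hpn le_rfl
  exact ⟨LG p n L, inferInstance, L, iL, iz, ⟨MulEquiv.refl _⟩, E.symm, htw.symm, hE.symm, hc'⟩

theorem rl_iso {G G' : Type} [Group G] [Group G'] {K K' : Type} [LieRing K] [LieAlgebra (ZMod p) K] [Module.Finite (ZMod p) K] 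
    [LieRing K'] [LieAlgebra (ZMod p) K'] [Module.Finite (ZMod p) K'] {σ : Module.End (ZMod p) K} {τ : Module.End (ZMod p) K'} 
    (h : Rl p n lam G K σ) (h' : Rl p n lam G' K' τ) : 
    Nonempty (G ≃* G') ↔ ∃ F : K ≃ₗ⁅ZMod p⁆ K', ∀ x, F (σ x) = τ (F x) := by
  obtain ⟨L, iL, iz, ⟨e⟩, E, htw, hE, hc⟩ := h
  obtain ⟨L', iL', iz', ⟨e'⟩, E', htw', hE', hc'⟩ := h'
  have hfin : Finite K := Module.finite_of_finite (ZMod p)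
  have hfin' : Finite K' := Module.finite_of_finite (ZMod p)
  have hfL : Finite L := Finite.of_equiv K E.symm
  have hfL' : Finite L' := Finite.of_equiv K' E'.symm
  have h1 : Nonempty (G ≃* G') ↔ Nonempty (LG p n L ≃* LG p n L') := 
    ⟨fun ⟨f⟩ => ⟨(e.symm.trans f).trans e'⟩, fun ⟨f⟩ => ⟨(e.trans f).trans e'.symm⟩⟩
  rw [h1, iso_iff]
  constructor
  · rintro ⟨f, hf⟩
    obtain ⟨F, hF, hF'⟩ := iso_transport hp.out (hc.transport hp.out htw hE) (hc'.transport hp.out htw' hE') hE hE' htw htw' f hf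
      (fun x => map_nsmul f p x)
    obtain ⟨F₁, h2⟩ := linear_of_add (p := p) F hF
    refine ⟨F₁, fun x => ?_⟩
    rw [h2, h2]; exact hF' x
  · rintro ⟨F, hF⟩
    obtain ⟨f, hf, -⟩ := iso_transport hp.out hc hc' hE.symm hE'.symm htw.symm htw'.symm F.toLinearEquiv.toAddEquiv 
      (fun x y => LieEquiv.map_lie F x y) hF
    exact ⟨f, hf⟩

lemma card_eq_sum {X : Type} {Y : Type 1} [Fintype X] (f : X → Y) (hf : Function.Surjective f) : 
    (Nat.card Y : ℚ) = ∑ x, (1 : ℚ) / Nat.card {y // f y = f x} := by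
  classical
  have : Finite Y := Finite.of_surjective f hf
  let : Fintype Y := Fintype.ofFinite Y
  rw [← Finset.sum_fiberwise univ f]
  rw [Nat.card_eq_fintype_card, ← Finset.card_univ, Finset.card_eq_sum_ones, Nat.cast_sum]
  refine sum_congr rfl fun y _ => ?_
  obtain ⟨x₀, rfl⟩ := hf y
  have h1 : ∀ x ∈ univ.filter (fun x => f x = f x₀), (1 : ℚ) / Nat.card {y // f y = f x} = 1 / (univ.filter (fun x => f x = f x₀)).card := by
    intro x hx
    rw [(mem_filter.1 hx).2, Nat.card_eq_fintype_card, Fintype.card_subtype]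
  rw [sum_congr rfl h1, sum_const, nsmul_eq_mul, mul_one_div_cancel]
  · simp
  · rw [Nat.cast_ne_zero]
    exact (card_pos.2 ⟨x₀, by simp⟩).ne'

end
end Laz

open Laz in
theorem count_formula_typed (p n t : ℕ) (hp : p.Prime) (hn : 1 ≤ n) (hpn : n ≤ p)
    (lam : Fin t → ℕ) (hmono : Antitone lam) (hpos : ∀ j, 1 ≤ lam j)
    (hsum : ∑ j, lam j = n)
    (ι : Type) [Fintype ι] (K : ι → Type)
    [∀ i, LieRing (K i)] [∀ i, LieAlgebra (ZMod p) (K i)]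
    [∀ i, Module.Finite (ZMod p) (K i)]
    (hdim : ∀ i, Module.finrank (ZMod p) (K i) = n)
    (hnilp : ∀ i, LieRing.IsNilpotent (K i))
    (htransv : ∀ i j : ι, Nonempty (K i ≃ₗ⁅ZMod p⁆ K j) → i = j)
    (hcomplete : ∀ (M : Type) (_ : LieRing M) (_ : LieAlgebra (ZMod p) M),
      Module.Finite (ZMod p) M → Module.finrank (ZMod p) M = n →
      LieRing.IsNilpotent M → ∃ i : ι, Nonempty (M ≃ₗ⁅ZMod p⁆ K i)) :
    (Nat.card (Quot (typedGroupIsoRel p n t lam)) : ℚ) =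
      ∑ i : ι, ∑ᶠ σ ∈ CSet p n t lam (K i), (1 : ℚ) / (Nat.card (lieAutOrbit p (K i) σ)) := by
  classical
  have : Fact p.Prime := ⟨hp⟩
  let X := Σ i, CSet p n t lam (K i)
  have hfK : ∀ i, Finite (K i) := fun i => Module.finite_of_finite (ZMod p)
  have hfE : ∀ i, Finite (Module.End (ZMod p) (K i)) := fun i => Finite.of_injective (fun f => (f : K i → K i)) DFunLike.coe_injective
  let : ∀ i, Fintype (CSet p n t lam (K i)) := fun i => Fintype.ofFinite _
  have hex : ∀ x : X, ∃ q : TypedGroup p n t lam, letI := q.1.2; Rl p n lam q.1.1 (K x.1) x.2.1 := by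
    rintro ⟨i, σ, hσ⟩
    obtain ⟨G, iG, h⟩ := exists_group hpn (K i) (hdim i) (hnilp i) hσ
    exact ⟨⟨⟨G, iG⟩, h.typed (hdim i) hσ⟩, h⟩
  choose q hq using hex
  have heqv : Equivalence (typedGroupIsoRel p n t lam) := by
    refine ⟨fun a => ?_, fun {a b} h => ?_, fun {a b c} h h' => ?_⟩
    · exact ⟨@MulEquiv.refl _ a.1.2.toMul⟩
    · let := a.1.2; let := b.1.2
      obtain ⟨e⟩ := h
      exact ⟨e.symm⟩
    · let := a.1.2; let := b.1.2; let := c.1.2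
      obtain ⟨e⟩ := h
      obtain ⟨e'⟩ := h'
      exact ⟨e.trans e'⟩
  let f : X → Quot (typedGroupIsoRel p n t lam) := fun x => Quot.mk _ (q x)
  have hf : ∀ x y : X, f x = f y ↔ ∃ F : K x.1 ≃ₗ⁅ZMod p⁆ K y.1, ∀ z, F (x.2.1 z) = y.2.1 (F z) := by
    intro x y
    let := (q x).1.2; let := (q y).1.2
    rw [← rl_iso (hq x) (hq y)]
    constructor
    · intro h
      exact heqv.eqvGen_iff.1 (Quot.eqvGen_exact h)
    · intro h
      exact Quot.sound h
  have hsurj : Function.Surjective f := by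
    intro y
    obtain ⟨g, rfl⟩ := Quot.exists_rep y
    let := g.1.2
    obtain ⟨M, iM, iA, σ, hfin, hd, hnl, hR⟩ := exists_pair (lam := lam) hpn (show TG p n lam g.1.1 from g.2)
    obtain ⟨i, ⟨e⟩⟩ := hcomplete M iM iA hfin hd hnl
    let τ : Module.End (ZMod p) (K i) := e.toLinearEquiv.conj σ
    have hτ : ∀ x, e (σ x) = τ (e x) := by
      intro x
      show e (σ x) = e (σ (e.symm (e x)))
      rw [LieEquiv.symm_apply_apply]
    have hR' := hR.congr e hτ
    have hc := hR'.cset (show TG p n lam g.1.1 from g.2)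
    refine ⟨⟨i, τ, hc⟩, Quot.sound ?_⟩
    let := (q ⟨i, τ, hc⟩).1.2
    exact (rl_iso (hq ⟨i, τ, hc⟩) hR').2 ⟨LieEquiv.refl, fun x => rfl⟩
  rw [card_eq_sum f hsurj, Fintype.sum_sigma]
  refine Finset.sum_congr rfl fun i _ => ?_
  rw [← finsum_set_coe_eq_finsum_mem, finsum_eq_sum_of_fintype]
  refine Finset.sum_congr rfl fun σ _ => ?_
  congr 2
  refine (Nat.card_congr (Equiv.ofBijective (fun τ : lieAutOrbit p (K i) σ.1 => 
    (⟨⟨i, τ.1, ?_⟩, ?_⟩ : {y // f y = f ⟨i, σ⟩})) ⟨?_, ?_⟩)).symm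
  · obtain ⟨α, hα⟩ := τ.2
    let := (q ⟨i, σ⟩).1.2
    have hR' := (hq ⟨i, σ⟩).congr (τ := τ.1) α (fun x => by rw [hα, LieEquiv.symm_apply_apply])
    exact hR'.cset (q ⟨i, σ⟩).2
  · obtain ⟨α, hα⟩ := τ.2
    rw [hf]
    refine ⟨α.symm, fun z => ?_⟩
    show α.symm (τ.1 z) = σ.1 (α.symm z)
    rw [hα, LieEquiv.symm_apply_apply]
  · intro τ τ' h
    have h1 := congrArg Subtype.val h
    have h2 := eq_of_heq (Sigma.mk.inj h1).2
    exact Subtype.ext (Subtype.mk.inj h2)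
  · rintro ⟨⟨j, τ⟩, h⟩
    have h' := h
    rw [hf] at h'
    obtain ⟨F, hF⟩ := h'
    have hij : j = i := htransv j i ⟨F⟩
    subst hij
    refine ⟨⟨τ.1, F.symm, fun x => ?_⟩, rfl⟩
    rw [LieEquiv.symm_symm]
    show τ.1 x = F.symm (σ.1 (F x))
    rw [← hF, LieEquiv.symm_apply_apply]
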